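/- arXiv:math/0206188 — 4 statements merged into one kernel-verified Lean document; each statement's English description precedes it below -/
import Mathlib

section
/- Let X and Y be schemes of finite type over Spec ℤ, with X irreducible and reduced, and suppose that some point of X has residue field of characteristic zero (i.e., the generic fiber X_ℚ is nonempty). If f, g : X → Y are two morphisms of schemes whose underlying continuous maps of topological spaces are equal, then f = g. -/
open AlgebraicGeometry CategoryTheory

/-!
At a point `x` with residue field `𝔽_p`, the value of a function `b` is an integer `n`, so it is
detected by the vanishing of `b - n`. Hence the pullbacks of a function along `f` and `g` take the
same value at such a point as soon as `f` and `g` agree as continuous maps, and on a reduced scheme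
it is enough that such points are dense. They are: every nonempty open subscheme contains an affine
`Spec A` of finite type over `ℤ` with `A ⊗ ℚ ≠ 0`, and by the Nullstellensatz `A` maps to a number
field `ℚ(α)`, hence to `ℤ[α][1/N]`. A nonconstant integer polynomial has roots modulo infinitely
many primes, so the minimal polynomial of `α` has one modulo some `p ∤ N`, which gives `A → 𝔽_p`.
-/

section IntegralPolynomials

open Polynomial

lemma infinite_image_eval {R : Type*} [CommRing R] [IsDomain R] {h : R[X]}
    (hd : 0 < h.natDegree) {S : Set R} (hS : S.Infinite) : (h.eval '' S).Infinite := by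
  refine fun hfin => hS ((hfin.preimage' fun b _ => ?_).subset (Set.subset_preimage_image _ _))
  have hb : h - C b ≠ 0 := ne_zero_of_natDegree_gt (natDegree_sub_C (p := h) (a := b) ▸ hd)
  refine (finite_setOfPred_isRoot hb).subset fun x (hx : h.eval x = b) => ?_
  simp [hx]

/-- Schur's argument: along the progression `r₀ + h(r₀) N ℤ` the values of `h` are `h(r₀)` times
integers congruent to `1` modulo `N`. -/
lemma exists_prime_not_dvd_and_dvd_eval {h : ℤ[X]} (hd : 0 < h.natDegree) {N : ℤ} (hN : N ≠ 0) :
    ∃ p : ℕ, p.Prime ∧ ¬ (p : ℤ) ∣ N ∧ ∃ r : ℤ, (p : ℤ) ∣ h.eval r := by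
  obtain ⟨_, ⟨r₀, -, rfl⟩, hr₀⟩ :=
    (infinite_image_eval hd Set.infinite_univ).exists_notMem_finset {0}
  set c := h.eval r₀
  have hc : c ≠ 0 := by simpa using hr₀
  have hinj : Function.Injective fun t : ℤ => r₀ + c * N * t :=
    (add_right_injective r₀).comp (mul_right_injective₀ (mul_ne_zero hc hN))
  obtain ⟨_, ⟨_, ⟨t, rfl⟩, rfl⟩, ht⟩ :=
    (infinite_image_eval hd (Set.infinite_range_of_injective hinj)).exists_notMem_finset {c, -c}
  obtain ⟨q, hq⟩ : ∃ q, h.eval (r₀ + c * N * t) = c * (1 + N * q) := by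
    obtain ⟨s, hs⟩ := h.sub_dvd_eval_sub (r₀ + c * N * t) r₀
    exact ⟨t * s, by linear_combination hs⟩
  have hunit : (1 + N * q).natAbs ≠ 1 := fun h1 => ht <| by
    rcases Int.natAbs_eq_iff.mp h1 with h1 | h1 <;> simp [hq, h1]
  obtain ⟨p, hp, hpq⟩ := Nat.exists_prime_and_dvd hunit
  have hpq : (p : ℤ) ∣ 1 + N * q := Int.natCast_dvd.mpr hpq
  refine ⟨p, hp, fun hpN => ?_, _, hq ▸ hpq.mul_left c⟩
  exact (Nat.prime_iff_prime_int.mp hp).not_dvd_one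
    ((Int.dvd_add_left (hpN.mul_right q)).mp hpq)

lemma exists_prime_not_dvd_and_nonempty_adjoin_ringHom {K : Type*} [CommRing K] [IsDomain K]
    [CharZero K] {α : K} (hα : IsIntegral ℤ α) {N : ℤ} (hN : N ≠ 0) :
    ∃ p : ℕ, p.Prime ∧ ¬ (p : ℤ) ∣ N ∧ Nonempty (Algebra.adjoin ℤ {α} →+* ZMod p) := by
  obtain ⟨p, hp, hpN, r, hr⟩ := exists_prime_not_dvd_and_dvd_eval (minpoly.natDegree_pos hα) hN
  have hroot : (minpoly ℤ α).eval₂ (Int.castRingHom (ZMod p)) (r : ZMod p) = 0 := by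
    rw [← eq_intCast (Int.castRingHom (ZMod p)) r, eval₂_at_apply, eq_intCast]
    exact (ZMod.intCast_zmod_eq_zero_iff_dvd _ _).mpr hr
  exact ⟨p, hp, hpN, ⟨(AdjoinRoot.lift _ _ hroot).comp
    (minpoly.equivAdjoin hα).symm.toRingEquiv.toRingHom⟩⟩

end IntegralPolynomials

section FiniteTypeRings

lemma exists_isIntegral_adjoin_eq_top (R F K : Type*) [CommRing R] [IsDomain R] [Field F]
    [Algebra R F] [IsFractionRing R F] [Field K] [Algebra F K] [Algebra R K] [IsScalarTower R F K]
    [FiniteDimensional F K] [Algebra.IsSeparable F K] :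
    ∃ α : K, IsIntegral R α ∧ Algebra.adjoin F {α} = ⊤ := by
  obtain ⟨β, hβ⟩ := Field.exists_primitive_element F K
  have hβ_alg : IsAlgebraic F β := Algebra.IsAlgebraic.isAlgebraic β
  have hβ_adjoin : Algebra.adjoin F {β} = ⊤ := by
    rw [← IntermediateField.adjoin_simple_toSubalgebra_of_isAlgebraic hβ_alg, hβ,
      IntermediateField.top_toSubalgebra]
  obtain ⟨d, hd, hdβ⟩ := IsAlgebraic.exists_integral_multiple
    ((IsFractionRing.isAlgebraic_iff R F K).mpr hβ_alg)
  have hdβ_adjoin : β ∈ Algebra.adjoin F {d • β} := by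
    have hdF : algebraMap R F d ≠ 0 := by simpa using hd
    have hβ_eq : (algebraMap R F d)⁻¹ • d • β = β := by
      rw [← algebraMap_smul F d β, inv_smul_smul₀ hdF]
    have hmem := Subalgebra.smul_mem _ (Algebra.self_mem_adjoin_singleton F (d • β))
      (algebraMap R F d)⁻¹
    rwa [hβ_eq] at hmem
  exact ⟨d • β, hdβ, top_le_iff.mp (hβ_adjoin.ge.trans (Algebra.adjoin_singleton_le hdβ_adjoin))⟩

/-- `χ` extends to the localization of `R`, inside `K`, at the elements that `χ` sends to units. -/
lemma nonempty_ringHom_of_smul_mem_range {A R K F : Type*} [CommRing A] [CommRing R] [IsDomain R]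
    [Field K] [Algebra R K] [IsFractionRing R K] [CommRing F] [Nontrivial F]
    (ι : A →+* K) (χ : R →+* F) {S : Set A} (hS : Algebra.adjoin ℤ S = ⊤)
    (h : ∀ a ∈ S, ∃ r : R, IsUnit (χ r) ∧ r • ι a ∈ Set.range (algebraMap R K)) :
    Nonempty (A →+* F) := by
  let M : Submonoid R := (IsUnit.submonoid F).comap χ
  have hM : M ≤ nonZeroDivisors R :=
    le_nonZeroDivisors_of_noZeroDivisors fun (h0 : IsUnit (χ 0)) => by simp at h0
  let C : Subalgebra R K := Localization.subalgebra.ofField K M hM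
  have hSC : S ⊆ (C.restrictScalars ℤ).comap ι.toIntAlgHom := fun a ha => by
    obtain ⟨r, hr, b, hb⟩ := h a ha
    have hr0 : algebraMap R K r ≠ 0 :=
      IsFractionRing.to_map_ne_zero_of_mem_nonZeroDivisors (hM hr)
    exact ⟨b, r, hr, by rw [hb, Algebra.smul_def]; field_simp; rfl⟩
  have hι : ∀ a, ι a ∈ C := fun a => (hS ▸ Algebra.adjoin_le hSC) (Algebra.mem_top (x := a))
  exact ⟨(IsLocalization.lift (M := M) (S := C) (g := χ) Subtype.property).comp
    (ι.codRestrict C hι)⟩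

lemma exists_prime_nonempty_ringHom_zmod_of_finiteDimensional {A K : Type*} [CommRing A]
    [Algebra.FiniteType ℤ A] [Field K] [Algebra ℚ K] [FiniteDimensional ℚ K] (ι : A →+* K) :
    ∃ p : ℕ, p.Prime ∧ Nonempty (A →+* ZMod p) := by
  have : CharZero K := algebraRat.charZero K
  obtain ⟨α, hα, hα_adjoin⟩ := exists_isIntegral_adjoin_eq_top ℤ ℚ K
  let R := Algebra.adjoin ℤ {α}
  have hden (x : K) : ∃ d : ℤ, d ≠ 0 ∧ d • x ∈ R := by
    obtain ⟨d, hd⟩ := multiple_mem_adjoin_of_mem_localization_adjoin (nonZeroDivisors ℤ) ℚ {α} x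
      (hα_adjoin ▸ Algebra.mem_top)
    exact ⟨d, nonZeroDivisors.coe_ne_zero d, hd⟩
  have : IsFractionRing R K := .of_field R K fun x => by
    obtain ⟨d, hd, hdx⟩ := hden x
    have hdK : (d : K) ≠ 0 := by exact_mod_cast hd
    exact ⟨⟨_, hdx⟩, d, by simp [hdK]⟩
  choose d hd hdR using hden
  obtain ⟨S, hS⟩ := Algebra.FiniteType.out (R := ℤ) (A := A)
  obtain ⟨p, hp, hpN, ⟨χ⟩⟩ := exists_prime_not_dvd_and_nonempty_adjoin_ringHom hα
    (N := ∏ s ∈ S, d (ι s)) (Finset.prod_ne_zero_iff.mpr fun s _ => hd _)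
  have : Fact p.Prime := ⟨hp⟩
  refine ⟨p, hp, nonempty_ringHom_of_smul_mem_range ι χ hS fun s hs => ⟨d (ι s), ?_, ?_⟩⟩
  · rw [map_intCast, isUnit_iff_ne_zero, Ne, ZMod.intCast_zmod_eq_zero_iff_dvd]
    exact fun hps => hpN (hps.trans (Finset.dvd_prod_of_mem (fun s => d (ι s)) hs))
  · exact ⟨⟨_, hdR (ι s)⟩, by simp [Algebra.smul_def]⟩

open TensorProduct in
lemma exists_prime_nonempty_ringHom_zmod {A L : Type*} [CommRing A] [Algebra.FiniteType ℤ A]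
    [CommRing L] [Nontrivial L] [Algebra ℚ L] (ι : A →+* L) :
    ∃ p : ℕ, p.Prime ∧ Nonempty (A →+* ZMod p) := by
  have : Nontrivial (ℚ ⊗[ℤ] A) :=
    (Algebra.TensorProduct.productMap (algebraMap ℚ L).toIntAlgHom
      ι.toIntAlgHom).toRingHom.domain_nontrivial
  obtain ⟨m, hm⟩ := Ideal.exists_maximal (ℚ ⊗[ℤ] A)
  let : Field ((ℚ ⊗[ℤ] A) ⧸ m) := Ideal.Quotient.field m
  have : FiniteDimensional ℚ ((ℚ ⊗[ℤ] A) ⧸ m) := finite_of_finite_type_of_isJacobsonRing _ _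
  exact exists_prime_nonempty_ringHom_zmod_of_finiteDimensional ((Ideal.Quotient.mk m).comp
    (Algebra.TensorProduct.includeRight : A →ₐ[ℤ] ℚ ⊗[ℤ] A).toRingHom)

end FiniteTypeRings

section Schemes

variable {X Y : Scheme}

lemma charZero_residueField_of_specializes {x y : X} (hxy : x ⤳ y)
    [CharZero (X.residueField y)] : CharZero (X.residueField x) := by
  have hunit (n : ℕ) (hn : n ≠ 0) : IsUnit (n : X.presheaf.stalk y) := by
    rw [← IsLocalRing.residue_ne_zero_iff_isUnit, map_natCast]
    exact Nat.cast_ne_zero (R := X.residueField y).mpr hn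
  refine charZero_of_inj_zero fun n hn => by_contra fun hn0 => ?_
  have := (hunit n hn0).map (X.presheaf.stalkSpecializes hxy ≫ X.residue x).hom
  simp [hn] at this

lemma dense_setOf_charZero_residueField [IrreducibleSpace X] (x₀ : X)
    [CharZero (X.residueField x₀)] : Dense {x : X | CharZero (X.residueField x)} :=
  (dense_iff_closure_eq.mpr (genericPoint_closure X)).mono <| Set.singleton_subset_iff.mpr <|
    charZero_residueField_of_specializes (genericPoint_specializes x₀)

lemma finiteType_int_of_locallyOfFiniteType (s : X ⟶ Spec (CommRingCat.of ℤ))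
    [LocallyOfFiniteType s] {U : X.Opens} (hU : IsAffineOpen U) :
    Algebra.FiniteType ℤ Γ(X, U) := by
  have hs := s.finiteType_appLE (isAffineOpen_top _) hU (show U ≤ s ⁻¹ᵁ ⊤ from le_top)
  have hΓ : (Scheme.ΓSpecIso (CommRingCat.of ℤ)).inv.hom.FiniteType :=
    .of_surjective _
      (ConcreteCategory.bijective_of_isIso (Scheme.ΓSpecIso (CommRingCat.of ℤ)).inv).2
  rw [← RingHom.finiteType_algebraMap]
  convert hs.comp hΓ
  exact RingHom.ext_int _ _

lemma dense_setOf_intCast_surjective (s : X ⟶ Spec (CommRingCat.of ℤ))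
    [LocallyOfFiniteType s] (hX : Dense {x : X | CharZero (X.residueField x)}) :
    Dense {x : X | Function.Surjective (Int.cast : ℤ → X.residueField x)} := by
  refine dense_iff_inter_open.mpr fun W hW hW_ne => ?_
  obtain ⟨x, hxW, hx : CharZero (X.residueField x)⟩ := hX.inter_open_nonempty W hW hW_ne
  obtain ⟨_, ⟨U, hU, rfl⟩, hxU, hUW⟩ := X.isBasis_affineOpens.exists_subset_of_mem_open hxW hW
  have := finiteType_int_of_locallyOfFiniteType s hU
  obtain ⟨p, hp, ⟨θ⟩⟩ := exists_prime_nonempty_ringHom_zmod (X.evaluation U x hxU).hom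
  have : Fact p.Prime := ⟨hp⟩
  let q : Spec (CommRingCat.of (ZMod p)) ⟶ X := Spec.map (CommRingCat.ofHom θ) ≫ hU.fromSpec
  let φ := (Scheme.SpecToEquivOfField (ZMod p) X q).2.hom
  refine ⟨(Scheme.SpecToEquivOfField (ZMod p) X q).1, hUW (hU.range_fromSpec.le ⟨_, rfl⟩),
    .of_comp_left (f := φ) ?_ φ.injective⟩
  simpa only [Function.comp_def, map_intCast] using ZMod.intCast_surjective

lemma evaluation_appLE_eq_zero_iff (f : X ⟶ Y) {V : Y.Opens} {W : X.Opens}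
    (hf : W ≤ f ⁻¹ᵁ V) {x : X} (hx : x ∈ W) (b : Γ(Y, V)) :
    X.evaluation W x hx (f.appLE V W hf b) = 0 ↔ f x ∉ Y.basicOpen b := by
  rw [Scheme.evaluation_eq_zero_iff_notMem_basicOpen, Scheme.basicOpen_appLE]
  simp [-Scheme.preimage_basicOpen, hx]

lemma evaluation_appLE_eq_of_base_eq {f g : X ⟶ Y} (h : f.base = g.base)
    {V : Y.Opens} {W : X.Opens} (hf : W ≤ f ⁻¹ᵁ V) (hg : W ≤ g ⁻¹ᵁ V) {x : X} (hx : x ∈ W)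
    (hx_int : Function.Surjective (Int.cast : ℤ → X.residueField x)) (b : Γ(Y, V)) :
    X.evaluation W x hx (f.appLE V W hf b) = X.evaluation W x hx (g.appLE V W hg b) := by
  obtain ⟨n, hn⟩ := hx_int (X.evaluation W x hx (f.appLE V W hf b))
  have hf_zero : X.evaluation W x hx (f.appLE V W hf (b - n)) = 0 := by simp [hn]
  have hfg : f x = g x := congr($h x)
  rw [evaluation_appLE_eq_zero_iff, hfg, ← evaluation_appLE_eq_zero_iff g hg hx] at hf_zero
  rw [← hn]
  exact (sub_eq_zero.mp (by simpa using hf_zero)).symm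

lemma hom_eq_of_base_eq_of_dense_intCast_surjective [IsReduced X]
    (hX : Dense {x : X | Function.Surjective (Int.cast : ℤ → X.residueField x)})
    {f g : X ⟶ Y} (h : f.base = g.base) : f = g := by
  refine Scheme.Hom.ext h fun V => CommRingCat.hom_ext <| RingHom.ext fun b => ?_
  have hgf : g ⁻¹ᵁ V ≤ f ⁻¹ᵁ V := congr((TopologicalSpace.Opens.map $h.symm).obj V).le
  change f.appLE V (g ⁻¹ᵁ V) hgf b = g.app V b
  rw [← g.appLE_eq_app, ← sub_eq_zero, ← basicOpen_eq_bot_iff]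
  by_contra hne
  obtain ⟨x, hx, hx_int⟩ := hX.inter_open_nonempty _ (X.basicOpen _).isOpen
    ((TopologicalSpace.Opens.ne_bot_iff_nonempty _).mp hne)
  have hxV : x ∈ g ⁻¹ᵁ V := X.basicOpen_le _ hx
  refine (X.evaluation_ne_zero_iff_mem_basicOpen x hxV _).mpr hx ?_
  rw [map_sub, evaluation_appLE_eq_of_base_eq h hgf le_rfl hxV hx_int, sub_self]

theorem scheme_hom_eq_of_base_eq_of_charZero_point_general
    (s : X ⟶ Spec (CommRingCat.of ℤ)) [LocallyOfFiniteType s] [IsReduced X]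
    (hX : Dense {x : X | CharZero (X.residueField x)}) {f g : X ⟶ Y} (h : f.base = g.base) :
    f = g :=
  hom_eq_of_base_eq_of_dense_intCast_surjective (dense_setOf_intCast_surjective s hX) h

end Schemes

/-- Let `X` and `Y` be schemes of finite type over `Spec ℤ`, with `X`
irreducible and reduced, and suppose some point of `X` has residue field of characteristic
zero. If `f g : X ⟶ Y` are morphisms of schemes with the same underlying continuous map of
topological spaces, then `f = g`. -/
theorem scheme_hom_eq_of_base_eq_of_charZero_point
    (X Y : Scheme)
    (sX : X ⟶ Spec (CommRingCat.of ℤ)) [LocallyOfFiniteType sX] [QuasiCompact sX]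
    (sY : Y ⟶ Spec (CommRingCat.of ℤ)) [LocallyOfFiniteType sY] [QuasiCompact sY]
    [IrreducibleSpace X] [IsReduced X]
    (x₀ : X) (hx₀ : CharZero (X.residueField x₀))
    (f g : X ⟶ Y) (h : f.base = g.base) :
    f = g := by
  exact scheme_hom_eq_of_base_eq_of_charZero_point_general sX
    (dense_setOf_charZero_residueField x₀) h
end

section
/- Let A be an integral domain of characteristic zero that is finitely generated as a ℤ-algebra, and let B be a finitely generated ℤ-algebra. If φ, ψ : B → A are ring homomorphisms that induce the same map on prime spectra, i.e., PrimeSpectrum.comap φ = PrimeSpectrum.comap ψ as maps PrimeSpectrum A → PrimeSpectrum B, then φ = ψ. -/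
/-! It suffices to find, for each nonzero `a : A`, a prime `p` and a homomorphism
`θ : A →+* ZMod p` with `θ a ≠ 0`. Indeed, take `a = φ b - ψ b` and let `n` be a natural number
reducing to `-θ (φ b)`. Then `b + n` lies in the contraction of `ker θ` along `φ`, hence in its
contraction along `ψ`, and so `θ (ψ b) = -n = θ (φ b)`.

To find `θ`, invert `a`. The resulting ring is still of characteristic zero and of finite type
over `ℤ`, so by Zariski's lemma over `ℚ` it maps to a number field `K`. For infinitely many `p` the
minimal polynomial of a primitive element of `K` has a simple root modulo `p` (Schur), which lifts
to `ℤ_[p]` (Hensel) and embeds `K` in `ℚ_[p]`. For almost all of these `p` the finitely many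
generators land in `ℤ_[p]`, and reducing modulo `p` gives `θ`.
-/

open Filter Polynomial
open scoped TensorProduct nonZeroDivisors

universe u

local instance factPrimeCoe (p : Nat.Primes) : Fact (p : ℕ).Prime := ⟨p.2⟩

lemma eventually_not_dvd {d : ℤ} (hd : d ≠ 0) :
    ∀ᶠ p : Nat.Primes in cofinite, ¬ ((p : ℕ) : ℤ) ∣ d := by
  have hfinite : {n : ℕ | n ∣ d.natAbs}.Finite :=
    d.natAbs.divisors.finite_toSet.subset fun n hn ↦ by simpa [hd] using hn
  rw [eventually_cofinite]
  simp only [not_not, Int.natCast_dvd]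
  exact hfinite.preimage (f := Subtype.val) Nat.Primes.coe_nat_injective.injOn

lemma exists_not_isUnit_eval {f : ℤ[X]} (hf : 0 < f.natDegree) : ∃ x, ¬ IsUnit (f.eval x) := by
  by_contra! hunit
  have hsq : f * f = 1 := funext fun x ↦ by
    simpa [sq] using Int.isUnit_sq (hunit x)
  exact hf.ne' (natDegree_eq_zero_of_isUnit (IsUnit.of_mul_eq_one f hsq))

lemma exists_prime_dvd_eval_not_dvd {f : ℤ[X]} (hf : 0 < f.natDegree) {d : ℤ} (hd : d ≠ 0) :
    ∃ p : Nat.Primes, (∃ r : ℤ, ((p : ℕ) : ℤ) ∣ f.eval r) ∧ ¬ ((p : ℕ) : ℤ) ∣ d := by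
  rcases eq_or_ne (f.eval 0) 0 with hzero | hc
  · obtain ⟨p, hp⟩ := (eventually_not_dvd hd).exists
    exact ⟨p, ⟨0, by simp [hzero]⟩, hp⟩
  set c := f.eval 0
  obtain ⟨q, hq⟩ : X ∣ f - C c := by simp [X_dvd_iff, c, coeff_zero_eq_eval_zero]
  -- Euclid's trick: `f (c * d * x) = c * u x`, where `u ≡ 1` modulo `d`.
  let u : ℤ[X] := 1 + C d * X * q.comp (C (c * d) * X)
  have hfu : f.comp (C (c * d) * X) = C c * u := by
    rw [eq_add_of_sub_eq hq]
    simp only [add_comp, mul_comp, X_comp, C_comp, C_mul, u]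
    ring
  have hu : 0 < u.natDegree := by
    rwa [← natDegree_C_mul hc, ← hfu, natDegree_comp, natDegree_C_mul_X _ (mul_ne_zero hc hd),
      mul_one]
  obtain ⟨x, hx⟩ := exists_not_isUnit_eval hu
  obtain ⟨p, hp, hpu⟩ := Nat.exists_prime_and_dvd (mt Int.isUnit_iff_natAbs_eq.mpr hx)
  rw [← Int.natCast_dvd] at hpu
  refine ⟨⟨p, hp⟩, ⟨c * d * x, ?_⟩, fun hpd ↦ ?_⟩
  · have hval := congrArg (eval x) hfu
    simp only [eval_comp, eval_mul, eval_C, eval_X] at hval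
    exact hval ▸ hpu.mul_left c
  · have hpone : (p : ℤ) ∣ 1 := by
      simp only [u, eval_add, eval_one, eval_mul, eval_C, eval_X, mul_assoc] at hpu
      exact (dvd_add_left (hpd.mul_right _)).mp hpu
    exact hp.not_dvd_one (by exact_mod_cast hpone)

lemma frequently_prime_dvd_eval {f : ℤ[X]} (hf : 0 < f.natDegree) :
    ∃ᶠ p : Nat.Primes in cofinite, ∃ r : ℤ, ((p : ℕ) : ℤ) ∣ f.eval r := by
  rw [frequently_cofinite_iff_infinite]
  intro hfinite
  obtain ⟨p, hroot, hp⟩ := exists_prime_dvd_eval_not_dvd hf (d := ∏ p ∈ hfinite.toFinset, (p : ℕ))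
    (Finset.prod_ne_zero_iff.mpr fun p _ ↦ by exact_mod_cast p.2.ne_zero)
  exact hp <|
    Finset.dvd_prod_of_mem (fun p : Nat.Primes ↦ ((p : ℕ) : ℤ)) (by simpa using hroot)

lemma exists_mul_add_mul_eq_C_of_isCoprime_map {R : Type*} (K : Type*) [CommRing R] [IsDomain R]
    [Field K] [Algebra R K] [IsFractionRing R K] {f g : R[X]}
    (h : IsCoprime (f.map (algebraMap R K)) (g.map (algebraMap R K))) :
    ∃ d ≠ 0, ∃ u v, u * f + v * g = C d := by
  obtain ⟨u, v, huv⟩ := h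
  obtain ⟨a, ha, hau⟩ := IsLocalization.integerNormalization_spec R⁰ u
  obtain ⟨b, hb, hbv⟩ := IsLocalization.integerNormalization_spec R⁰ v
  refine ⟨a * b, nonZeroDivisors.ne_zero (mul_mem ha hb),
    C b * IsLocalization.integerNormalization R⁰ u,
    C a * IsLocalization.integerNormalization R⁰ v,
    map_injective _ (IsFractionRing.injective R K) ?_⟩
  simp only [Polynomial.map_add, Polynomial.map_mul, map_C, hau, hbv, Algebra.smul_def,
    Polynomial.algebraMap_apply, map_mul]
  linear_combination C (algebraMap R K a) * C (algebraMap R K b) * huv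

lemma exists_padicInt_root {p : ℕ} [Fact p.Prime] {f u v : ℤ[X]} {d r : ℤ}
    (huv : u * f + v * derivative f = C d) (hpd : ¬ (p : ℤ) ∣ d) (hr : (p : ℤ) ∣ f.eval r) :
    ∃ z : ℤ_[p], aeval z f = 0 := by
  have hderiv : ¬ (p : ℤ) ∣ (derivative f).eval r := fun hdvd ↦ hpd <| by
    have hval := congrArg (eval r) huv
    simp only [eval_add, eval_mul, eval_C] at hval
    exact hval ▸ dvd_add (hr.mul_left _) (hdvd.mul_left _)
  have hcast (g : ℤ[X]) : aeval (r : ℤ_[p]) g = (g.eval r : ℤ) := by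
    simpa using aeval_algebraMap_apply_eq_algebraMap_eval (A := ℤ_[p]) r g
  have hnorm : ‖(((derivative f).eval r : ℤ) : ℤ_[p])‖ = 1 :=
    (PadicInt.norm_le_one _).antisymm
      (not_lt.mp (mt (PadicInt.norm_int_lt_one_iff_dvd _).mp hderiv))
  obtain ⟨z, hz, -⟩ := hensels_lemma (F := f) (a := (r : ℤ_[p])) (by
    simpa only [hcast, hnorm, one_pow, PadicInt.norm_int_lt_one_iff_dvd] using hr)
  exact ⟨z, hz⟩

lemma frequently_exists_padicInt_root {f : ℤ[X]} (hdeg : 0 < f.natDegree)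
    (hf : (f.map (algebraMap ℤ ℚ)).Separable) :
    ∃ᶠ p : Nat.Primes in cofinite, ∃ z : ℤ_[p], aeval z f = 0 := by
  obtain ⟨d, hd, u, v, huv⟩ :=
    exists_mul_add_mul_eq_C_of_isCoprime_map ℚ
      (derivative_map f (algebraMap ℤ ℚ) ▸ (separable_def _).mp hf)
  refine ((frequently_prime_dvd_eval hdeg).and_eventually (eventually_not_dvd hd)).mono ?_
  rintro p ⟨⟨r, hr⟩, hpd⟩
  exact exists_padicInt_root huv hpd hr

lemma frequently_exists_padic_root {f : ℚ[X]} (hdeg : 0 < f.natDegree) (hf : f.Separable) :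
    ∃ᶠ p : Nat.Primes in cofinite, ∃ z : ℚ_[p], aeval z f = 0 := by
  let g := IsLocalization.integerNormalization ℤ⁰ f
  obtain ⟨m, hm, hgm⟩ := IsLocalization.integerNormalization_spec ℤ⁰ f
  have hm0 : (m : ℚ) ≠ 0 := by exact_mod_cast nonZeroDivisors.ne_zero hm
  have hmap : g.map (algebraMap ℤ ℚ) = C (m : ℚ) * f := by
    rw [hgm, zsmul_eq_mul, map_intCast]
  have hgdeg : 0 < g.natDegree := by
    rwa [← natDegree_map_eq_of_injective (RingHom.injective_int (algebraMap ℤ ℚ)), hmap,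
      natDegree_C_mul hm0]
  have hgsep : (g.map (algebraMap ℤ ℚ)).Separable :=
    hmap ▸ hf.unit_mul (isUnit_C.mpr hm0.isUnit)
  refine (frequently_exists_padicInt_root hgdeg hgsep).mono ?_
  rintro p ⟨z, hz⟩
  have hroot : aeval (algebraMap ℤ_[p] ℚ_[p] z) (g.map (algebraMap ℤ ℚ)) = 0 := by
    rw [aeval_map_algebraMap, aeval_algebraMap_apply, hz, map_zero]
  refine ⟨algebraMap ℤ_[p] ℚ_[p] z, ?_⟩
  simpa only [hmap, map_mul, aeval_C, mul_eq_zero, map_eq_zero, hm0, false_or] using hroot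

theorem frequently_nonempty_ringHom_padic (K : Type*) [Field K] [NumberField K] :
    ∃ᶠ p : Nat.Primes in cofinite, Nonempty (K →+* ℚ_[p]) := by
  let B := Field.powerBasisOfFiniteOfSeparable ℚ K
  refine (frequently_exists_padic_root (minpoly.natDegree_pos B.isIntegral_gen)
    (minpoly.irreducible B.isIntegral_gen).separable).mono ?_
  rintro p ⟨z, hz⟩
  exact ⟨(B.lift z hz).toRingHom⟩

lemma eventually_norm_ringHom_le_one {R : Type*} [CommRing R] {x : R} (hx : IsAlgebraic ℤ x) :
    ∀ᶠ p : Nat.Primes in cofinite, ∀ σ : R →+* ℚ_[p], ‖σ x‖ ≤ 1 := by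
  obtain ⟨d, hd, hint⟩ := hx.exists_integral_multiple
  filter_upwards [eventually_not_dvd hd] with p hp σ
  obtain ⟨y, hy⟩ : ∃ y : ℤ_[p], (y : ℚ_[p]) = d * σ x := by
    have hσ : IsIntegral ℤ_[p] (σ (d • x)) := (hint.map σ.toIntAlgHom).tower_top
    simpa using IsIntegrallyClosed.isIntegral_iff.mp hσ
  have hnorm : ‖(d : ℚ_[p])‖ = 1 :=
    (Padic.norm_int_le_one d).antisymm (not_lt.mp (mt Padic.norm_intCast_lt_one_iff.mp hp))
  calc ‖σ x‖ = ‖(d : ℚ_[p]) * σ x‖ := by rw [norm_mul, hnorm, one_mul]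
    _ ≤ 1 := hy ▸ y.2

lemma eventually_comp_mem_padicInt {R S : Type*} [CommRing R] [Algebra.FiniteType ℤ R] [CommRing S]
    [Algebra.IsAlgebraic ℤ S] (g : R →+* S) :
    ∀ᶠ p : Nat.Primes in cofinite, ∀ σ : S →+* ℚ_[p], ∀ x, σ (g x) ∈ PadicInt.subring p := by
  obtain ⟨s, hs⟩ := Algebra.FiniteType.out (R := ℤ) (A := R)
  have hgen : ∀ᶠ p : Nat.Primes in cofinite, ∀ t ∈ s, ∀ σ : S →+* ℚ_[p], ‖σ (g t)‖ ≤ 1 :=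
    (eventually_all_finset s).mpr fun t _ ↦
      eventually_norm_ringHom_le_one (Algebra.IsAlgebraic.isAlgebraic (g t))
  filter_upwards [hgen] with p hp σ x
  have hle : Algebra.adjoin ℤ (s : Set R) ≤
      subalgebraOfSubring ((PadicInt.subring p).comap (σ.comp g)) :=
    Algebra.adjoin_le fun t ht ↦ hp t ht σ
  exact hle (hs ▸ Algebra.mem_top)

lemma numberField_of_finiteType_rat (K : Type*) [Field K] [Algebra ℚ K] [Algebra.FiniteType ℚ K] :
    NumberField K where
  to_charZero := algebraRat.charZero K
  to_finiteDimensional := by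
    have := algebraRat.charZero K
    have hfinite : Module.Finite ℚ K := finite_of_finite_type_of_isJacobsonRing ℚ K
    convert hfinite
    exact Subsingleton.elim _ _

lemma exists_ringHom_numberField_of_finiteType_rat (S : Type u) [CommRing S] [Nontrivial S]
    [Algebra ℚ S] [Algebra.FiniteType ℚ S] :
    ∃ (K : Type u) (_ : Field K) (_ : NumberField K), Nonempty (S →+* K) := by
  obtain ⟨m, hm⟩ := Ideal.exists_maximal S
  let : Field (S ⧸ m) := Ideal.Quotient.field m
  exact ⟨S ⧸ m, inferInstance, numberField_of_finiteType_rat (S ⧸ m), ⟨Ideal.Quotient.mk m⟩⟩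

lemma exists_ringHom_numberField (R : Type u) [CommRing R] [CharZero R] [Algebra.FiniteType ℤ R] :
    ∃ (K : Type u) (_ : Field K) (_ : NumberField K), Nonempty (R →+* K) := by
  have : Nontrivial (ℚ ⊗[ℤ] R) :=
    Algebra.TensorProduct.nontrivial_of_algebraMap_injective_of_flat_left ℤ ℚ R
      (RingHom.injective_int _)
  obtain ⟨K, _, _, ⟨π⟩⟩ := exists_ringHom_numberField_of_finiteType_rat (ℚ ⊗[ℤ] R)
  exact ⟨K, _, ‹_›, ⟨π.comp Algebra.TensorProduct.includeRight.toRingHom⟩⟩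

theorem frequently_nonempty_ringHom_padicInt (R : Type*) [CommRing R] [CharZero R]
    [Algebra.FiniteType ℤ R] : ∃ᶠ p : Nat.Primes in cofinite, Nonempty (R →+* ℤ_[p]) := by
  obtain ⟨K, _, _, ⟨g⟩⟩ := exists_ringHom_numberField R
  have : Algebra.IsAlgebraic ℤ K :=
    (IsFractionRing.comap_isAlgebraic_iff (K := ℚ)).mpr inferInstance
  refine ((frequently_nonempty_ringHom_padic K).and_eventually
    (eventually_comp_mem_padicInt g)).mono ?_
  rintro p ⟨⟨σ⟩, hσ⟩
  exact ⟨(σ.comp g).codRestrict (PadicInt.subring p) (hσ σ)⟩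

lemma charZero_of_isLocalizationAway {R : Type*} (S : Type*) [CommRing R] [IsAddTorsionFree R]
    [CommRing S] [Algebra R S] {a : R} [IsLocalization.Away a S] (ha : ¬ IsNilpotent a) :
    CharZero S := by
  refine charZero_of_inj_zero fun n hn ↦ ?_
  rw [← map_natCast (algebraMap R S), IsLocalization.map_eq_zero_iff (Submonoid.powers a)] at hn
  obtain ⟨⟨_, k, rfl⟩, hk⟩ := hn
  by_contra hn0
  refine ha ⟨k, (nsmul_eq_zero_iff_right hn0).mp ?_⟩
  simpa [nsmul_eq_mul, mul_comm] using hk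

lemma finiteType_int_of_isLocalizationAway {R : Type*} (S : Type*) [CommRing R]
    [Algebra.FiniteType ℤ R] [CommRing S] [Algebra R S] (a : R) [IsLocalization.Away a S] :
    Algebra.FiniteType ℤ S :=
  .trans ‹_› (IsLocalization.finiteType_of_monoid_fg (Submonoid.powers a) S)

theorem exists_ringHom_zmod_ne_zero {R : Type*} [CommRing R] [IsReduced R] [IsAddTorsionFree R]
    [Algebra.FiniteType ℤ R] {a : R} (ha : a ≠ 0) :
    ∃ (p : Nat.Primes) (θ : R →+* ZMod p), θ a ≠ 0 := by
  have := charZero_of_isLocalizationAway (Localization.Away a) (mt IsNilpotent.eq_zero ha)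
  have := finiteType_int_of_isLocalizationAway (Localization.Away a) a
  obtain ⟨p, ⟨χ⟩⟩ := (frequently_nonempty_ringHom_padicInt (Localization.Away a)).exists
  let θ := (PadicInt.toZMod.comp χ).comp (algebraMap R _)
  have hunit : IsUnit (algebraMap R (Localization.Away a) a) :=
    IsLocalization.Away.algebraMap_isUnit a
  exact ⟨p, θ, (hunit.map (PadicInt.toZMod.comp χ)).ne_zero⟩

theorem ringHom_eq_of_comap_eq_charZero_general {A B : Type*} [CommRing A] [IsReduced A]
    [IsAddTorsionFree A] [Algebra.FiniteType ℤ A] [CommSemiring B] (φ ψ : B →+* A)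
    (h : PrimeSpectrum.comap φ = PrimeSpectrum.comap ψ) : φ = ψ := by
  ext b
  by_contra hne
  obtain ⟨p, θ, hθ⟩ := exists_ringHom_zmod_ne_zero (sub_ne_zero.mpr hne)
  obtain ⟨n, hn⟩ := ZMod.natCast_zmod_surjective (-θ (φ b))
  have hker : (RingHom.ker θ).comap φ = (RingHom.ker θ).comap ψ :=
    congrArg PrimeSpectrum.asIdeal (congrFun h ⟨RingHom.ker θ, RingHom.ker_isPrime θ⟩)
  have hφ : b + n ∈ (RingHom.ker θ).comap φ := by simp [RingHom.mem_ker, hn]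
  have hψ : θ (ψ b) + -θ (φ b) = 0 := by
    simpa [hker, RingHom.mem_ker, hn] using hφ
  exact hθ (by rw [map_sub, ← neg_sub, sub_eq_add_neg, hψ, neg_zero])

/-- Let `A` be an integral domain of characteristic zero that is finitely
generated as a `ℤ`-algebra, and let `B` be a finitely generated `ℤ`-algebra. If
`φ ψ : B →+* A` induce the same map on prime spectra, then `φ = ψ`. -/
theorem ringHom_eq_of_comap_eq_charZero
    (A B : Type*) [CommRing A] [IsDomain A] [CharZero A]
    [Algebra.FiniteType ℤ A] [CommRing B] [Algebra.FiniteType ℤ B]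
    (φ ψ : B →+* A)
    (h : (PrimeSpectrum.comap φ : PrimeSpectrum A → PrimeSpectrum B) =
      PrimeSpectrum.comap ψ) :
    φ = ψ :=
  ringHom_eq_of_comap_eq_charZero_general φ ψ h
end

section
/- Let p be a prime number, let A be an integral domain of characteristic p that is finitely generated as an algebra over 𝔽_p, and let B be a finitely generated 𝔽_p-algebra. Let φ, ψ : B → A be ring homomorphisms that induce the same map on prime spectra, i.e., PrimeSpectrum.comap φ = PrimeSpectrum.comap ψ. Then there exists a natural number m such that either frob_A^m ∘ φ = ψ or frob_A^m ∘ ψ = φ, where frob_A : A → A is the Frobenius ring homomorphism a ↦ a^p and frob_A^m denotes its m-fold iterate. -/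
/-!
Modulo a maximal ideal of `A` the ring `A` becomes a finite field, where `φ` and `ψ` have the same
kernel and hence differ by a power of Frobenius; the exponent may depend on the maximal ideal. If
every `φ b` is algebraic over `𝔽_p`, a single maximal ideal is enough.

In general, fix `b` and write `a = φ b`, `a' = ψ b`. If `a` and `a'` were algebraically independent,
Chevalley's theorem would give a subvariety of `Spec A` on which `a` is constant and `a'` is not,
contradicting the hypothesis. So `F(a, a') = 0` for some irreducible `F`. If `a` is transcendental,
almost every point `x` of `𝔽_{p^{2l}}` is a value of `a`, so that `F(x, x^{p^n}) = 0` for some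
`n < 2l`. Exchanging the two variables replaces `n` by `2l - n`, so one may take `n ≤ l`; as the
degree of `F(X, X^{p^n})` is `O(p^n)`, counting zeros for large `l` shows that `F(X, X^{p^n})` or
`F(X^{p^n}, X)` vanishes identically for some `n`. Hence `a' = a^{p^n}` or `a = a'^{p^n}`.

The exponent does not depend on `b`: if `φ b` is transcendental and `φ`, `ψ` agree at `b` after a
Frobenius twist but differ at `c`, comparing them at `c` and `b * c` yields a multiplicative
relation between `φ b` and `φ c`, and in the same way one between `φ b` and `φ c + 1`. Eliminating
`φ b` gives a multiplicative relation between `φ c` and `φ c + 1`, which is impossible unless `φ c`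
is algebraic; and `c` can be replaced by `b + c`.
-/

open Polynomial PrimeSpectrum
open scoped Polynomial.Bivariate

section Chevalley

theorem exists_basicOpen_subset_of_isConstructible {R : Type*} [CommRing R] [IsDomain R]
    {s : Set (PrimeSpectrum R)} (hs : Topology.IsConstructible s) (hbot : ⊥ ∈ s) :
    ∃ r : R, r ≠ 0 ∧ (basicOpen r : Set (PrimeSpectrum R)) ⊆ s := by
  obtain ⟨S, rfl⟩ := exists_constructibleSetData_iff.mpr hs
  simp only [ConstructibleSetData.toSet, Set.mem_iUnion] at hbot
  obtain ⟨C, hCS, hg, hf⟩ := hbot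
  refine ⟨C.f, by simpa using hf, fun P hP => Set.mem_biUnion hCS ⟨?_, by simpa using hP⟩⟩
  rw [mem_zeroLocus] at hg ⊢
  exact hg.trans ((asIdeal_le_asIdeal ⊥ P).mpr bot_le)

theorem exists_basicOpen_subset_range_comap {R A : Type*} [CommRing R] [IsDomain R] [CommRing A]
    {f : R →+* A} (hf : f.FinitePresentation) (hinj : Function.Injective f) :
    ∃ r : R, r ≠ 0 ∧ (basicOpen r : Set (PrimeSpectrum R)) ⊆ Set.range (comap f) := by
  refine exists_basicOpen_subset_of_isConstructible (isConstructible_range_comap hf) ?_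
  obtain ⟨Q, hQ, hQf⟩ := Ideal.exists_comap_eq_of_mem_minimalPrimes_of_injective hinj (⊥ : Ideal R)
    (by simp [IsDomain.minimalPrimes_eq_singleton_bot])
  exact ⟨⟨Q, hQ⟩, PrimeSpectrum.ext hQf⟩

theorem finitePresentation_toRingHom {k R A : Type*} [CommRing k] [CommRing R] [IsNoetherianRing R]
    [CommRing A] [Algebra k R] [Algebra k A] [Algebra.FiniteType k A] (f : R →ₐ[k] A) :
    f.toRingHom.FinitePresentation := by
  algebraize [f.toRingHom]
  have : IsScalarTower k R A := .of_algebraMap_eq' f.comp_algebraMap.symm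
  have : Algebra.FiniteType R A := .of_restrictScalars_finiteType k R A
  exact Algebra.FinitePresentation.of_finiteType.mp this

end Chevalley

section FiniteFields

variable (p : ℕ) [Fact p.Prime]

theorem exists_forall_eq_pow_of_finite {F K : Type*} [Field F] [Finite F] [Field K] [CharP K p]
    (φ ψ : F →+* K) : ∃ n : ℕ, ∀ x, ψ x = φ x ^ p ^ n := by
  have : CharP F p := φ.charP φ.injective p
  let _ := φ.toAlgebra
  let _ := ZMod.algebra F p
  let _ := ZMod.algebra K p
  have : IsScalarTower (ZMod p) F K := .of_algebraMap_eq' (Subsingleton.elim _ _)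
  let ψ' : F →ₐ[ZMod p] K :=
    { ψ with commutes' := RingHom.congr_fun (Subsingleton.elim (ψ.comp _) _) }
  obtain ⟨n, hn⟩ := FiniteField.exists_forall_apply_eq_pow (ZMod p) p F (ψ'.restrictNormal' F)
  refine ⟨n, fun x => ?_⟩
  calc ψ x = φ (ψ'.restrictNormal' F x) := (ψ'.restrictNormal_commutes F x).symm
    _ = φ x ^ p ^ n := by rw [hn, Nat.card_zmod, map_pow]

theorem exists_forall_eq_pow_of_ker_eq {B K : Type*} [CommRing B] [Field K] [Finite K] [CharP K p]
    {φ ψ : B →+* K} (h : RingHom.ker φ = RingHom.ker ψ) : ∃ n : ℕ, ∀ b, ψ b = φ b ^ p ^ n := by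
  have : Finite (B ⧸ RingHom.ker φ) := Finite.of_injective _ φ.kerLift_injective
  have : (RingHom.ker φ).IsPrime := RingHom.ker_isPrime φ
  let _ : Field (B ⧸ RingHom.ker φ) := (Finite.isField_of_domain _).toField
  obtain ⟨n, hn⟩ := exists_forall_eq_pow_of_finite p φ.kerLift
    (Ideal.Quotient.lift (RingHom.ker φ) ψ fun b hb => by rwa [h] at hb)
  exact ⟨n, fun b => hn (Ideal.Quotient.mk _ b)⟩

end FiniteFields

section SameComap

variable {A B : Type*} [CommRing A] [CommRing B] {φ ψ : B →+* A}

theorem mem_iff_mem_of_comap_eq (h : comap φ = comap ψ) (P : Ideal A) [hP : P.IsPrime] (b : B) :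
    φ b ∈ P ↔ ψ b ∈ P :=
  SetLike.ext_iff.mp (congrArg asIdeal (congrFun h ⟨P, hP⟩)) b

theorem isAlgebraic_of_comap_aeval_eq {k : Type*} [CommRing k] [IsDomain A] [Algebra k A] {a a' : A}
    (h : comap (aeval (R := k) a).toRingHom = comap (aeval (R := k) a').toRingHom)
    (ha : IsAlgebraic k a) : IsAlgebraic k a' := by
  obtain ⟨g, hg, hga⟩ := ha
  exact ⟨g, hg, (mem_iff_mem_of_comap_eq h ⊥ g).mp hga⟩

theorem comap_aeval_eq_of_comap_eq (p : ℕ) [Algebra (ZMod p) A] (h : comap φ = comap ψ) (b : B) :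
    comap (aeval (R := ZMod p) (φ b)).toRingHom = comap (aeval (R := ZMod p) (ψ b)).toRingHom := by
  have haeval (f : B →+* A) (G : ℤ[X]) :
      aeval (f b) (G.map (Int.castRingHom (ZMod p))) = f (aeval b G) := by
    rw [← algebraMap_int_eq, aeval_map_algebraMap]
    exact aeval_algHom_apply f.toIntAlgHom b G
  ext P g
  obtain ⟨G, rfl⟩ := map_surjective _ (ZMod.ringHom_surjective (Int.castRingHom (ZMod p))) g
  change aeval _ _ ∈ P.asIdeal ↔ aeval _ _ ∈ P.asIdeal
  rw [haeval, haeval]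
  exact mem_iff_mem_of_comap_eq h _ _

theorem finite_quotient_of_isMaximal (k : Type*) [Field k] [Finite k] [Algebra k A]
    [Algebra.FiniteType k A] (M : Ideal A) [M.IsMaximal] : Finite (A ⧸ M) := by
  let _ := Ideal.Quotient.field M
  have : Module.Finite k (A ⧸ M) := finite_of_finite_type_of_isJacobsonRing _ _
  exact Module.finite_of_finite k

variable (p : ℕ) [Fact p.Prime] [Algebra (ZMod p) A] [Algebra.FiniteType (ZMod p) A]

theorem exists_forall_sub_pow_mem (h : comap φ = comap ψ) (M : Ideal A) [M.IsMaximal] :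
    ∃ n : ℕ, ∀ b, ψ b - φ b ^ p ^ n ∈ M := by
  let _ := Ideal.Quotient.field M
  have : Finite (A ⧸ M) := finite_quotient_of_isMaximal (ZMod p) M
  have : CharP (A ⧸ M) p := charP_of_injective_algebraMap (algebraMap (ZMod p) _).injective p
  have hker : RingHom.ker ((Ideal.Quotient.mk M).comp φ) =
      RingHom.ker ((Ideal.Quotient.mk M).comp ψ) := by
    ext b
    simpa [Ideal.Quotient.eq_zero_iff_mem] using mem_iff_mem_of_comap_eq h M b
  obtain ⟨n, hn⟩ := exists_forall_eq_pow_of_ker_eq p hker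
  refine ⟨n, fun b => Ideal.Quotient.eq.mp ?_⟩
  rw [map_pow]
  exact hn b

theorem exists_forall_eq_pow_of_isAlgebraic [IsDomain A] (h : comap φ = comap ψ)
    (halg : ∀ b, IsAlgebraic (ZMod p) (φ b)) : ∃ n : ℕ, ∀ b, ψ b = φ b ^ p ^ n := by
  obtain ⟨M, hM⟩ := Ideal.exists_maximal A
  obtain ⟨n, hn⟩ := exists_forall_sub_pow_mem p h M
  refine ⟨n, fun b => sub_eq_zero.mp (by_contra fun hne => ?_)⟩
  have hψ : IsAlgebraic (ZMod p) (ψ b) :=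
    isAlgebraic_of_comap_aeval_eq (comap_aeval_eq_of_comap_eq p h b) (halg b)
  have hunit : IsUnit (ψ b - φ b ^ p ^ n) := (hψ.sub ((halg b).pow _)).isIntegral.isUnit hne
  exact hM.ne_top (Ideal.eq_top_of_isUnit_mem _ (hn b) hunit)

end SameComap

section BivariatePolynomials

variable {R A : Type*} [CommRing R] [CommRing A] [Algebra R A]

theorem map_aevalAeval {A' : Type*} [CommRing A'] [Algebra R A'] (f : A →ₐ[R] A') (x y : A)
    (F : R[X][Y]) : f (aevalAeval x y F) = aevalAeval (f x) (f y) F := by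
  have : f.comp (aevalAeval x y) = aevalAeval (R := R) (f x) (f y) :=
    (aevalAevalEquiv R A').symm.injective (by simp)
  exact DFunLike.congr_fun this F

theorem aevalAeval_aeval (x : A) (q : R[X]) (F : R[X][Y]) :
    aevalAeval x (aeval x q) F = aeval x (F.eval q) := by
  induction F using Polynomial.induction_on' with
  | add F G hF hG => simp only [map_add, eval_add, hF, hG]
  | monomial n a => simp

theorem aevalAeval_self_pow (x : A) (n : ℕ) (F : R[X][Y]) :
    aevalAeval x (x ^ n) F = aeval x (F.eval (X ^ n)) := by
  rw [← aevalAeval_aeval, map_pow, aeval_X]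

theorem eq_aeval_of_irreducible_of_eval_eq_zero [IsDomain R] {F : R[X][Y]} (hF : Irreducible F)
    {q : R[X]} (hFq : F.eval q = 0) {a a' : A} (h : aevalAeval a a' F = 0) : a' = aeval a q := by
  obtain ⟨G, hG⟩ : F ∣ Y - C q :=
    (irreducible_X_sub_C q).dvd_symm hF (dvd_iff_isRoot.mpr hFq)
  have hsub : aevalAeval a a' (Y - C q) = 0 := by rw [hG, map_mul, h, zero_mul]
  rw [map_sub, aevalAeval_Y, aevalAeval_C] at hsub
  exact sub_eq_zero.mp hsub

theorem exists_natDegree_eval_X_pow_le {R : Type*} [CommSemiring R] (F : R[X][Y]) :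
    ∃ d : ℕ, ∀ N, 0 < N → (F.eval (X ^ N)).natDegree ≤ d * N := by
  induction F using Polynomial.induction_on' with
  | add F G hF hG =>
    obtain ⟨d, hd⟩ := hF
    obtain ⟨e, he⟩ := hG
    refine ⟨max d e, fun N hN => ?_⟩
    rw [eval_add, max_mul_of_nonneg _ _ N.zero_le]
    exact (natDegree_add_le _ _).trans (max_le_max (hd N hN) (he N hN))
  | monomial n a =>
    refine ⟨a.natDegree + n, fun N hN => ?_⟩
    rw [eval_monomial, ← pow_mul, add_mul, mul_comm N]
    exact natDegree_mul_le.trans (add_le_add (Nat.le_mul_of_pos_right _ hN) (natDegree_X_pow_le _))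

end BivariatePolynomials

section AlgebraicDependence

theorem exists_aeval_ne_zero {k K : Type*} [CommRing k] [CommRing K] [IsDomain K] [Infinite K]
    [Algebra k K] [FaithfulSMul k K] {g : k[X]} (hg : g ≠ 0) : ∃ x : K, aeval x g ≠ 0 := by
  by_contra! h
  refine hg (map_injective _ (FaithfulSMul.algebraMap_injective k K) (funext fun x => ?_))
  simpa [eval_map_algebraMap] using h x

theorem not_injective_aevalAeval_of_comap_aeval_eq {k A : Type*} [Field k] [CommRing A]
    [Algebra k A] [Algebra.FiniteType k A] {a a' : A}
    (h : comap (aeval (R := k) a).toRingHom = comap (aeval (R := k) a').toRingHom) :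
    ¬ Function.Injective (aevalAeval (R := k) a a') := by
  intro hinj
  obtain ⟨r, hr, hrange⟩ := exists_basicOpen_subset_range_comap
    (finitePresentation_toRingHom (aevalAeval (R := k) a a')) hinj
  obtain ⟨x, hx⟩ := exists_aeval_ne_zero (K := AlgebraicClosure k) (leadingCoeff_ne_zero.mpr hr)
  -- The kernel of `ev` is the generic point of the line `{x} × 𝔸¹`.
  let ev : k[X][Y] →+* (AlgebraicClosure k)[X] := mapRingHom (aeval (R := k) x).toRingHom
  have hrP : r ∉ RingHom.ker ev := fun h0 =>
    hx (by simpa [ev] using congrArg (coeff · r.natDegree) (RingHom.mem_ker.mp h0))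
  obtain ⟨Q, hQ⟩ := hrange (show ⟨RingHom.ker ev, RingHom.ker_isPrime ev⟩ ∈ basicOpen r from hrP)
  have hmem (G : k[X][Y]) : aevalAeval a a' G ∈ Q.asIdeal ↔ ev G = 0 :=
    SetLike.ext_iff.mp (congrArg asIdeal hQ) G
  have ha : aeval a (minpoly k x) ∈ Q.asIdeal := by
    rw [← aevalAeval_C a a', hmem]
    simp [ev]
  have ha' : aeval a' (minpoly k x) ∈ Q.asIdeal := (mem_iff_mem_of_comap_eq h Q.asIdeal _).mp ha
  have hmap : (minpoly k x).map (algebraMap k (AlgebraicClosure k)) = 0 := by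
    rw [← aevalAeval_C a' a, ← Bivariate.aevalAeval_swap, Bivariate.swap_C, hmem] at ha'
    simpa [ev, map_map] using ha'
  exact minpoly.ne_zero (Algebra.IsIntegral.isIntegral x) ((Polynomial.map_eq_zero _).mp hmap)

end AlgebraicDependence

section Counting

variable {p : ℕ} [Fact p.Prime]

theorem aevalAeval_pow_pow {A : Type*} [CommRing A] [CharP A p] [Algebra (ZMod p) A] (n : ℕ)
    (x y : A) (F : (ZMod p)[X][Y]) :
    aevalAeval (x ^ p ^ n) (y ^ p ^ n) F = aevalAeval x y F ^ p ^ n := by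
  let σ : A →ₐ[ZMod p] A :=
    { iterateFrobenius A p n with
      commutes' := RingHom.congr_fun (Subsingleton.elim ((iterateFrobenius A p n).comp _) _) }
  exact (map_aevalAeval σ x y F).symm

theorem aevalAeval_swap_pow_sub {A : Type*} [CommRing A] [CharP A p] [Algebra (ZMod p) A]
    {m n : ℕ} (hn : n ≤ m) {x : A} (hx : x ^ p ^ m = x) {F : (ZMod p)[X][Y]}
    (h : aevalAeval x (x ^ p ^ n) F = 0) :
    aevalAeval x (x ^ p ^ (m - n)) (Bivariate.swap F) = 0 := by
  have hx' : (x ^ p ^ n) ^ p ^ (m - n) = x := by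
    rw [← pow_mul, ← pow_add, Nat.add_sub_cancel' hn, hx]
  have hpow := aevalAeval_pow_pow (m - n) x (x ^ p ^ n) F
  rwa [hx', h, zero_pow (pow_ne_zero _ (Fact.out : p.Prime).ne_zero), ← Bivariate.aevalAeval_swap]
    at hpow

theorem pow_pow_mod {M : Type*} [Monoid M] {x : M} {q m : ℕ} (hx : x ^ q ^ m = x) (n : ℕ) :
    x ^ q ^ (n % m) = x ^ q ^ n := by
  have hfix : Function.IsPeriodicPt (· ^ q) m x := by
    rw [Function.IsPeriodicPt, Function.IsFixedPt, pow_iterate]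
    exact hx
  simpa [pow_iterate] using hfix.iterate_mod_apply n

theorem exists_le_aeval_eq_zero {A : Type*} [CommRing A] [CharP A p] [Algebra (ZMod p) A]
    {l : ℕ} (hl : l ≠ 0) {x : A} (hx : x ^ p ^ (2 * l) = x) {F : (ZMod p)[X][Y]} {n : ℕ}
    (h : aevalAeval x (x ^ p ^ n) F = 0) :
    ∃ m ≤ l, aeval x (F.eval (X ^ p ^ m) * (Bivariate.swap F).eval (X ^ p ^ m)) = 0 := by
  have hlt : n % (2 * l) < 2 * l := Nat.mod_lt _ (by omega)
  rw [← pow_pow_mod hx] at h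
  simp only [map_mul, ← aevalAeval_self_pow]
  rcases le_or_gt (n % (2 * l)) l with hle | hgt
  · exact ⟨_, hle, by rw [h, zero_mul]⟩
  · exact ⟨2 * l - n % (2 * l), by omega,
      by rw [aevalAeval_swap_pow_sub hlt.le hx h, mul_zero]⟩

theorem card_le_natDegree_of_forall_aeval_eq_zero {k K : Type*} [CommRing k] [CommRing K]
    [IsDomain K] [Finite K] [Algebra k K] [FaithfulSMul k K] {f : k[X]} (hf : f ≠ 0)
    (h : ∀ x : K, aeval x f = 0) : Nat.card K ≤ f.natDegree := by
  let _ := Fintype.ofFinite K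
  have hinj := FaithfulSMul.algebraMap_injective k K
  by_contra! hlt
  rw [← natDegree_map_eq_of_injective hinj, Nat.card_eq_fintype_card, ← Finset.card_univ] at hlt
  refine hf (map_injective _ hinj ?_)
  rw [Polynomial.map_zero]
  exact eq_zero_of_natDegree_lt_card_of_eval_eq_zero' _ _
    (fun x _ => by rw [eval_map_algebraMap, h x]) hlt

theorem exists_natDegree_mul_prod_lt {R : Type*} [CommSemiring R] {q : ℕ} (hq : 2 ≤ q) (h : R[X])
    {G : ℕ → R[X]} {d : ℕ} (hG : ∀ n, (G n).natDegree ≤ d * q ^ n) :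
    ∃ l, l ≠ 0 ∧ (h * ∏ n ∈ Finset.range (l + 1), G n).natDegree < q ^ (2 * l) := by
  let l := h.natDegree + d * q + 1
  have hgeom : ∑ n ∈ Finset.range (l + 1), q ^ n ≤ q ^ (l + 1) :=
    (Nat.geomSum_lt hq fun n hn => Finset.mem_range.mp hn).le
  have hl : h.natDegree + d * q < q ^ l := (Nat.lt_succ_self _).trans (Nat.lt_pow_self hq)
  refine ⟨l, Nat.succ_ne_zero _, ?_⟩
  calc _ ≤ h.natDegree + ∑ n ∈ Finset.range (l + 1), (G n).natDegree :=
        natDegree_mul_le.trans (by gcongr; exact natDegree_prod_le _ _)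
    _ ≤ h.natDegree + d * ∑ n ∈ Finset.range (l + 1), q ^ n := by
        rw [Finset.mul_sum]; gcongr; exact hG _
    _ ≤ h.natDegree * q ^ l + d * q ^ (l + 1) := by
        gcongr; exact Nat.le_mul_of_pos_right _ (by positivity)
    _ = (h.natDegree + d * q) * q ^ l := by ring
    _ < q ^ l * q ^ l := by gcongr
    _ = q ^ (2 * l) := by ring

theorem exists_eval_X_pow_eq_zero {F : (ZMod p)[X][Y]} {h : (ZMod p)[X]} (hh : h ≠ 0)
    (hF : ∀ m, ∀ x : GaloisField p m, aeval x h ≠ 0 →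
      ∃ n : ℕ, aevalAeval x (x ^ p ^ n) F = 0) :
    ∃ n : ℕ, F.eval (X ^ p ^ n) = 0 ∨ (Bivariate.swap F).eval (X ^ p ^ n) = 0 := by
  by_contra! hne
  let G (n : ℕ) := F.eval (X ^ p ^ n) * (Bivariate.swap F).eval (X ^ p ^ n)
  have hp : p.Prime := Fact.out
  obtain ⟨d, hd⟩ := exists_natDegree_eval_X_pow_le F
  obtain ⟨e, he⟩ := exists_natDegree_eval_X_pow_le (Bivariate.swap F)
  have hG (n : ℕ) : (G n).natDegree ≤ (d + e) * p ^ n := by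
    have hpos : 0 < p ^ n := pow_pos hp.pos n
    rw [add_mul]
    exact natDegree_mul_le.trans (add_le_add (hd _ hpos) (he _ hpos))
  obtain ⟨l, hl, hlt⟩ := exists_natDegree_mul_prod_lt hp.two_le h hG
  have hcard : Nat.card (GaloisField p (2 * l)) = p ^ (2 * l) := GaloisField.card p _ (by omega)
  have hprod : h * ∏ n ∈ Finset.range (l + 1), G n ≠ 0 :=
    mul_ne_zero hh (Finset.prod_ne_zero_iff.mpr fun n _ => mul_ne_zero (hne n).1 (hne n).2)
  refine hlt.not_ge (hcard ▸ card_le_natDegree_of_forall_aeval_eq_zero hprod fun x => ?_)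
  have hx_pow : x ^ p ^ (2 * l) = x := by
    let _ := Fintype.ofFinite (GaloisField p (2 * l))
    rw [← hcard, Nat.card_eq_fintype_card, FiniteField.pow_card]
  rw [map_mul, map_prod, mul_eq_zero, Finset.prod_eq_zero_iff]
  refine or_iff_not_imp_left.mpr fun hx => ?_
  obtain ⟨n, hn⟩ := hF (2 * l) x hx
  obtain ⟨m, hm, hm0⟩ := exists_le_aeval_eq_zero hl hx_pow hn
  exact ⟨m, Finset.mem_range.mpr (Nat.lt_succ_of_le hm), hm0⟩

end Counting

section PowersOfElements

theorem isMaximal_ker_aeval {k K : Type*} [Field k] [CommRing K] [IsDomain K] [Algebra k K] {x : K}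
    (hx : IsAlgebraic k x) : (RingHom.ker (aeval (R := k) x)).IsMaximal := by
  obtain ⟨g, hg, hgx⟩ := hx
  have : (RingHom.ker (aeval (R := k) x)).IsPrime := RingHom.ker_isPrime _
  exact IsPrime.to_maximal_ideal fun hbot => hg (by simpa [hbot] using RingHom.mem_ker.mpr hgx)

variable {p : ℕ} [Fact p.Prime] {A : Type*} [CommRing A] [Algebra (ZMod p) A]
  [Algebra.FiniteType (ZMod p) A] {a a' : A}

theorem exists_aevalAeval_pow_eq_zero
    (h : comap (aeval (R := ZMod p) a).toRingHom = comap (aeval (R := ZMod p) a').toRingHom)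
    {F : (ZMod p)[X][Y]} (hF : aevalAeval a a' F = 0) {K : Type*} [CommRing K] [IsDomain K]
    [Algebra (ZMod p) K] {x : K} (hx : IsAlgebraic (ZMod p) x) {Q : Ideal A}
    (hQ : Q.comap (aeval (R := ZMod p) a) = RingHom.ker (aeval (R := ZMod p) x)) :
    ∃ n : ℕ, aevalAeval x (x ^ p ^ n) F = 0 := by
  have hmax := isMaximal_ker_aeval hx
  have hQ_top : Q ≠ ⊤ := by
    rintro rfl
    exact hmax.ne_top (hQ ▸ Ideal.comap_top)
  obtain ⟨M, hM, hQM⟩ := Q.exists_le_maximal hQ_top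
  have hMx : RingHom.ker (aeval (R := ZMod p) x) = M.comap (aeval (R := ZMod p) a) :=
    hmax.eq_of_le (Ideal.comap_ne_top _ hM.ne_top) (hQ ▸ Ideal.comap_mono hQM)
  obtain ⟨n, hn⟩ := exists_forall_sub_pow_mem p h M
  have hcongr : Ideal.Quotient.mkₐ (ZMod p) M a' = Ideal.Quotient.mkₐ (ZMod p) M (a ^ p ^ n) :=
    Ideal.Quotient.eq.mpr (by simpa using hn X)
  have hmem : aevalAeval a (a ^ p ^ n) F ∈ M := by
    rw [← Ideal.Quotient.eq_zero_iff_mem, ← Ideal.Quotient.mkₐ_eq_mk (ZMod p), map_aevalAeval,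
      ← hcongr, ← map_aevalAeval, hF, map_zero]
  rw [aevalAeval_self_pow] at hmem
  refine ⟨n, (aevalAeval_self_pow ..).trans (RingHom.mem_ker.mp ?_)⟩
  rw [hMx]
  exact hmem

theorem exists_eq_pow_of_comap_aeval_eq [IsDomain A]
    (h : comap (aeval (R := ZMod p) a).toRingHom = comap (aeval (R := ZMod p) a').toRingHom) :
    ∃ n : ℕ, a' = a ^ p ^ n ∨ a = a' ^ p ^ n := by
  by_cases ha : IsAlgebraic (ZMod p) a
  · obtain ⟨n, hn⟩ := exists_forall_eq_pow_of_isAlgebraic p h fun g =>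
      not_not.mp fun hg => (transcendental_aeval_iff.mp hg).1 ha
    exact ⟨n, .inl (by simpa using hn X)⟩
  have hker : RingHom.ker (aevalAeval (R := ZMod p) a a') ≠ ⊥ := fun hbot =>
    not_injective_aevalAeval_of_comap_aeval_eq h ((RingHom.injective_iff_ker_eq_bot _).mpr hbot)
  obtain ⟨F, hFa, hF⟩ := (RingHom.ker_isPrime _).exists_mem_prime_of_ne_bot hker
  obtain ⟨r, hr, hrange⟩ := exists_basicOpen_subset_range_comap
    (finitePresentation_toRingHom (aeval (R := ZMod p) a)) (transcendental_iff_injective.mp ha)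
  obtain ⟨n, hn⟩ := exists_eval_X_pow_eq_zero (F := F) hr fun m x hx => by
    obtain ⟨Q, hQ⟩ :=
      hrange (show ⟨_, RingHom.ker_isPrime (aeval (R := ZMod p) x)⟩ ∈ basicOpen r from hx)
    exact exists_aevalAeval_pow_eq_zero h hFa (Algebra.IsAlgebraic.isAlgebraic x)
      (congrArg asIdeal hQ)
  have hF_swap : Irreducible (Bivariate.swap F) :=
    (MulEquiv.irreducible_iff (Bivariate.swap (R := ZMod p))).mpr hF.irreducible
  have hFa_swap : aevalAeval a' a (Bivariate.swap F) = 0 := by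
    rw [Bivariate.aevalAeval_swap]
    exact hFa
  refine ⟨n, hn.imp (fun h0 => ?_) (fun h0 => ?_)⟩
  · simpa using eq_aeval_of_irreducible_of_eval_eq_zero hF.irreducible h0 hFa
  · simpa using eq_aeval_of_irreducible_of_eval_eq_zero hF_swap h0 hFa_swap

end PowersOfElements

section Rigidity

variable {k : Type*} [CommRing k]

theorem ne_zero_of_transcendental [Nontrivial k] {A : Type*} [Ring A] [Algebra k A] {v : A}
    (hv : Transcendental k v) : v ≠ 0 :=
  fun h => hv (h ▸ isAlgebraic_zero)

theorem pow_mul_add_one_pow_ne [Nontrivial k] {A : Type*} [CommRing A] [Algebra k A] {v : A}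
    (hv : Transcendental k v) {i : ℕ} (hi : i ≠ 0) (m n : ℕ) :
    v ^ i * (v + 1) ^ n ≠ (v + 1) ^ m := by
  intro h
  have hX : (X ^ i * (X + 1) ^ n : k[X]) = (X + 1) ^ m :=
    transcendental_iff_injective.mp hv (by simpa using h)
  simpa [hi] using congrArg (eval 0) hX

variable {K : Type*} [Field K] [Algebra k K]

theorem zpow_ne_add_one_zpow [Nontrivial k] {v : K} (hv : Transcendental k v) {i : ℤ}
    (hi : i ≠ 0) (j : ℤ) : v ^ i ≠ (v + 1) ^ j := by
  have hv1 : v + 1 ≠ 0 := fun h => pow_mul_add_one_pow_ne hv one_ne_zero 1 1 (by simp [h])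
  have hnat (i : ℕ) (hi : i ≠ 0) (j : ℤ) : v ^ i ≠ (v + 1) ^ j := by
    rw [← Int.toNat_sub_toNat_neg j, zpow_sub₀ hv1, Ne, eq_div_iff (zpow_ne_zero _ hv1)]
    exact mod_cast pow_mul_add_one_pow_ne hv hi _ _
  intro h
  rcases i.eq_nat_or_neg with ⟨n, rfl | rfl⟩
  · exact hnat n (by simpa using hi) j (mod_cast h)
  · exact hnat n (by simpa using hi) (-j) (by rw [zpow_neg, ← h]; simp)

theorem exists_zpow_eq_zpow_of_pow_eq_pow [Nontrivial k] {p : ℕ} [ExpChar K p] {u v w : K}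
    (hu : Transcendental k u) (hvw : v ≠ w) (hv : ∃ i j : ℕ, v ^ p ^ i = w ^ p ^ j)
    (huv : ∃ i j : ℕ, (u * v) ^ p ^ i = (u * w) ^ p ^ j) :
    ∃ M N : ℤ, M ≠ 0 ∧ N ≠ 0 ∧ u ^ M = v ^ N := by
  obtain ⟨i, j, hij⟩ := hv
  obtain ⟨s, t, hst⟩ := huv
  have hu0 : u ≠ 0 := ne_zero_of_transcendental hu
  have hp (n : ℕ) : p ^ n ≠ 0 := (pow_pos (expChar_pos K p) n).ne'
  have hv0 : v ≠ 0 := by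
    rintro rfl
    rw [zero_pow (hp i)] at hij
    exact hvw (pow_eq_zero_iff (hp j) |>.mp hij.symm).symm
  have hmul : u ^ (p ^ s * p ^ j) * v ^ (p ^ s * p ^ j) =
      u ^ (p ^ t * p ^ j) * v ^ (p ^ i * p ^ t) := by
    calc _ = ((u * v) ^ p ^ s) ^ p ^ j := by rw [← mul_pow, pow_mul]
      _ = u ^ (p ^ t * p ^ j) * (w ^ p ^ j) ^ p ^ t := by rw [hst]; ring
      _ = _ := by rw [← hij]; ring
  have hrel : u ^ ((p ^ s - p ^ t) * p ^ j : ℤ) = v ^ (p ^ i * p ^ t - p ^ s * p ^ j : ℤ) := by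
    rw [sub_mul, zpow_sub₀ hu0, zpow_sub₀ hv0,
      div_eq_div_iff (zpow_ne_zero _ hu0) (zpow_ne_zero _ hv0)]
    exact mod_cast hmul.trans (mul_comm _ _)
  have hst_ne : p ^ s ≠ p ^ t := by
    intro he
    rw [he] at hst
    exact hvw (mul_left_cancel₀ hu0 (iterateFrobenius_inj K p t hst))
  have hM : ((p ^ s - p ^ t) * p ^ j : ℤ) ≠ 0 :=
    mul_ne_zero (sub_ne_zero.mpr (mod_cast hst_ne)) (mod_cast hp j)
  refine ⟨_, _, hM, fun hN => zpow_ne_add_one_zpow hu hM 0 ?_, hrel⟩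
  rw [hrel, hN, zpow_zero, zpow_zero]

theorem eq_of_forall_exists_pow_eq_pow [IsDomain k] (p : ℕ) [ExpChar K p] {B : Type*}
    [CommRing B] {φ ψ : B →+* K} (h : ∀ c, ∃ i j : ℕ, φ c ^ p ^ i = ψ c ^ p ^ j) {b : B}
    (hb : Transcendental k (φ b)) (hφψ : φ b = ψ b) : φ = ψ := by
  by_contra hne
  obtain ⟨c, hc, hc_ne⟩ : ∃ c, Transcendental k (φ c) ∧ φ c ≠ ψ c := by
    obtain ⟨c, hc⟩ := not_forall.mp (mt (RingHom.ext (f := φ) (g := ψ)) hne)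
    by_cases hc_alg : IsAlgebraic k (φ c)
    · exact ⟨b + c, fun halg => hb (by simpa using halg.sub hc_alg), by simpa [hφψ] using hc⟩
    · exact ⟨c, hc_alg, hc⟩
  have hdep (d : B) (hd : φ d ≠ ψ d) : ∃ M N : ℤ, M ≠ 0 ∧ N ≠ 0 ∧ φ b ^ M = φ d ^ N :=
    exists_zpow_eq_zpow_of_pow_eq_pow hb hd (h d) (by simpa [hφψ] using h (b * d))
  obtain ⟨M, N, -, hN, hMN⟩ := hdep c hc_ne
  obtain ⟨M', N', hM', -, hMN'⟩ := hdep (c + 1) (by simpa using hc_ne)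
  refine zpow_ne_add_one_zpow hc (mul_ne_zero hN hM') (N' * M) ?_
  calc φ c ^ (N * M') = (φ b ^ M') ^ M := by rw [zpow_mul, ← hMN, zpow_comm]
    _ = (φ c + 1) ^ (N' * M) := by rw [hMN', map_add, map_one, zpow_mul]

theorem iterateFrobenius_comp_eq_of_transcendental [IsDomain k] (p : ℕ) {A B : Type*} [CommRing A]
    [IsDomain A] [ExpChar A p] [Algebra k A] [CommRing B] {φ ψ : B →+* A}
    (h : ∀ c, ∃ n : ℕ, ψ c = φ c ^ p ^ n ∨ φ c = ψ c ^ p ^ n) {b : B}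
    (hb : Transcendental k (φ b)) {n : ℕ} (hn : ψ b = φ b ^ p ^ n) :
    (iterateFrobenius A p n).comp φ = ψ := by
  let ι := algebraMap A (FractionRing A)
  have hι : Function.Injective ι := IsFractionRing.injective A _
  have : ExpChar (FractionRing A) p := expChar_of_injective_ringHom hι p
  suffices ι.comp ((iterateFrobenius A p n).comp φ) = ι.comp ψ from
    RingHom.ext fun c => hι (RingHom.congr_fun this c)
  have hcomp (c : B) : (iterateFrobenius A p n).comp φ c = φ c ^ p ^ n := iterateFrobenius_def ..
  refine eq_of_forall_exists_pow_eq_pow (k := k) p (b := b) (fun c => ?_) ?_ ?_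
  · obtain ⟨m, hm | hm⟩ := h c
    · exact ⟨m, n, by simp [iterateFrobenius_def, hm, pow_right_comm]⟩
    · exact ⟨0, m + n, by simp [iterateFrobenius_def, hm, pow_add, pow_mul]⟩
  · rw [RingHom.comp_apply, hcomp]
    exact (transcendental_algebraMap_iff hι).mpr (hb.pow (pow_pos (expChar_pos A p) n))
  · rw [RingHom.comp_apply, hcomp, ← hn, RingHom.comp_apply]

end Rigidity

theorem frobenius_twist_of_comap_eq_general (p : ℕ) [Fact p.Prime] (A B : Type*) [CommRing A]
    [IsDomain A] [CharP A p] [Algebra (ZMod p) A] [Algebra.FiniteType (ZMod p) A] [CommRing B]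
    (φ ψ : B →+* A) (h : comap φ = comap ψ) :
    ∃ m : ℕ, (iterateFrobenius A p m).comp φ = ψ ∨ (iterateFrobenius A p m).comp ψ = φ := by
  by_cases halg : ∀ b, IsAlgebraic (ZMod p) (φ b)
  · obtain ⟨n, hn⟩ := exists_forall_eq_pow_of_isAlgebraic p h halg
    exact ⟨n, .inl (RingHom.ext fun b => by simp [iterateFrobenius_def, hn])⟩
  obtain ⟨b, hφb⟩ := not_forall.mp halg
  have hψb : Transcendental (ZMod p) (ψ b) :=
    mt (isAlgebraic_of_comap_aeval_eq (comap_aeval_eq_of_comap_eq p h b).symm) hφb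
  have hpow (c : B) : ∃ n : ℕ, ψ c = φ c ^ p ^ n ∨ φ c = ψ c ^ p ^ n :=
    exists_eq_pow_of_comap_aeval_eq (comap_aeval_eq_of_comap_eq p h c)
  obtain ⟨n, hn | hn⟩ := hpow b
  · exact ⟨n, .inl (iterateFrobenius_comp_eq_of_transcendental p hpow hφb hn)⟩
  · exact ⟨n, .inr (iterateFrobenius_comp_eq_of_transcendental p
      (fun c => (hpow c).imp fun _ => Or.symm) hψb hn)⟩

/-- Let `p` be a prime, `A` an integral domain of characteristic `p` that is
finitely generated as an `𝔽_p`-algebra, `B` a finitely generated `𝔽_p`-algebra, and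
`φ ψ : B →+* A` ring homomorphisms inducing the same map on prime spectra. Then for some
`m : ℕ`, either `frob_A^m ∘ φ = ψ` or `frob_A^m ∘ ψ = φ`. -/
theorem frobenius_twist_of_comap_eq
    (p : ℕ) [Fact p.Prime]
    (A B : Type*) [CommRing A] [IsDomain A] [CharP A p]
    [Algebra (ZMod p) A] [Algebra.FiniteType (ZMod p) A]
    [CommRing B] [Algebra (ZMod p) B] [Algebra.FiniteType (ZMod p) B]
    (φ ψ : B →+* A)
    (h : (PrimeSpectrum.comap φ : PrimeSpectrum A → PrimeSpectrum B) =
      PrimeSpectrum.comap ψ) :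
    ∃ m : ℕ, (iterateFrobenius A p m).comp φ = ψ ∨ (iterateFrobenius A p m).comp ψ = φ :=
  frobenius_twist_of_comap_eq_general p A B φ ψ h
end

section
/- Let k be a field and let X be an irreducible scheme of finite type over k whose underlying topological space has Krull dimension at least 1. Then for any two closed points x and y of X there exists a closed irreducible subset Z of the underlying space of X of topological Krull dimension 1 that contains both x and y. -/
open AlgebraicGeometry CategoryTheory

/-!
Let `w` be a point that specializes to `x` and to `y` while no proper specialization of `w` does,
and take `Z` to be the closure of `w`. If `Z` had dimension at least `2`, the residue field `K` of
`w` would have transcendence degree at least `2` over `k`, and it suffices to find a nontrivial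
valuation ring `O` of `K` that contains the functions on an affine neighbourhood of `w` and has
refinements centered at `x` and at `y`: its center is then a proper specialization of `w` which
still specializes to `x` and `y`, against the choice of `w`.

To find `O`, enlarge `k` to an intermediate field `L` with `K / L` of transcendence degree `1` that
is contained in a valuation ring centered at `x` and in one centered at `y`. On a curve over `L`
with function field `K` there are functions `g` and `h` with poles only at a point lying over `x`,
respectively `y`, so that every valuation ring containing `L` and omitting `g` is centered at `x`.
By compactness of the Zariski–Riemann space, finitely many elements of `L` suffice here. Hence one
may replace the trivial valuation ring of `L` by a nontrivial one `V` containing these elements, and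
extend `V` to `K` by a valuation ring `O` in which the residue of `g` is transcendental. Neither `g`
nor `h` is integral over the residue field of `V`, so `O` has a refinement omitting `g` and another
one omitting `h`.
-/

universe u v

open Polynomial

section Center

variable {A K : Type*} [CommRing A] [Field K] [Algebra A K]

/-- The valuation ring `V` of `K` dominates the local ring of `A` at `p`, i.e. the center of `V`
on `Spec A` is `p`. The map `A → K` need not be injective. -/
structure IsCenteredAt (V : ValuationSubring K) (p : Ideal A) : Prop where
  algebraMap_mem (a : A) : algebraMap A K a ∈ V
  valuation_lt_one_iff (a : A) : V.valuation (algebraMap A K a) < 1 ↔ a ∈ p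

theorem IsCenteredAt.ker_le {V : ValuationSubring K} {p : Ideal A} (h : IsCenteredAt V p) :
    RingHom.ker (algebraMap A K) ≤ p := fun a ha ↦ by
  rw [← h.valuation_lt_one_iff, RingHom.mem_ker.1 ha, map_zero]
  exact zero_lt_one

theorem IsCenteredAt.isPrime {V : ValuationSubring K} {p : Ideal A} (h : IsCenteredAt V p) :
    p.IsPrime where
  ne_top' hp := by simpa using (h.valuation_lt_one_iff 1).2 (hp ▸ Submodule.mem_top)
  mem_or_mem' {a b} hab := by
    have hle (a : A) := (V.valuation_le_one_iff _).2 (h.algebraMap_mem a)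
    simp only [← h.valuation_lt_one_iff, map_mul] at hab ⊢
    by_contra! hlt
    rw [(hle a).antisymm hlt.1, (hle b).antisymm hlt.2, mul_one] at hab
    exact hab.false

theorem IsCenteredAt.of_isMaximal {V : ValuationSubring K} {p : Ideal A} [p.IsMaximal]
    (hV : ∀ a, algebraMap A K a ∈ V) (hp : ∀ a ∈ p, V.valuation (algebraMap A K a) < 1) :
    IsCenteredAt V p where
  algebraMap_mem := hV
  valuation_lt_one_iff a := by
    refine ⟨fun ha ↦ by_contra fun hap ↦ ?_, hp a⟩
    obtain ⟨b, hb⟩ := Ideal.IsMaximal.exists_inv ‹_› hap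
    obtain ⟨c, hc, hsum⟩ := hb
    have hlt : V.valuation (algebraMap A K (b * a + c)) < 1 := by
      rw [map_add, map_mul]
      refine V.valuation.map_add_lt ?_ (hp c hc)
      rw [mul_comm, map_mul]
      exact mul_lt_one_of_lt_of_le ha ((V.valuation_le_one_iff _).2 (hV b))
    simp [hsum] at hlt

theorem exists_isCenteredAt_of_forall_mem {V : ValuationSubring K}
    (hV : ∀ a, algebraMap A K a ∈ V) : ∃ p : Ideal A, IsCenteredAt V p :=
  ⟨(IsLocalRing.maximalIdeal V).comap ((algebraMap A K).codRestrict V.toSubring hV), hV,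
    fun a ↦ (V.valuation_lt_one_iff ⟨_, hV a⟩).symm⟩

theorem exists_isCenteredAt (p : Ideal A) [p.IsPrime] (hp : RingHom.ker (algebraMap A K) ≤ p) :
    ∃ V : ValuationSubring K, IsCenteredAt V p := by
  have hunit (s : p.primeCompl) : IsUnit (algebraMap A K s) :=
    isUnit_iff_ne_zero.2 fun h0 ↦ s.2 (hp h0)
  let ψ : Localization.AtPrime p →+* K := IsLocalization.lift hunit
  have hψ (a : A) : ψ (algebraMap A _ a) = algebraMap A K a := IsLocalization.lift_eq hunit a
  obtain ⟨V, hV, hloc⟩ := IsLocalRing.exists_factor_valuationRing ψ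
  refine ⟨V, fun a ↦ hψ a ▸ hV _, fun a ↦ ?_⟩
  have hle := (V.valuation_le_one_iff _).2 (hV (algebraMap A _ a))
  have hunit_iff := V.valuation_eq_one_iff ⟨_, hV (algebraMap A _ a)⟩
  rw [← hψ, ← not_iff_not, ← Ideal.mem_primeCompl_iff,
    ← IsLocalization.AtPrime.isUnit_to_map_iff (Localization.AtPrime p) p,
    ← isUnit_map_iff (ψ.codRestrict V.toSubring hV), not_lt, hle.ge_iff_eq]
  exact hunit_iff.symm

theorem IsCenteredAt.ne_top {V : ValuationSubring K} {p : Ideal A} (h : IsCenteredAt V p)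
    (hp : RingHom.ker (algebraMap A K) < p) : V ≠ ⊤ := by
  rintro rfl
  obtain ⟨a, hap, ha⟩ := SetLike.exists_of_lt hp
  refine ha (((⊤ : ValuationSubring K).mem_nonunits_iff_or).1
    ((h.valuation_lt_one_iff a).2 hap) |>.resolve_right ?_)
  simp

theorem IsCenteredAt.eq_top_of_le_ker
    (hK : ∀ z : K, ∃ a b : A, z = algebraMap A K a / algebraMap A K b) {p : Ideal A}
    {V : ValuationSubring K} (hV : IsCenteredAt V p) (hp : p ≤ RingHom.ker (algebraMap A K)) :
    V = ⊤ := by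
  refine top_unique fun z _ ↦ ?_
  obtain ⟨a, b, rfl⟩ := hK z
  rw [← V.valuation_le_one_iff, map_div₀]
  by_cases hb : b ∈ p
  · simp [show algebraMap A K b = 0 from hp hb]
  · exact div_le_one_of_le₀ (((V.valuation_le_one_iff _).2 (hV.algebraMap_mem a)).trans
      (not_lt.1 ((hV.valuation_lt_one_iff b).not.2 hb))) zero_le

end Center

section PatchTopology

variable {K : Type*} [Field K]

/-- The constructible (patch) topology on the Zariski–Riemann space of `K`. -/
instance patchTopology : TopologicalSpace (ValuationSubring K) :=
  .generateFrom ({U | ∃ x : K, U = {V | x ∈ V}} ∪ {U | ∃ x : K, U = {V | x ∉ V}})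

theorem isClopen_setOf_mem (x : K) : IsClopen {V : ValuationSubring K | x ∈ V} :=
  ⟨⟨.basic _ (.inr ⟨x, rfl⟩)⟩, .basic _ (.inl ⟨x, rfl⟩)⟩

theorem isClopen_setOf_valuation_lt_one (x : K) :
    IsClopen {V : ValuationSubring K | V.valuation x < 1} := by
  simp_rw [← ValuationSubring.mem_nonunits_iff, ValuationSubring.mem_nonunits_iff_or]
  exact .union ⟨isClosed_const, isOpen_const⟩ (isClopen_setOf_mem x⁻¹).compl

theorem isClopen_setOf_valuation_eq_one (x : K) :
    IsClopen {V : ValuationSubring K | V.valuation x = 1} := by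
  have hiff (V : ValuationSubring K) : V.valuation x = 1 ↔ x ∈ V ∧ ¬ V.valuation x < 1 := by
    rw [not_lt, le_antisymm_iff, V.valuation_le_one_iff]
  simp_rw [hiff]
  exact (isClopen_setOf_mem x).inter (isClopen_setOf_valuation_lt_one x).compl

/-- The valuation ring of elements of `K` lying in almost all valuation rings of an ultrafilter. -/
def ultrafilterLim (𝒰 : Ultrafilter (ValuationSubring K)) : ValuationSubring K where
  carrier := {x | ∀ᶠ V : ValuationSubring K in 𝒰, x ∈ V}
  mul_mem' hx hy := by filter_upwards [hx, hy] with V using V.mul_mem _ _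
  one_mem' := .of_forall fun V ↦ V.one_mem
  add_mem' hx hy := by filter_upwards [hx, hy] with V using V.add_mem _ _
  zero_mem' := .of_forall fun V ↦ V.zero_mem
  neg_mem' hx := by filter_upwards [hx] with V using V.neg_mem _
  mem_or_inv_mem' x := Ultrafilter.eventually_or.1 (.of_forall fun V ↦ V.mem_or_inv_mem x)

instance compactSpace_valuationSubring : CompactSpace (ValuationSubring K) := by
  refine ⟨isCompact_iff_ultrafilter_le_nhds.2 fun 𝒰 _ ↦ ⟨ultrafilterLim 𝒰, trivial, ?_⟩⟩
  rw [TopologicalSpace.nhds_generateFrom]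
  refine le_iInf₂ fun U ⟨hU, hbasic⟩ ↦ Filter.le_principal_iff.2 ?_
  rcases hbasic with ⟨x, rfl⟩ | ⟨x, rfl⟩
  · exact hU
  · exact Ultrafilter.eventually_not.2 hU

theorem exists_finset_forall_of_isOpen {S : Set K} {U : Set (ValuationSubring K)} (hU : IsOpen U)
    (hSU : ∀ V : ValuationSubring K, S ⊆ V → V ∈ U) :
    ∃ F : Finset K, ↑F ⊆ S ∧ ∀ V : ValuationSubring K, (F : Set K) ⊆ V → V ∈ U := by
  classical
  obtain ⟨t, ht⟩ := hU.isClosed_compl.isCompact.elim_finite_subfamily_closed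
    (fun x : S ↦ {V | (x : K) ∈ V}) (fun x ↦ (isClopen_setOf_mem (x : K)).isClosed) <| by
      refine Set.eq_empty_of_forall_notMem fun V hV ↦ hV.1 (hSU V fun x hx ↦ ?_)
      exact Set.mem_iInter.1 hV.2 ⟨x, hx⟩
  refine ⟨t.image (↑), by simp, fun V hV ↦ by_contra fun hVU ↦ ?_⟩
  refine Set.notMem_empty V (ht ▸ ⟨hVU, Set.mem_iInter₂.2 fun x hx ↦ hV ?_⟩)
  exact Finset.mem_coe.2 (Finset.mem_image_of_mem _ hx)

end PatchTopology

section ResiduallyTranscendental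

variable {L K : Type*} [Field L] [Field K] [Algebra L K] {V W : ValuationSubring K} {α β : K}

variable (L V α) in
/-- The residue of `α` is transcendental over the residue field of `V ∩ L`; in other words, `V`
restricts to the Gauss valuation of `L(α)`. -/
def IsResiduallyTranscendental : Prop :=
  ∀ F : L[X], (∀ i, algebraMap L K (F.coeff i) ∈ V) →
    (∃ i, V.valuation (algebraMap L K (F.coeff i)) = 1) → V.valuation (aeval α F) = 1

theorem valuation_algebraMap_eq_one (hV : ∀ c : L, algebraMap L K c ∈ V) {c : L} (hc : c ≠ 0) :
    V.valuation (algebraMap L K c) = 1 := by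
  refine ((V.valuation_le_one_iff _).2 (hV c)).antisymm ?_
  have hinv := (V.valuation_le_one_iff _).2 (hV c⁻¹)
  rwa [map_inv₀, map_inv₀, inv_le_one₀ (by simpa [Valuation.pos_iff])] at hinv

theorem isResiduallyTranscendental_iff (hV : ∀ c : L, algebraMap L K c ∈ V) :
    IsResiduallyTranscendental L V α ↔ ∀ F : L[X], F ≠ 0 → V.valuation (aeval α F) = 1 := by
  refine ⟨fun h F hF ↦ h F (fun i ↦ hV _) ⟨F.natDegree, ?_⟩, fun h F _ ⟨i, hi⟩ ↦ h F ?_⟩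
  · exact valuation_algebraMap_eq_one hV (leadingCoeff_ne_zero.2 hF)
  · rintro rfl
    simp at hi

namespace IsResiduallyTranscendental

theorem valuation_eq_one (h : IsResiduallyTranscendental L V α) : V.valuation α = 1 := by
  have hcoeff (i : ℕ) : algebraMap L K ((X : L[X]).coeff i) ∈ V := by
    rw [coeff_X]
    split_ifs
    exacts [by simp [V.one_mem], by simp [V.zero_mem]]
  simpa using h X hcoeff ⟨1, by simp⟩

theorem mem (h : IsResiduallyTranscendental L V α) : α ∈ V :=
  (V.valuation_le_one_iff α).1 h.valuation_eq_one.le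

theorem ne_zero (h : IsResiduallyTranscendental L V α) : α ≠ 0 := by
  rintro rfl
  simpa using h.valuation_eq_one

theorem transcendental (h : IsResiduallyTranscendental L V α)
    (hV : ∀ c : L, algebraMap L K c ∈ V) : Transcendental L α :=
  transcendental_iff.2 fun F hF ↦ by_contra fun hF0 ↦ by
    simpa [hF] using (isResiduallyTranscendental_iff hV).1 h F hF0

theorem inv (h : IsResiduallyTranscendental L V α) (hV : ∀ c : L, algebraMap L K c ∈ V) :
    IsResiduallyTranscendental L V α⁻¹ := by
  have hα := h.valuation_eq_one
  let := invertibleOfNonzero (inv_ne_zero h.ne_zero)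
  rw [isResiduallyTranscendental_iff hV] at h ⊢
  intro F hF
  have hrev : aeval α F.reverse * α⁻¹ ^ F.natDegree = aeval α⁻¹ F := by
    simpa [aeval_def] using eval₂_reverse_mul_pow (algebraMap L K) α⁻¹ F
  rw [← hrev, map_mul, h _ (by simpa using hF), map_pow, map_inv₀, hα, inv_one, one_pow, one_mul]

theorem aeval_of_natDegree_pos (h : IsResiduallyTranscendental L V α)
    (hV : ∀ c : L, algebraMap L K c ∈ V) {F : L[X]} (hF : 0 < F.natDegree) :
    IsResiduallyTranscendental L V (aeval α F) := by
  rw [isResiduallyTranscendental_iff hV] at h ⊢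
  intro G hG
  rw [← aeval_comp]
  refine h _ fun h0 ↦ ?_
  obtain hG0 | ⟨-, hFC⟩ := comp_eq_zero_iff.1 h0
  · exact hG hG0
  · rw [hFC, natDegree_C] at hF
    exact hF.false

theorem add_of_valuation_lt_one (h : IsResiduallyTranscendental L V α)
    (hV : ∀ c : L, algebraMap L K c ∈ V) (hβ : V.valuation β < 1) :
    IsResiduallyTranscendental L V (α + β) := by
  let S : Subalgebra L K := { V.toSubring with algebraMap_mem' := hV }
  let a : S := ⟨α, h.mem⟩
  let b : S := ⟨β, (V.valuation_le_one_iff β).1 hβ.le⟩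
  rw [isResiduallyTranscendental_iff hV] at h ⊢
  intro F hF
  obtain ⟨q, hq⟩ := sub_dvd_eval_sub (a + b) a (F.map (algebraMap L S))
  have hdiff : aeval (α + β) F = aeval α F + β * q := by
    rw [eval_map_algebraMap, eval_map_algebraMap, sub_eq_iff_eq_add', add_sub_cancel_left] at hq
    have hqK := congrArg S.val hq
    rwa [map_add, map_mul, ← aeval_algHom_apply, ← aeval_algHom_apply] at hqK
  have hsmall : V.valuation (β * q) < V.valuation (aeval α F) := by
    rw [h F hF, map_mul]
    exact mul_lt_one_of_lt_of_le hβ ((V.valuation_le_one_iff _).2 q.2)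
  rw [hdiff, Valuation.map_add_eq_of_lt_left _ hsmall, h F hF]

theorem exists_valuation_lt_one (h : IsResiduallyTranscendental L V α)
    (hV : ∀ c : L, algebraMap L K c ∈ V) (hW : ∀ c : L, algebraMap L K c ∈ W)
    (hαW : ¬ IsResiduallyTranscendental L W α) :
    ∃ β, IsResiduallyTranscendental L V β ∧ W.valuation β < 1 := by
  rw [isResiduallyTranscendental_iff hW] at hαW
  push Not at hαW
  obtain ⟨F, hF, hne⟩ := hαW
  have hdeg : 0 < F.natDegree := Nat.pos_of_ne_zero fun h0 ↦ by
    obtain ⟨c, rfl⟩ := natDegree_eq_zero.1 h0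
    rw [aeval_C] at hne
    exact hne (valuation_algebraMap_eq_one hW (C_ne_zero.1 hF))
  rcases hne.lt_or_gt with hlt | hgt
  · exact ⟨_, h.aeval_of_natDegree_pos hV hdeg, hlt⟩
  · refine ⟨_, (h.aeval_of_natDegree_pos hV hdeg).inv hV, ?_⟩
    rw [map_inv₀]
    exact inv_lt_one_of_one_lt₀ hgt

theorem exists_common (h : IsResiduallyTranscendental L V α)
    (hV : ∀ c : L, algebraMap L K c ∈ V) (h' : IsResiduallyTranscendental L W β)
    (hW : ∀ c : L, algebraMap L K c ∈ W) :
    ∃ s, IsResiduallyTranscendental L V s ∧ IsResiduallyTranscendental L W s := by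
  by_cases hα : IsResiduallyTranscendental L W α
  · exact ⟨α, h, hα⟩
  by_cases hβ : IsResiduallyTranscendental L V β
  · exact ⟨β, hβ, h'⟩
  obtain ⟨a, ha, haW⟩ := h.exists_valuation_lt_one hV hW hα
  obtain ⟨b, hb, hbV⟩ := h'.exists_valuation_lt_one hW hV hβ
  exact ⟨a + b, ha.add_of_valuation_lt_one hV hbV,
    add_comm a b ▸ hb.add_of_valuation_lt_one hW haW⟩

end IsResiduallyTranscendental

end ResiduallyTranscendental

section Dimension

theorem ringKrullDim_le_of_isIntegral (R S : Type*) [CommRing R] [CommRing S] [Algebra R S]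
    [Algebra.IsIntegral R S] : ringKrullDim S ≤ ringKrullDim R :=
  Order.krullDim_le_of_strictMono (PrimeSpectrum.comap (algebraMap R S))
    fun _ _ hIJ ↦ Ideal.IsIntegral.comap_lt_comap hIJ

theorem height_eq_of_isMaximal_mvPolynomial {L : Type*} [Field L] {n : ℕ}
    (M : Ideal (MvPolynomial (Fin n) L)) [M.IsMaximal] : M.height = n := by
  induction n with
  | zero =>
    have hfield : IsField (MvPolynomial (Fin 0) L) :=
      (MvPolynomial.isEmptyAlgEquiv L (Fin 0)).toMulEquiv.isField (Field.toIsField L)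
    let := hfield.toField
    rw [Ideal.eq_bot_of_prime M]
    simp
  | succ n ih =>
    let e := MvPolynomial.finSuccEquiv L n
    have : (M.map e).IsMaximal := Ideal.map_isMaximal_of_equiv e
    have : ((M.map e).under (MvPolynomial (Fin n) L)).IsMaximal :=
      Polynomial.isMaximal_comap_C_of_isJacobsonRing (M.map e)
    rw [← e.toRingEquiv.height_map M, Nat.cast_succ, ← ih ((M.map e).under _)]
    have : (M.map e).LiesOver ((M.map e).under (MvPolynomial (Fin n) L)) := Ideal.over_under _
    exact Polynomial.height_eq_height_add_one _ (M.map e)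

variable (L : Type u) (A : Type v) [Field L] [CommRing A] [IsDomain A] [Algebra L A]
  [Algebra.FiniteType L A]

theorem exists_finite_injective_mvPolynomial_trdeg_eq :
    ∃ (n : ℕ) (g : MvPolynomial (Fin n) L →ₐ[L] A), Function.Injective g ∧ g.Finite ∧
      Algebra.trdeg L A = n := by
  obtain ⟨n, g, hg, hfin⟩ := exists_finite_inj_algHom_of_fg L A
  refine ⟨n, g, hg, hfin, ?_⟩
  algebraize [g.toRingHom]
  have : FaithfulSMul (MvPolynomial (Fin n) L) A := (faithfulSMul_iff_algebraMap_injective _ _).2 hg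
  have : Module.Finite (MvPolynomial (Fin n) L) A := hfin
  have h := lift_trdeg_add_eq L (MvPolynomial (Fin n) L) A
  simpa [trdeg_eq_zero, eq_comm] using h

theorem trdeg_le_height_of_isMaximal (M : Ideal A) [M.IsMaximal] :
    Cardinal.toENat (Algebra.trdeg L A) ≤ M.height := by
  obtain ⟨n, g, hg, hfin, hn⟩ := exists_finite_injective_mvPolynomial_trdeg_eq L A
  algebraize [g.toRingHom]
  have : FaithfulSMul (MvPolynomial (Fin n) L) A := (faithfulSMul_iff_algebraMap_injective _ _).2 hg
  have : Module.Finite (MvPolynomial (Fin n) L) A := hfin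
  have : IsNoetherianRing A := Algebra.FiniteType.isNoetherianRing L A
  have : (M.under (MvPolynomial (Fin n) L)).IsMaximal := inferInstance
  rw [hn, map_natCast, ← height_eq_of_isMaximal_mvPolynomial (M.under (MvPolynomial (Fin n) L)),
    Ideal.height_eq_height_add_of_liesOver_of_hasGoingDown (M.under (MvPolynomial (Fin n) L)) M]
  exact le_self_add

theorem ringKrullDim_le_trdeg :
    ringKrullDim A ≤ Cardinal.toENat (Algebra.trdeg L A) := by
  obtain ⟨n, g, -, hfin, hn⟩ := exists_finite_injective_mvPolynomial_trdeg_eq L A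
  algebraize [g.toRingHom]
  have : Module.Finite (MvPolynomial (Fin n) L) A := hfin
  refine (ringKrullDim_le_of_isIntegral (MvPolynomial (Fin n) L) A).trans ?_
  rw [MvPolynomial.ringKrullDim_of_isNoetherianRing, ringKrullDim_eq_zero_of_field, hn]
  simp

end Dimension

section ResiduallyTranscendentalCenter

theorem mem_of_isIntegral {R K : Type*} [CommRing R] [Field K] [Algebra R K]
    {V : ValuationSubring K} (hV : ∀ r, algebraMap R K r ∈ V) {z : K} (hz : IsIntegral R z) :
    z ∈ V := by
  obtain ⟨P, hP, hPz⟩ := hz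
  refine Subring.isIntegrallyClosedIn_iff.1 (inferInstanceAs (IsIntegrallyClosedIn V K))
    ⟨P.map ((algebraMap R K).codRestrict V.toSubring hV), hP.map _, ?_⟩
  rw [eval₂_map]
  exact hPz

theorem valuation_aeval_lt_one {R K : Type*} [CommRing R] [Field K] [Algebra R K]
    {V : ValuationSubring K} {P : R[X]}
    (hP : ∀ i, V.valuation (algebraMap R K (P.coeff i)) < 1) {z : K} (hz : z ∈ V) :
    V.valuation (aeval z P) < 1 := by
  rw [aeval_eq_sum_range]
  refine Valuation.map_sum_lt _ one_ne_zero fun i _ ↦ ?_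
  rw [Algebra.smul_def, map_mul, map_pow]
  exact mul_lt_one_of_lt_of_le (hP i) (pow_le_one' ((V.valuation_le_one_iff _).2 hz) _)

theorem algebraMap_eval_scaleRoots {A K : Type*} [CommRing A] [Field K] [Algebra A K] (P : A[X])
    (a : A) {b : A} (hb : algebraMap A K b ≠ 0) :
    algebraMap A K ((P.scaleRoots b).eval a) =
      algebraMap A K b ^ P.natDegree * aeval (algebraMap A K a / algebraMap A K b) P := by
  rw [aeval_def, ← scaleRoots_eval₂_mul, mul_div_cancel₀ _ hb, ← eval₂_at_apply]

theorem aeval_div_eq_zero_of_aeval_div_eq_zero {A K E : Type*} [CommRing A] [Field K] [Field E]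
    [Algebra A K] [FaithfulSMul A K] [Algebra A E] {P : A[X]} {a b : A} (hb : b ≠ 0)
    (hbE : algebraMap A E b ≠ 0) (hP : aeval (algebraMap A K a / algebraMap A K b) P = 0) :
    aeval (algebraMap A E a / algebraMap A E b) P = 0 := by
  have hbK : algebraMap A K b ≠ 0 := by simpa using hb
  have heval : (P.scaleRoots b).eval a = 0 := by
    rw [← FaithfulSMul.algebraMap_eq_zero_iff A K, algebraMap_eval_scaleRoots P a hbK, hP, mul_zero]
  have hE := algebraMap_eval_scaleRoots P a hbE
  rw [heval, map_zero, zero_eq_mul] at hE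
  exact hE.resolve_left (pow_ne_zero _ hbE)

theorem exists_mem_ne_zero_and_notMem_of_height_le_one {A : Type*} [CommRing A] [IsDomain A]
    [IsNoetherianRing A] (m : Ideal A) [m.IsPrime] (hm : 2 ≤ m.height) :
    ∃ a ∈ m, ∃ b ∈ m, b ≠ 0 ∧ ∀ q : Ideal A, q.IsPrime → q.height ≤ 1 → b ∈ q → a ∉ q := by
  have hm0 : m ≠ ⊥ := by
    rintro rfl
    simp at hm
  obtain ⟨b, hbm, hb⟩ := Submodule.exists_mem_ne_zero_of_ne_bot hm0
  have hnot : ¬ (m : Set A) ⊆ ⋃ q ∈ (Ideal.span {b}).minimalPrimes, (q : Set A) := by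
    rw [Ideal.subset_union_prime_finite (Ideal.finite_minimalPrimes_of_isNoetherianRing A _)
      ⊥ ⊥ fun q hq _ _ ↦ hq.1.1]
    rintro ⟨q, hq, hmq⟩
    have hq1 := Ideal.height_le_one_of_isPrincipal_of_mem_minimalPrimes _ q hq
    exact absurd (hm.trans ((Ideal.height_mono hmq).trans hq1)) (by simp)
  obtain ⟨a, ham, ha⟩ := Set.not_subset.1 hnot
  refine ⟨a, ham, b, hbm, hb, fun q hq hq1 hbq haq ↦ ha ?_⟩
  obtain ⟨q', hq', hq'q⟩ :=
    Ideal.exists_minimalPrimes_le ((Ideal.span_singleton_le_iff_mem q).2 hbq)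
  have := hq'.1.1
  suffices q' = q from Set.mem_biUnion hq' (this ▸ haq)
  refine eq_of_le_of_not_lt hq'q fun hlt ↦ hb ?_
  have hq'0 : q' = ⊥ := by
    have hq'1 := Ideal.height_le_iff.1 hq1 q' this hlt
    rwa [Nat.cast_one, Order.lt_one_iff, Ideal.height_eq_zero_iff,
      IsDomain.minimalPrimes_eq_singleton_bot] at hq'1
  simpa [hq'0] using hq'.1.2 (Ideal.mem_span_singleton_self b)

variable {L A K : Type*} [Field L] [CommRing A] [Field K] [Algebra L A]
  [Algebra L K] [Algebra A K] [IsScalarTower L A K]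

theorem eval_scaleRoots_map_mem_iff {g : L[X]} (hg : 0 < g.natDegree) {a b : A} {q : Ideal A}
    [q.IsPrime] (hb : b ∈ q) : ((g.map (algebraMap L A)).scaleRoots b).eval a ∈ q ↔ a ∈ q := by
  have hg0 : g ≠ 0 := ne_zero_of_natDegree_gt hg
  have : Nontrivial A := (algebraMap A q.ResidueField).domain_nontrivial
  rw [← Ideal.algebraMap_residueField_eq_zero, ← Ideal.algebraMap_residueField_eq_zero,
    ← eval₂_at_apply, ← Polynomial.eval_map, map_scaleRoots, Polynomial.map_map,
    ← IsScalarTower.algebraMap_eq, Ideal.algebraMap_residueField_eq_zero.2 hb, scaleRoots_zero]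
  · simp [hg0, hg.ne']
  · rwa [leadingCoeff_map, ← IsScalarTower.algebraMap_apply, Ne, map_eq_zero, leadingCoeff_eq_zero]

theorem aeval_div_ne_aeval_div_of_coeff_mem [IsNoetherianRing A] [FaithfulSMul A K] {m : Ideal A}
    [m.IsPrime] {a b : A} (ha : a ∈ m) (hb : b ∈ m) (hb0 : b ≠ 0)
    (hab : ∀ q : Ideal A, q.IsPrime → q.height ≤ 1 → b ∈ q → a ∉ q) {f : L[X]} (hf : f ≠ 0)
    {P : A[X]} (hP : ∀ i, P.coeff i ∈ m) :
    aeval (algebraMap A K a / algebraMap A K b) f ≠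
      aeval (algebraMap A K a / algebraMap A K b) P := by
  intro hfP
  /- At a minimal prime `q` over `G`, the residue `s` of `a / b` is algebraic over `L`, hence lies
  in every valuation ring centered at `m`. There `f(s) = P(s)` is not a unit, although
  `s f(s) = -1`. -/
  let g : L[X] := X * f + 1
  have hg : 0 < g.natDegree := by
    rw [natDegree_add_eq_left_of_natDegree_lt] <;> simp [natDegree_X_mul hf]
  let G := ((g.map (algebraMap L A)).scaleRoots b).eval a
  obtain ⟨q, hq, hqm⟩ := Ideal.exists_minimalPrimes_le (J := m)
    ((Ideal.span_singleton_le_iff_mem m).2 ((eval_scaleRoots_map_mem_iff hg hb).2 ha : G ∈ m))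
  have := hq.1.1
  have hGq : G ∈ q := (Ideal.span_singleton_le_iff_mem q).1 hq.1.2
  have hbq : b ∉ q := fun hbq ↦ hab q ‹_›
    (Ideal.height_le_one_of_isPrincipal_of_mem_minimalPrimes _ q hq) hbq
    ((eval_scaleRoots_map_mem_iff hg hbq).1 hGq)
  rw [← Ideal.algebraMap_residueField_eq_zero] at hbq hGq
  let E := q.ResidueField
  let s : E := algebraMap A E a / algebraMap A E b
  obtain ⟨V, hV⟩ := exists_isCenteredAt (K := E) m (by rwa [Ideal.ker_algebraMap_residueField])
  have hgs : s * aeval s f + 1 = 0 := by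
    rw [algebraMap_eval_scaleRoots _ _ hbq, aeval_map_algebraMap] at hGq
    simpa [g, s] using (mul_eq_zero.1 hGq).resolve_left (pow_ne_zero _ hbq)
  have hfPs : aeval s f = aeval s P := by
    have hroot : aeval (algebraMap A K a / algebraMap A K b) (f.map (algebraMap L A) - P) = 0 := by
      rw [map_sub, aeval_map_algebraMap, hfP, sub_self]
    rw [← sub_eq_zero, ← aeval_map_algebraMap A s f, ← map_sub]
    exact aeval_div_eq_zero_of_aeval_div_eq_zero hb0 hbq hroot
  have hsV : s ∈ V := by
    refine mem_of_isIntegral (R := L) (fun c ↦ ?_) (IsAlgebraic.isIntegral ⟨g, ?_, ?_⟩)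
    · rw [IsScalarTower.algebraMap_apply L A E]
      exact hV.algebraMap_mem _
    · exact ne_zero_of_natDegree_gt hg
    · simpa [g] using hgs
  have hlt : V.valuation (s * aeval s f) < 1 := by
    rw [hfPs, map_mul, mul_comm]
    exact mul_lt_one_of_lt_of_le
      (valuation_aeval_lt_one (fun i ↦ (hV.valuation_lt_one_iff _).2 (hP i)) hsV)
      ((V.valuation_le_one_iff s).2 hsV)
  simp [eq_neg_of_add_eq_zero_left hgs] at hlt

theorem exists_isCenteredAt_isResiduallyTranscendental [IsNoetherianRing A] [FaithfulSMul A K]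
    (m : Ideal A) [m.IsMaximal] (hm : 2 ≤ m.height) :
    ∃ (V : ValuationSubring K) (s : K), IsCenteredAt V m ∧ IsResiduallyTranscendental L V s := by
  have : IsDomain A := (FaithfulSMul.algebraMap_injective A K).isDomain
  obtain ⟨a, ha, b, hb, hb0, hab⟩ := exists_mem_ne_zero_and_notMem_of_height_le_one m hm
  let s : K := algebraMap A K a / algebraMap A K b
  let S : Submonoid A[X] := (nonZeroDivisors L[X]).map (mapRingHom (algebraMap L A))
  have hdisj : Disjoint ((m.map C ⊔ RingHom.ker (aeval (R := A) s) : Ideal A[X]) : Set A[X]) S := by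
    rw [Set.disjoint_right]
    rintro _ ⟨f, hf, rfl⟩ hfm
    obtain ⟨P, hP, R, hR, hPR⟩ := Submodule.mem_sup.1 hfm
    refine aeval_div_ne_aeval_div_of_coeff_mem (K := K) ha hb hb0 hab
      (nonZeroDivisors.ne_zero hf) (Ideal.mem_map_C_iff.1 hP) ?_
    rw [← aeval_map_algebraMap A, ← coe_mapRingHom, ← hPR, map_add, (RingHom.mem_ker.1 hR :),
      add_zero]
  obtain ⟨Q, hQ, hmQ, hQS⟩ := Ideal.exists_le_prime_disjoint _ S hdisj
  let : Algebra A[X] K := (aeval (R := A) s).toAlgebra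
  obtain ⟨V, hV⟩ := exists_isCenteredAt (K := K) Q (le_sup_right.trans hmQ)
  have hC (c : A) : algebraMap A[X] K (C c) = algebraMap A K c := aeval_C s c
  refine ⟨V, s, .of_isMaximal (fun c ↦ hC c ▸ hV.algebraMap_mem _) fun c hc ↦ ?_, ?_⟩
  · rw [← hC, hV.valuation_lt_one_iff]
    exact hmQ (Ideal.mem_sup_left (Ideal.mem_map_of_mem C hc))
  · have haeval (f : L[X]) : aeval s f = algebraMap A[X] K (f.map (algebraMap L A)) :=
      (aeval_map_algebraMap A s f).symm
    rw [isResiduallyTranscendental_iff fun c ↦ ?_]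
    · intro f hf
      rw [haeval]
      refine ((V.valuation_le_one_iff _).2 (hV.algebraMap_mem _)).antisymm (not_lt.1 ?_)
      rw [hV.valuation_lt_one_iff]
      exact Set.disjoint_right.1 hQS ⟨f, mem_nonZeroDivisors_of_ne_zero hf, rfl⟩
    · rw [← aeval_C s c, haeval]
      exact hV.algebraMap_mem _

end ResiduallyTranscendentalCenter

section Descent

variable {L A K : Type*} [Field L] [CommRing A] [Field K] [Algebra L K] [Algebra A K]

theorem fg_adjoin_range_algebraMap (k L A K : Type*) [CommRing k] [CommRing L] [CommRing A]
    [CommRing K] [Algebra k L] [Algebra k A] [Algebra k K] [Algebra L K] [Algebra A K]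
    [IsScalarTower k L K] [IsScalarTower k A K] [Algebra.FiniteType k A] :
    (Algebra.adjoin L (Set.range (algebraMap A K))).FG := by
  obtain ⟨S, hS⟩ := Algebra.FiniteType.out (R := k) (A := A)
  refine Subalgebra.fg_def.2 ⟨algebraMap A K '' S, S.finite_toSet.image _, ?_⟩
  refine (Algebra.adjoin_mono (Set.image_subset_range _ _)).antisymm (Algebra.adjoin_le ?_)
  rintro _ ⟨a, rfl⟩
  have ha : a ∈ Algebra.adjoin k (S : Set A) := by rw [hS]; trivial
  let E := (Algebra.adjoin L (algebraMap A K '' S)).restrictScalars k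
  have hle : Algebra.adjoin k (S : Set A) ≤ E.comap (IsScalarTower.toAlgHom k A K) :=
    Algebra.adjoin_le fun s hs ↦ Algebra.subset_adjoin (Set.mem_image_of_mem _ hs)
  exact hle ha

theorem exists_subalgebra_isCenteredAt_imp (k : Type*) [Field k] [Algebra k L] [Algebra k A]
    [Algebra k K] [IsScalarTower k L K] [IsScalarTower k A K] [Algebra.FiniteType k A]
    (hK : ∀ z : K, ∃ a b : A, z = algebraMap A K a / algebraMap A K b) {p : Ideal A} [p.IsMaximal]
    {V : ValuationSubring K} (hV : IsCenteredAt V p)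
    (hLV : ∀ c, algebraMap L K c ∈ V) :
    ∃ (A' : Subalgebra L K) (M : Ideal A'), A'.FG ∧ IsFractionRing A' K ∧ M.IsMaximal ∧
      ∀ V' : ValuationSubring K, IsCenteredAt V' M → IsCenteredAt V' p := by
  let A' := Algebra.adjoin L (Set.range (algebraMap A K))
  have hA' (a : A) : algebraMap A K a ∈ A' := Algebra.subset_adjoin ⟨a, rfl⟩
  have hA'V (a : A') : (a : K) ∈ V :=
    Algebra.adjoin_le (S := { V.toSubring with algebraMap_mem' := hLV })
      (Set.range_subset_iff.2 hV.algebraMap_mem) a.2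
  obtain ⟨M, hM, hVM⟩ := Ideal.exists_le_maximal
    ((IsLocalRing.maximalIdeal V).comap (A'.val.toRingHom.codRestrict V.toSubring hA'V))
    (Ideal.IsPrime.ne_top inferInstance)
  refine ⟨A', M, fg_adjoin_range_algebraMap k L A K, .of_field _ _ fun z ↦ ?_, hM, fun V' hV' ↦
    .of_isMaximal (fun a ↦ hV'.algebraMap_mem ⟨_, hA' a⟩) fun a ha ↦
      (hV'.valuation_lt_one_iff ⟨_, hA' a⟩).2 (hVM ?_)⟩
  · obtain ⟨a, b, rfl⟩ := hK z
    exact ⟨⟨_, hA' a⟩, ⟨_, hA' b⟩, rfl⟩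
  · exact (V.valuation_lt_one_iff _).2 ((hV.valuation_lt_one_iff a).2 ha)

theorem trdeg_eq_of_isFractionRing (A' : Subalgebra L K) [IsFractionRing A' K] :
    Algebra.trdeg L A' = Algebra.trdeg L K := by
  have : Algebra.IsAlgebraic A' K := IsLocalization.isAlgebraic (S := K) (nonZeroDivisors A')
  rw [← trdeg_add_eq L A' (A := K), trdeg_eq_zero (R := A') (A := K), add_zero]

theorem exists_isResiduallyTranscendental_of_two_le_trdeg (k : Type*) [Field k] [Algebra k L]
    [Algebra k A] [Algebra k K] [IsScalarTower k L K] [IsScalarTower k A K] [Algebra.FiniteType k A]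
    (hK : ∀ z : K, ∃ a b : A, z = algebraMap A K a / algebraMap A K b) {p : Ideal A} [p.IsMaximal]
    {V : ValuationSubring K} (hV : IsCenteredAt V p) (hLV : ∀ c, algebraMap L K c ∈ V)
    (htr : 2 ≤ Algebra.trdeg L K) :
    ∃ (V' : ValuationSubring K) (s : K), IsCenteredAt V' p ∧ (∀ c, algebraMap L K c ∈ V') ∧
      IsResiduallyTranscendental L V' s := by
  obtain ⟨A', M, hA', hfrac, hM, himp⟩ := exists_subalgebra_isCenteredAt_imp k hK hV hLV
  have : Algebra.FiniteType L A' := A'.fg_iff_finiteType.1 hA'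
  have : IsNoetherianRing A' := Algebra.FiniteType.isNoetherianRing L A'
  have hheight : 2 ≤ M.height := by
    refine le_trans ?_ (trdeg_le_height_of_isMaximal L A' M)
    rw [trdeg_eq_of_isFractionRing]
    simpa using Cardinal.toENat.monotone' htr
  obtain ⟨V', s, hV', hs⟩ :=
    exists_isCenteredAt_isResiduallyTranscendental (L := L) (K := K) M hheight
  exact ⟨V', s, himp V' hV', fun c ↦ hV'.algebraMap_mem (algebraMap L A' c), hs⟩

theorem IsResiduallyTranscendental.adjoin_subset {V : ValuationSubring K} {s : K}
    (hs : IsResiduallyTranscendental L V s) (hLV : ∀ c, algebraMap L K c ∈ V) :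
    (IntermediateField.adjoin L {s} : Set K) ⊆ V := by
  intro z hz
  obtain ⟨P, Q, rfl⟩ := (IntermediateField.mem_adjoin_simple_iff L z).1 hz
  rw [isResiduallyTranscendental_iff hLV] at hs
  have hle (F : L[X]) : V.valuation (aeval s F) ≤ 1 := by
    by_cases hF : F = 0
    · simp [hF]
    · exact (hs F hF).le
  by_cases hQ : Q = 0
  · simp [hQ]
  · rw [SetLike.mem_coe, ← V.valuation_le_one_iff, map_div₀, hs Q hQ, div_one]
    exact hle P

theorem trdeg_adjoin_lt_of_transcendental {s : K} (hs : Transcendental L s)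
    (hfin : Algebra.trdeg L K < .aleph0) :
    Algebra.trdeg (IntermediateField.adjoin L {s}) K < Algebra.trdeg L K := by
  let E := IntermediateField.adjoin L {s}
  have hadd := trdeg_add_eq L E (A := K)
  have : Algebra.Transcendental L E :=
    ⟨⟨⟨s, IntermediateField.mem_adjoin_simple_self L s⟩, fun h ↦ hs (h.algebraMap (A := K))⟩⟩
  have hE : Algebra.trdeg E K < .aleph0 := (hadd ▸ self_le_add_left _ _).trans_lt hfin
  calc Algebra.trdeg E K < Algebra.trdeg E K + 1 := by
        obtain ⟨n, hn⟩ := Cardinal.lt_aleph0.1 hE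
        exact hn ▸ mod_cast n.lt_succ_self
    _ ≤ Algebra.trdeg L K := by
        rw [← hadd, add_comm]
        gcongr
        exact Cardinal.one_le_iff_pos.2 (trdeg_pos L E)

theorem isAlgebraic_algebraMap_of_isMaximal_of_le_ker (k : Type*) [Field k] [Algebra k A]
    [Algebra k K] [IsScalarTower k A K] [Algebra.FiniteType k A] {p : Ideal A} [p.IsMaximal]
    (hp : p ≤ RingHom.ker (algebraMap A K)) (a : A) : IsAlgebraic k (algebraMap A K a) := by
  let := Ideal.Quotient.field p
  have : Module.Finite k (A ⧸ p) := finite_of_finite_type_of_isJacobsonRing k (A ⧸ p)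
  have ha : IsIntegral k (Ideal.Quotient.mk p a) := Algebra.IsIntegral.isIntegral _
  refine ⟨minpoly k (Ideal.Quotient.mk p a), minpoly.ne_zero ha, ?_⟩
  rw [aeval_algebraMap_apply]
  refine hp (Ideal.Quotient.eq_zero_iff_mem.1 ?_)
  exact (aeval_algHom_apply (Ideal.Quotient.mkₐ k p) a _).symm.trans (minpoly.aeval _ _)

theorem ker_algebraMap_lt_of_isMaximal (k : Type*) [Field k] [Algebra k A] [Algebra k K]
    [IsScalarTower k A K] [Algebra.FiniteType k A] [Algebra.Transcendental k K]
    (hK : ∀ z : K, ∃ a b : A, z = algebraMap A K a / algebraMap A K b) {p : Ideal A} [p.IsMaximal]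
    (hp : RingHom.ker (algebraMap A K) ≤ p) : RingHom.ker (algebraMap A K) < p := by
  refine hp.lt_of_not_ge fun hpker ↦ ?_
  have halg := isAlgebraic_algebraMap_of_isMaximal_of_le_ker k hpker
  obtain ⟨z, hz⟩ := Algebra.Transcendental.transcendental (R := k) (A := K)
  obtain ⟨a, b, rfl⟩ := hK z
  exact hz (div_eq_mul_inv (algebraMap A K a) _ ▸ (halg a).mul (halg b).inv)

theorem trdeg_lt_aleph0_of_isCenteredAt (k : Type*) [Field k] [Algebra k L] [Algebra k A]
    [Algebra k K] [IsScalarTower k L K] [IsScalarTower k A K] [Algebra.FiniteType k A]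
    (hK : ∀ z : K, ∃ a b : A, z = algebraMap A K a / algebraMap A K b) {p : Ideal A} [p.IsMaximal]
    {V : ValuationSubring K} (hV : IsCenteredAt V p) (hLV : ∀ c, algebraMap L K c ∈ V) :
    Algebra.trdeg L K < .aleph0 := by
  obtain ⟨A', M, hA', hfrac, -, -⟩ := exists_subalgebra_isCenteredAt_imp k hK hV hLV
  have : Algebra.FiniteType L A' := A'.fg_iff_finiteType.1 hA'
  exact trdeg_eq_of_isFractionRing A' ▸ trdeg_lt_aleph0_of_finiteType

theorem trdeg_ne_zero_of_isCenteredAt (k : Type*) [Field k] [Algebra k A] [Algebra k K]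
    [IsScalarTower k A K] [Algebra.FiniteType k A] [Algebra.Transcendental k K]
    (hK : ∀ z : K, ∃ a b : A, z = algebraMap A K a / algebraMap A K b) {p : Ideal A} [p.IsMaximal]
    {V : ValuationSubring K} (hV : IsCenteredAt V p) (hLV : ∀ c, algebraMap L K c ∈ V) :
    Algebra.trdeg L K ≠ 0 := by
  intro htr
  have : Algebra.IsAlgebraic L K := trdeg_eq_zero_iff.1 htr
  exact hV.ne_top (ker_algebraMap_lt_of_isMaximal k hK hV.ker_le)
    (top_le_iff.1 fun z _ ↦ mem_of_isIntegral hLV (Algebra.IsIntegral.isIntegral (R := L) z))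

theorem exists_intermediateField_trdeg_eq_one {k : Type*} [Field k] [Algebra k A] [Algebra k K]
    [IsScalarTower k A K] [Algebra.FiniteType k A] [Algebra.Transcendental k K]
    (hKA : ∀ z : K, ∃ a b : A, z = algebraMap A K a / algebraMap A K b)
    {B : Type*} [CommRing B] [Algebra k B] [Algebra B K]
    [IsScalarTower k B K] [Algebra.FiniteType k B]
    (hKB : ∀ z : K, ∃ a b : B, z = algebraMap B K a / algebraMap B K b)
    {p : Ideal A} [p.IsMaximal] (hp : RingHom.ker (algebraMap A K) ≤ p)
    {q : Ideal B} [q.IsMaximal] (hq : RingHom.ker (algebraMap B K) ≤ q) :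
    ∃ L : IntermediateField k K, Algebra.trdeg L K = 1 ∧
      (∃ V, IsCenteredAt V p ∧ ∀ c, algebraMap L K c ∈ V) ∧
      ∃ W, IsCenteredAt W q ∧ ∀ c, algebraMap L K c ∈ W := by
  let good : Set (IntermediateField k K) := { L |
    (∃ V, IsCenteredAt V p ∧ ∀ c, algebraMap L K c ∈ V) ∧
      ∃ W, IsCenteredAt W q ∧ ∀ c, algebraMap L K c ∈ W }
  have hbot : ⊥ ∈ good := by
    obtain ⟨V, hV⟩ := exists_isCenteredAt p hp
    obtain ⟨W, hW⟩ := exists_isCenteredAt q hq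
    refine ⟨⟨V, hV, fun c ↦ ?_⟩, ⟨W, hW, fun c ↦ ?_⟩⟩ <;>
      obtain ⟨c, hc⟩ := IntermediateField.mem_bot.1 c.2 <;>
      rw [IntermediateField.algebraMap_apply, ← hc]
    · exact IsScalarTower.algebraMap_apply k A K c ▸ hV.algebraMap_mem _
    · exact IsScalarTower.algebraMap_apply k B K c ▸ hW.algebraMap_mem _
  obtain ⟨L, ⟨⟨V, hV, hLV⟩, W, hW, hLW⟩, hmin⟩ :=
    (InvImage.wf (fun L : IntermediateField k K ↦ Algebra.trdeg L K) Cardinal.lt_wf).has_min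
      good ⟨⊥, hbot⟩
  have hfin := trdeg_lt_aleph0_of_isCenteredAt k hKA hV hLV
  have hlt : Algebra.trdeg L K < 2 := by
    by_contra! htr
    obtain ⟨V', s, hV', hLV', hs⟩ :=
      exists_isResiduallyTranscendental_of_two_le_trdeg k hKA hV hLV htr
    obtain ⟨W', t, hW', hLW', ht⟩ :=
      exists_isResiduallyTranscendental_of_two_le_trdeg k hKB hW hLW htr
    obtain ⟨r, hrV, hrW⟩ := hs.exists_common hLV' ht hLW'
    have hL' : (IntermediateField.adjoin L {r}).restrictScalars k ∈ good :=
      ⟨⟨V', hV', fun c ↦ hrV.adjoin_subset hLV' c.2⟩, W', hW', fun c ↦ hrW.adjoin_subset hLW' c.2⟩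
    have hdrop := trdeg_adjoin_lt_of_transcendental (hrV.transcendental hLV') hfin
    exact hmin _ hL' hdrop
  have hne := trdeg_ne_zero_of_isCenteredAt k hKA hV hLV
  refine ⟨L, ?_, ⟨V, hV, hLV⟩, W, hW, hLW⟩
  generalize Algebra.trdeg L K = n at *
  lift n to ℕ using hfin
  norm_cast at *
  omega

end Descent

section Pade

/-- Simultaneous Padé approximation of the `w i` by fractions with common denominator `f`. -/
theorem exists_forall_X_pow_dvd_sub_mul {L ι : Type*} [Field L] [Fintype ι] {w : ι → L[X]} {i₀ : ι}
    (hw : ¬ X ∣ w i₀) {e N : ℕ} (h : Fintype.card ι * N < e + N) :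
    ∃ (c : ι → L[X]) (f : L[X]), c ≠ 0 ∧ (∀ i, (c i).degree < e) ∧
      ∀ i, X ^ (e + N) ∣ c i - f * w i := by
  let highCoeffs : degreeLT L (e + N) →ₗ[L] ι → Fin N → L :=
    LinearMap.pi fun i ↦ LinearMap.pi fun l ↦
      (lcoeff L (e + l)) ∘ₗ (LinearMap.mulRight L (w i)) ∘ₗ (degreeLT L (e + N)).subtype
  have hker : LinearMap.ker highCoeffs ≠ ⊥ := by
    have : FiniteDimensional L (degreeLT L (e + N)) := (degreeLTEquiv L _).symm.finiteDimensional
    apply LinearMap.ker_ne_bot_of_finrank_lt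
    rw [(degreeLTEquiv L _).finrank_eq]
    simpa [Module.finrank_pi_fintype] using h
  obtain ⟨⟨f, hfdeg⟩, hf, hf0⟩ := (Submodule.ne_bot_iff _).1 hker
  have hcoeff (i : ι) (l : Fin N) : (f * w i).coeff (e + l) = 0 :=
    congrFun (congrFun hf i) l
  let c (i : ι) : L[X] := ((f * w i : L[X]) : PowerSeries L).trunc e
  have hdvd (i : ι) : X ^ (e + N) ∣ c i - f * w i := by
    refine X_pow_dvd_iff.2 fun l hl ↦ ?_
    rw [coeff_sub, PowerSeries.coeff_trunc, coeff_coe]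
    split_ifs with hle
    · exact sub_self _
    · rw [← Nat.add_sub_cancel' (not_lt.1 hle), hcoeff i ⟨l - e, by omega⟩, sub_zero]
  refine ⟨c, f, fun hc ↦ hf0 ?_, fun i ↦ PowerSeries.degree_trunc_lt _ _, hdvd⟩
  have hdvd₀ := hdvd i₀
  rw [hc, Pi.zero_apply, zero_sub, dvd_neg] at hdvd₀
  exact Subtype.ext (eq_zero_of_dvd_of_degree_lt (prime_X.pow_dvd_of_dvd_mul_right _ hw hdvd₀)
    ((mem_degreeLT.1 hfdeg).trans_eq (degree_X_pow _).symm))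

theorem exists_notMem_forall_mul_pow_eq_zero {R : Type*} [CommRing R] [IsArtinianRing R]
    (p : Ideal R) [p.IsPrime] : ∃ j ∉ p, ∃ n, ∀ z ∈ p, j * z ^ n = 0 := by
  obtain ⟨n, hn⟩ := IsArtinian.monotone_stabilizes
    ⟨fun n ↦ OrderDual.toDual (p ^ n), fun _ _ h ↦ Ideal.pow_le_pow_right h⟩
  have hle : p ^ n ≤ p • p ^ n := by
    rw [smul_eq_mul, ← pow_succ']
    exact (show p ^ n = p ^ (n + 1) from hn (n + 1) n.le_succ).le
  obtain ⟨j, hj, hj0⟩ := Submodule.exists_sub_one_mem_and_smul_eq_zero_of_fg_of_le_smul p (p ^ n)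
    (IsNoetherian.noetherian _) hle
  refine ⟨j, fun hjp ↦ ?_, n, fun z hz ↦ hj0 _ (Ideal.pow_mem_pow hz n)⟩
  exact Ideal.IsPrime.ne_top ‹_› ((Ideal.eq_top_iff_one p).2 (by simpa using sub_mem hjp hj))

theorem exists_notMem_forall_mul_pow_mem_map {L A : Type*} [Field L] [CommRing A] [Algebra L[X] A]
    [Module.Finite L[X] A] {p : Ideal A} [p.IsPrime] (hp : algebraMap L[X] A X ∈ p) :
    ∃ j ∉ p, ∃ n, ∀ z ∈ p, algebraMap L[X] A X ∣ j * z ^ n := by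
  let I := (Ideal.span {(X : L[X])}).map (algebraMap L[X] A)
  have hI : I = Ideal.span {algebraMap L[X] A X} := by
    simp only [I, Ideal.map_span, Set.image_singleton]
  have hIp : I ≤ p := hI ▸ (Ideal.span_singleton_le_iff_mem p).2 hp
  have : (Ideal.span {(X : L[X])}).IsMaximal :=
    PrincipalIdealRing.isMaximal_of_irreducible irreducible_X
  let := Ideal.Quotient.field (Ideal.span {(X : L[X])})
  have : IsArtinianRing (A ⧸ I) := .of_finite (L[X] ⧸ Ideal.span {(X : L[X])}) (A ⧸ I)
  have : (p.map (Ideal.Quotient.mk I)).IsPrime :=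
    Ideal.map_isPrime_of_surjective Ideal.Quotient.mk_surjective (by rwa [Ideal.mk_ker])
  obtain ⟨j, hj, n, hjn⟩ := exists_notMem_forall_mul_pow_eq_zero (p.map (Ideal.Quotient.mk I))
  obtain ⟨j, rfl⟩ := Ideal.Quotient.mk_surjective j
  refine ⟨j, fun h ↦ hj (Ideal.mem_map_of_mem _ h), n, fun z hz ↦ ?_⟩
  rw [← Ideal.mem_span_singleton, ← hI, ← Ideal.Quotient.eq_zero_iff_mem, map_mul, map_pow]
  exact hjn _ (Ideal.mem_map_of_mem _ hz)

end Pade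

section Pole

variable {K : Type*} [Field K] {O : ValuationSubring K}

theorem valuation_inv_lt_one_of_notMem {x : K} (hx : x ∉ O) : O.valuation x⁻¹ < 1 :=
  O.mem_nonunits_iff.1 (O.mem_nonunits_iff_or.2 (.inr (by rwa [inv_inv])))

theorem mem_of_monic_of_eval_eq_zero {G : K[X]} (hG : G.Monic) (hO : ∀ i, G.coeff i ∈ O) {z : K}
    (hz : G.eval z = 0) : z ∈ O := by
  have hcoeffs : (G.coeffs : Set K) ⊆ O.toSubring := by
    intro c hc
    obtain ⟨i, -, rfl⟩ := mem_coeffs_iff.1 hc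
    exact hO i
  refine mem_of_isIntegral (R := O) (fun r ↦ r.2)
    ⟨G.toSubring O.toSubring hcoeffs, (monic_toSubring _ _ _).2 hG, ?_⟩
  rw [← hz, ← Polynomial.eval_map]
  exact congrArg (eval z) (map_toSubring _ _ _)

variable {L : Type*} [Field L]

theorem algebraMap_X_ne_zero [Algebra L[X] K] [FaithfulSMul L[X] K] : algebraMap L[X] K X ≠ 0 :=
  (map_ne_zero_iff _ (FaithfulSMul.algebraMap_injective L[X] K)).2 X_ne_zero

variable [Algebra L K]

theorem exists_valuationSubring_notMem {x : K} (hx : ¬ IsIntegral L x) :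
    ∃ O : ValuationSubring K, (∀ c, algebraMap L K c ∈ O) ∧ x ∉ O := by
  have : IsIntegrallyClosedIn (integralClosure L K).toSubring K :=
    inferInstanceAs (IsIntegrallyClosedIn (integralClosure L K) K)
  obtain ⟨O, hO, hxO⟩ := Subring.exists_le_valuationSubring_of_isIntegrallyClosedIn
    (R := (integralClosure L K).toSubring) hx
  exact ⟨O, fun c ↦ hO ((integralClosure L K).algebraMap_mem c), hxO⟩

theorem transcendental_of_valuation_lt_one {g : K} (hg : g ≠ 0) (hO : ∀ c, algebraMap L K c ∈ O)
    (h : O.valuation g < 1) : Transcendental L g := by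
  intro halg
  have hinv := mem_of_isIntegral hO halg.inv.isIntegral
  have hmul := mul_lt_one_of_lt_of_le h ((O.valuation_le_one_iff _).2 hinv)
  rw [← map_mul, mul_inv_cancel₀ hg, map_one] at hmul
  exact hmul.false

variable [Algebra L[X] K] [IsScalarTower L L[X] K]

theorem valuation_algebraMap_mul_inv_pow_lt_one (hO : ∀ c, algebraMap L K c ∈ O)
    (hX : algebraMap L[X] K X ∉ O) {f : L[X]} {n : ℕ} (hf : f.degree < n) :
    O.valuation (algebraMap L[X] K f * (algebraMap L[X] K X)⁻¹ ^ n) < 1 := by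
  have hX0 : algebraMap L[X] K X ≠ 0 := by
    intro h
    exact hX (h ▸ O.zero_mem)
  rw [f.as_sum_support_C_mul_X_pow, map_sum, Finset.sum_mul]
  refine O.valuation.map_sum_lt one_ne_zero fun i hi ↦ ?_
  have hin : i < n := by exact_mod_cast (le_degree_of_mem_supp i hi).trans_lt hf
  have hterm : algebraMap L[X] K (C (f.coeff i) * X ^ i) * (algebraMap L[X] K X)⁻¹ ^ n =
      (algebraMap L[X] K X)⁻¹ ^ (n - i) * algebraMap L K (f.coeff i) := by
    rw [map_mul, map_pow, ← Polynomial.algebraMap_eq, ← IsScalarTower.algebraMap_apply,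
      inv_pow_sub₀ hX0 hin.le, inv_pow]
    ring
  rw [hterm, map_mul, map_pow]
  exact mul_lt_one_of_lt_of_le (pow_lt_one₀ zero_le
    (valuation_inv_lt_one_of_notMem hX) (Nat.sub_ne_zero_of_lt hin))
    ((O.valuation_le_one_iff _).2 (hO _))

theorem transcendental_algebraMap_X [FaithfulSMul L[X] K] :
    Transcendental L (algebraMap L[X] K X) := by
  refine (transcendental_algebraMap_iff (FaithfulSMul.algebraMap_injective L[X] K)).2 ?_
  exact transcendental_X L

theorem algebraMap_polynomial_mem (hO : ∀ c, algebraMap L K c ∈ O)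
    (hX : algebraMap L[X] K X ∈ O) (f : L[X]) : algebraMap L[X] K f ∈ O := by
  rw [f.as_sum_support_C_mul_X_pow, map_sum]
  refine sum_mem fun i _ ↦ ?_
  rw [map_mul, map_pow, ← Polynomial.algebraMap_eq, ← IsScalarTower.algebraMap_apply]
  exact mul_mem (hO _) (pow_mem hX i)

theorem exists_forall_mul_inv_pow_mem {b : K} (hb : IsIntegral L[X] b) :
    ∃ N : ℕ, ∀ O : ValuationSubring K, (∀ c, algebraMap L K c ∈ O) → algebraMap L[X] K X ∉ O →
      ∀ n ≥ N, b * (algebraMap L[X] K X)⁻¹ ^ n ∈ O := by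
  obtain ⟨F, hF, hFb⟩ := hb
  refine ⟨(Finset.range F.natDegree).sup (fun i ↦ (F.coeff i).natDegree) + 1, fun O hO hX n hn ↦ ?_⟩
  let t := algebraMap L[X] K X
  let G := (F.map (algebraMap L[X] K)).scaleRoots (t⁻¹ ^ n)
  have hG : G.Monic := (monic_scaleRoots_iff _).2 (hF.map _)
  have hcoeff (i : ℕ) : G.coeff i ∈ O := by
    rw [coeff_scaleRoots, coeff_map, hF.natDegree_map, ← pow_mul]
    rcases lt_or_ge i F.natDegree with hi | hi
    · refine (O.valuation_le_one_iff _).1 (valuation_algebraMap_mul_inv_pow_lt_one hO hX ?_).le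
      refine degree_le_natDegree.trans_lt (Nat.cast_lt.2 ?_)
      calc (F.coeff i).natDegree
        _ ≤ (Finset.range F.natDegree).sup fun i ↦ (F.coeff i).natDegree :=
          Finset.le_sup (f := fun i ↦ (F.coeff i).natDegree) (Finset.mem_range.2 hi)
        _ < n := hn
        _ ≤ n * (F.natDegree - i) := Nat.le_mul_of_pos_right n (Nat.sub_pos_of_lt hi)
    · rw [Nat.sub_eq_zero_of_le hi, mul_zero, pow_zero, mul_one]
      rcases hi.eq_or_lt with rfl | hi
      · rw [hF.coeff_natDegree, map_one]
        exact O.one_mem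
      · rw [coeff_eq_zero_of_natDegree_lt hi, map_zero]
        exact O.zero_mem
  rw [mul_comm]
  refine mem_of_monic_of_eval_eq_zero hG hcoeff ?_
  rw [← aeval_def] at hFb
  exact scaleRoots_aeval_eq_zero (by rwa [aeval_map_algebraMap])

variable {A : Type*} [CommRing A] [Algebra L[X] A]

theorem exists_sum_smul_basis_eq {ι : Type*} [Fintype ι] (b : Module.Basis ι L[X] A) {p : Ideal A}
    [p.IsPrime] (hp : algebraMap L[X] A X ∈ p) {j : A} (hj : j ∉ p) (N : ℕ) :
    ∃ (e : ℕ) (c : ι → L[X]) (f : L[X]) (β : A), c ≠ 0 ∧ (∀ i, (c i).degree < e) ∧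
      ∑ i, c i • b i = f • j ^ (e + N) + (X : L[X]) ^ (e + N) • β := by
  let e := Fintype.card ι * N + 1
  obtain ⟨i₀, hi₀⟩ : ∃ i₀, ¬ X ∣ b.repr (j ^ (e + N)) i₀ := by
    by_contra! hX
    choose q hq using hX
    refine hj (Ideal.IsPrime.mem_of_pow_mem ‹_› (e + N) ?_)
    rw [← b.sum_repr (j ^ (e + N))]
    refine sum_mem fun i _ ↦ ?_
    rw [hq, Algebra.smul_def, map_mul, mul_assoc]
    exact p.mul_mem_right _ hp
  obtain ⟨c, f, hc0, hdeg, hdvd⟩ := exists_forall_X_pow_dvd_sub_mul (e := e) (N := N) hi₀ (by omega)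
  choose q hq using hdvd
  refine ⟨e, c, f, ∑ i, q i • b i, hc0, hdeg, ?_⟩
  rw [← b.sum_repr (j ^ (e + N)), Finset.smul_sum, Finset.smul_sum, ← Finset.sum_add_distrib]
  refine Finset.sum_congr rfl fun i _ ↦ ?_
  rw [smul_smul, smul_smul, ← add_smul, ← hq, add_sub_cancel]

variable [Algebra A K] [IsScalarTower L[X] A K]

theorem valuation_algebraMap_sum_smul_div_lt_one {ι : Type*} [Fintype ι] {b : ι → A} {N e : ℕ}
    {c : ι → L[X]} (hO : ∀ c, algebraMap L K c ∈ O) (hX : algebraMap L[X] K X ∉ O)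
    (hb : ∀ i, algebraMap A K (b i) * (algebraMap L[X] K X)⁻¹ ^ N ∈ O)
    (hc : ∀ i, (c i).degree < e) :
    O.valuation (algebraMap A K (∑ i, c i • b i) / algebraMap L[X] K X ^ (e + N)) < 1 := by
  rw [map_sum, Finset.sum_div]
  refine O.valuation.map_sum_lt one_ne_zero fun i _ ↦ ?_
  have hterm : algebraMap A K (c i • b i) / algebraMap L[X] K X ^ (e + N) =
      (algebraMap L[X] K (c i) * (algebraMap L[X] K X)⁻¹ ^ e) *
        (algebraMap A K (b i) * (algebraMap L[X] K X)⁻¹ ^ N) := by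
    rw [Algebra.smul_def, map_mul, ← IsScalarTower.algebraMap_apply, div_eq_mul_inv, pow_add,
      mul_inv, inv_pow, inv_pow]
    ring
  rw [hterm, map_mul]
  exact mul_lt_one_of_lt_of_le (valuation_algebraMap_mul_inv_pow_lt_one hO hX (hc i))
    ((O.valuation_le_one_iff _).2 (hb i))

variable [FaithfulSMul L[X] K] [Module.Finite L[X] A]

theorem isCenteredAt_of_div_pow_notMem {p : Ideal A} [p.IsMaximal] {u j β : A} {f : L[X]} {m n : ℕ}
    (hjn : ∀ z ∈ p, algebraMap L[X] A X ∣ j * z ^ n) (hu : u = f • j ^ m + (X : L[X]) ^ m • β)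
    (hO : ∀ c, algebraMap L K c ∈ O) (hX : algebraMap L[X] K X ∈ O)
    (hg : algebraMap A K u / algebraMap L[X] K X ^ m ∉ O) : IsCenteredAt O p := by
  let t := algebraMap L[X] K X
  have hA (a : A) : algebraMap A K a ∈ O :=
    mem_of_isIntegral (algebraMap_polynomial_mem hO hX) (Algebra.IsIntegral.isIntegral a).algebraMap
  refine .of_isMaximal hA fun z hz ↦ ((O.valuation_le_one_iff _).2 (hA z)).lt_of_ne fun hz1 ↦ hg ?_
  obtain ⟨w, hw⟩ := hjn z hz
  have hzu : z ^ (n * m) * u = algebraMap L[X] A X ^ m * (f • w ^ m + z ^ (n * m) * β) := by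
    calc z ^ (n * m) * u
      _ = f • (j * z ^ n) ^ m + algebraMap L[X] A X ^ m * (z ^ (n * m) * β) := by
        rw [hu, Algebra.smul_def, Algebra.smul_def, Algebra.smul_def, map_pow]
        ring
      _ = algebraMap L[X] A X ^ m * (f • w ^ m + z ^ (n * m) * β) := by
        rw [hw, Algebra.smul_def, Algebra.smul_def]
        ring
  have hzg : algebraMap A K z ^ (n * m) * (algebraMap A K u / t ^ m) =
      algebraMap A K (f • w ^ m + z ^ (n * m) * β) := by
    rw [mul_div, ← map_pow, ← map_mul, hzu, map_mul, map_pow, ← IsScalarTower.algebraMap_apply,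
      mul_div_cancel_left₀ _ (pow_ne_zero m algebraMap_X_ne_zero)]
  have hle := (O.valuation_le_one_iff _).2 (hzg ▸ hA (f • w ^ m + z ^ (n * m) * β))
  rw [map_mul, map_pow, hz1, one_pow, one_mul] at hle
  exact (O.valuation_le_one_iff _).1 hle

variable [IsDomain A] [FaithfulSMul A K]

theorem exists_transcendental_forall_isCenteredAt_of_finite {p : Ideal A} [p.IsMaximal]
    (hp : algebraMap L[X] A X ∈ p) :
    ∃ g : K, Transcendental L g ∧ ∀ O : ValuationSubring K, (∀ c, algebraMap L K c ∈ O) →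
      g ∉ O → IsCenteredAt O p := by
  have : FaithfulSMul L[X] A := .tower_bot L[X] A K
  let b := Module.finBasis L[X] A
  let t := algebraMap L[X] K X
  have hb (i) : IsIntegral L[X] (algebraMap A K (b i)) :=
    (Algebra.IsIntegral.isIntegral (b i)).algebraMap
  choose N hN using fun i ↦ exists_forall_mul_inv_pow_mem (L := L) (hb i)
  obtain ⟨j, hj, n, hjn⟩ := exists_notMem_forall_mul_pow_mem_map hp
  obtain ⟨e, c, f, β, hc, hdeg, hu⟩ := exists_sum_smul_basis_eq b hp hj (Finset.univ.sup N)
  set m := e + Finset.univ.sup N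
  /- The numerator of `g` is congruent to `f j ^ m` modulo `t ^ m`, and `j` vanishes at the zeros of
  `t` outside `p`; the degree bound on the `c i` makes `g` vanish at the poles of `t`. -/
  let g := algebraMap A K (∑ i, c i • b i) / t ^ m
  have hlt (O : ValuationSubring K) (hO : ∀ c, algebraMap L K c ∈ O) (htO : t ∉ O) :
      O.valuation g < 1 :=
    valuation_algebraMap_sum_smul_div_lt_one hO htO
      (fun i ↦ hN i O hO htO _ (Finset.le_sup (f := N) (Finset.mem_univ i))) hdeg
  have hu0 : ∑ i, c i • b i ≠ 0 := fun h ↦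
    hc (funext (Fintype.linearIndependent_iff.1 b.linearIndependent c h))
  have hg0 : g ≠ 0 := div_ne_zero
    ((map_ne_zero_iff _ (FaithfulSMul.algebraMap_injective A K)).2 hu0)
    (pow_ne_zero _ algebraMap_X_ne_zero)
  refine ⟨g, ?_, fun O hO hgO ↦ ?_⟩
  · obtain ⟨O, hO, htO⟩ := exists_valuationSubring_notMem (L := L) (x := t)
      fun h ↦ transcendental_algebraMap_X h.isAlgebraic
    exact transcendental_of_valuation_lt_one hg0 hO (hlt O hO htO)
  have htO : t ∈ O := by
    by_contra htO
    exact hgO ((O.valuation_le_one_iff _).1 (hlt O hO htO).le)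
  exact isCenteredAt_of_div_pow_notMem hjn hu hO htO hgO

end Pole

section Parameter

theorem finite_aeval_of_monic {R : Type*} [CommRing R] [Nontrivial R] {f : R[X]} (hf : f.Monic)
    (hdeg : 0 < f.natDegree) : (aeval f : R[X] →ₐ[R] R[X]).Finite := by
  let φ : R[X] →+* R[X] := (aeval f : R[X] →ₐ[R] R[X])
  have hC (c : R) : φ (C c) = C c := aeval_C f c
  have hφX : φ X = f := aeval_X f
  have hX : φ.IsIntegralElem X := by
    refine ⟨f.map C - C X, (hf.map C).sub_of_left ?_, ?_⟩
    · rw [hf.degree_map]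
      exact degree_C_le.trans_lt (natDegree_pos_iff_degree_pos.1 hdeg)
    · have hφC : φ.comp C = C := RingHom.ext hC
      rw [eval₂_sub, eval₂_map, eval₂_C, hφC, hφX, eval₂_C_X, sub_self]
  have hint : φ.IsIntegral := fun q ↦ by
    induction q using Polynomial.induction_on with
    | C a => exact hC a ▸ φ.isIntegralElem_map
    | add p q hp hq => exact hp.add _ hq
    | monomial n a h => exact pow_succ (X : R[X]) n ▸ mul_assoc (C a) _ _ ▸ h.mul _ hX
  refine RingHom.finite_iff_isIntegral_and_finiteType.2 ⟨hint, ?_⟩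
  refine RingHom.FiniteType.of_comp_finiteType (f := C) ?_
  change (φ.comp C).FiniteType
  rw [show φ.comp C = C from RingHom.ext hC]
  exact RingHom.finiteType_algebraMap.2 (inferInstanceAs (Algebra.FiniteType R R[X]))

theorem exists_mem_injective_aeval_finite (L : Type*) {A : Type*} [Field L] [CommRing A]
    [IsDomain A] [Algebra L A] [Algebra.FiniteType L A] (h : Algebra.trdeg L A = 1) (p : Ideal A)
    [p.IsMaximal] :
    ∃ t ∈ p, Function.Injective (aeval t : L[X] →ₐ[L] A) ∧ (aeval t : L[X] →ₐ[L] A).Finite := by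
  obtain ⟨n, g, hg, hgfin, hn⟩ := exists_finite_injective_mvPolynomial_trdeg_eq L A
  obtain rfl : n = 1 := by exact_mod_cast hn.symm.trans h
  let φ : L[X] →ₐ[L] A := g.comp (MvPolynomial.uniqueAlgEquiv L (Fin 1)).symm
  have hφ : Function.Injective φ := hg.comp (AlgEquiv.injective _)
  have hφfin : φ.Finite := hgfin.comp (.of_surjective _ (AlgEquiv.surjective _))
  let := Ideal.Quotient.field p
  have : Module.Finite L (A ⧸ p) := finite_of_finite_type_of_isJacobsonRing L (A ⧸ p)
  have hint : IsIntegral L (Ideal.Quotient.mkₐ L p (φ X)) := Algebra.IsIntegral.isIntegral _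
  let f := minpoly L (Ideal.Quotient.mkₐ L p (φ X))
  have hcomp : aeval (φ f) = φ.comp (aeval f) := by
    ext
    simp
  refine ⟨φ f, ?_, ?_, ?_⟩
  · rw [← Ideal.Quotient.eq_zero_iff_mem, ← Ideal.Quotient.mkₐ_eq_mk L]
    have haeval := minpoly.aeval L (Ideal.Quotient.mkₐ L p (φ X))
    rwa [aeval_algHom_apply, aeval_algHom_apply, aeval_X_left_apply] at haeval
  · rw [hcomp]
    refine hφ.comp (transcendental_iff_injective.1 (f.transcendental ?_ ?_))
    · exact (minpoly.natDegree_pos hint).ne'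
    · rw [(minpoly.monic hint).leadingCoeff]
      exact one_mem _
  · rw [hcomp]
    exact hφfin.comp (finite_aeval_of_monic (minpoly.monic hint) (minpoly.natDegree_pos hint))

theorem exists_transcendental_forall_isCenteredAt_of_isMaximal {L A K : Type*} [Field L]
    [CommRing A] [Field K] [Algebra L A] [Algebra L K] [Algebra A K] [IsScalarTower L A K]
    [Algebra.FiniteType L A] [IsDomain A] [FaithfulSMul A K] (h : Algebra.trdeg L A = 1)
    (p : Ideal A) [p.IsMaximal] :
    ∃ g : K, Transcendental L g ∧ ∀ O : ValuationSubring K, (∀ c, algebraMap L K c ∈ O) →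
      g ∉ O → IsCenteredAt O p := by
  obtain ⟨t, ht, hinj, hfin⟩ := exists_mem_injective_aeval_finite L h p
  let φ : L[X] →ₐ[L] A := aeval t
  algebraize [φ.toRingHom, (algebraMap A K).comp φ.toRingHom]
  have : Module.Finite L[X] A := hfin
  have : IsScalarTower L L[X] K := .of_algebraMap_eq fun c ↦ by
    rw [IsScalarTower.algebraMap_apply L A K, ← φ.commutes]
    rfl
  have : FaithfulSMul L[X] K := (faithfulSMul_iff_algebraMap_injective _ _).2
    ((FaithfulSMul.algebraMap_injective A K).comp hinj)
  have hX : algebraMap L[X] A X ∈ p := (aeval_X (R := L) t).symm ▸ ht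
  exact exists_transcendental_forall_isCenteredAt_of_finite hX

end Parameter

section Finiteness

variable {k A K : Type*} [Field k] [CommRing A] [Field K] [Algebra k A] [Algebra k K] [Algebra A K]
  [IsScalarTower k A K]

theorem algebraMap_mem_of_adjoin_eq_top {O : ValuationSubring K}
    (hO : ∀ c, algebraMap k K c ∈ O) {G : Set A} (hG : Algebra.adjoin k G = ⊤)
    (hGO : ∀ a ∈ G, algebraMap A K a ∈ O) (a : A) : algebraMap A K a ∈ O := by
  let O' : Subalgebra k K := { O.toSubring with algebraMap_mem' := hO }
  have hle : Algebra.adjoin k G ≤ O'.comap (IsScalarTower.toAlgHom k A K) :=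
    Algebra.adjoin_le hGO
  exact hle (hG ▸ Algebra.mem_top)

variable {L : Type*} [Field L] [Algebra L K]

theorem exists_transcendental_forall_isCenteredAt [Algebra k L] [IsScalarTower k L K]
    [Algebra.FiniteType k A]
    (hK : ∀ z : K, ∃ a b : A, z = algebraMap A K a / algebraMap A K b) {p : Ideal A} [p.IsMaximal]
    (htr : Algebra.trdeg L K = 1) {V : ValuationSubring K} (hV : IsCenteredAt V p)
    (hLV : ∀ c, algebraMap L K c ∈ V) :
    ∃ g : K, Transcendental L g ∧ ∀ O : ValuationSubring K, (∀ c, algebraMap L K c ∈ O) →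
      g ∉ O → IsCenteredAt O p := by
  obtain ⟨A', M, hA', hfrac, hM, himp⟩ := exists_subalgebra_isCenteredAt_imp k hK hV hLV
  have : Algebra.FiniteType L A' := A'.fg_iff_finiteType.1 hA'
  obtain ⟨g, hg, hgM⟩ := exists_transcendental_forall_isCenteredAt_of_isMaximal (K := K)
    ((trdeg_eq_of_isFractionRing A').trans htr) M
  exact ⟨g, hg, fun O hO hgO ↦ himp O (hgM O hO hgO)⟩

theorem exists_finset_forall_isCenteredAt [Algebra.FiniteType k A] {S : Set K} {g : K} {p : Ideal A}
    [p.IsMaximal] (hg : ∀ O : ValuationSubring K, S ⊆ O → g ∉ O → IsCenteredAt O p) :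
    ∃ F : Finset K, ↑F ⊆ S ∧ ∀ O : ValuationSubring K, (∀ c, algebraMap k K c ∈ O) →
      (F : Set K) ⊆ O → g ∉ O → IsCenteredAt O p := by
  have : IsNoetherianRing A := Algebra.FiniteType.isNoetherianRing k A
  obtain ⟨G, hG⟩ := Algebra.FiniteType.out (R := k) (A := A)
  obtain ⟨P, hP⟩ := (isNoetherianRing_iff_ideal_fg A).1 this p
  let U : Set (ValuationSubring K) := {O | g ∈ O} ∪
    ((⋂ a ∈ G, {O | algebraMap A K a ∈ O}) ∩ ⋂ z ∈ P, {O | O.valuation (algebraMap A K z) < 1})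
  have hU : IsClopen U := (isClopen_setOf_mem g).union
    ((isClopen_biInter_finset fun a _ ↦ isClopen_setOf_mem _).inter
      (isClopen_biInter_finset fun z _ ↦ isClopen_setOf_valuation_lt_one _))
  obtain ⟨F, hFS, hF⟩ := exists_finset_forall_of_isOpen (S := S) hU.isOpen fun O hSO ↦ by
    refine or_iff_not_imp_left.2 fun hgO ↦ ?_
    have hO := hg O hSO hgO
    exact ⟨Set.mem_iInter₂.2 fun a _ ↦ hO.algebraMap_mem a,
      Set.mem_iInter₂.2 fun z hz ↦ (hO.valuation_lt_one_iff z).2 (hP ▸ Ideal.subset_span hz)⟩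
  refine ⟨F, hFS, fun O hkO hFO hgO ↦ ?_⟩
  obtain ⟨hGO, hPO⟩ := (hF O hFO).resolve_left hgO
  have hA := algebraMap_mem_of_adjoin_eq_top hkO hG (Set.mem_iInter₂.1 hGO)
  refine .of_isMaximal hA fun z hz ↦ ?_
  rw [← hP] at hz
  induction hz using Submodule.span_induction with
  | mem z hz => exact Set.mem_iInter₂.1 hPO z hz
  | zero => simp
  | add y z _ _ hy hz => exact (map_add (algebraMap A K) y z) ▸ O.valuation.map_add_lt hy hz
  | smul a z _ hz =>
    rw [smul_eq_mul, map_mul, map_mul, mul_comm]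
    exact mul_lt_one_of_lt_of_le hz ((O.valuation_le_one_iff _).2 (hA a))

theorem isOpen_setOf_forall_coeff {R Y : Type*} [Semiring R] [TopologicalSpace Y] (F : R[X])
    {P : R → Y → Prop} (hP0 : ∀ y, P 0 y) (hP : ∀ a, IsOpen {y | P a y}) :
    IsOpen {y | ∀ i, P (F.coeff i) y} := by
  convert isOpen_biInter_finset (s := F.support) fun i _ ↦ hP (F.coeff i) using 1
  ext y
  refine ⟨fun h ↦ Set.mem_iInter₂.2 fun i _ ↦ h i, fun h i ↦ ?_⟩
  by_cases hi : i ∈ F.support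
  · exact Set.mem_iInter₂.1 h i hi
  · exact notMem_support_iff.1 hi ▸ hP0 y

theorem isOpen_setOf_forall_algebraMap_coeff_mem (F : L[X]) :
    IsOpen {O : ValuationSubring K | ∀ i, algebraMap L K (F.coeff i) ∈ O} :=
  isOpen_setOf_forall_coeff F (P := fun c O ↦ algebraMap L K c ∈ O)
    (fun O ↦ by simp [O.zero_mem]) fun _ ↦ (isClopen_setOf_mem _).isOpen

theorem isClosed_setOf_isResiduallyTranscendental (g : K) :
    IsClosed {O : ValuationSubring K | IsResiduallyTranscendental L O g} := by
  have hcoeff (F : L[X]) := isOpen_setOf_forall_algebraMap_coeff_mem (K := K) F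
  have hprimitive (F : L[X]) :
      IsOpen {O : ValuationSubring K | ∃ i, O.valuation (algebraMap L K (F.coeff i)) = 1} :=
    Set.ofPred_exists _ ▸ isOpen_iUnion fun i ↦ (isClopen_setOf_valuation_eq_one _).isOpen
  have hclosed (F : L[X]) := isClosed_imp (hcoeff F)
    (isClosed_imp (hprimitive F) (isClopen_setOf_valuation_eq_one (aeval g F)).isClosed)
  exact Set.ofPred_forall _ ▸ isClosed_iInter hclosed

theorem IsResiduallyTranscendental.eq_top {O : ValuationSubring K} {g : K}
    (hg : IsResiduallyTranscendental L O g) (htr : Algebra.trdeg L K = 1)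
    (hLO : ∀ c, algebraMap L K c ∈ O) : O = ⊤ := by
  have hlt := trdeg_adjoin_lt_of_transcendental (hg.transcendental hLO)
    (htr ▸ Cardinal.one_lt_aleph0)
  have : Algebra.IsAlgebraic (IntermediateField.adjoin L {g}) K :=
    trdeg_eq_zero_iff.1 (Cardinal.lt_one_iff.1 (htr ▸ hlt))
  refine top_le_iff.1 fun z _ ↦ mem_of_isIntegral (R := IntermediateField.adjoin L {g})
    (fun c ↦ hg.adjoin_subset hLO c.2) (Algebra.IsIntegral.isIntegral z)

theorem exists_finset_forall_mem_of_isResiduallyTranscendental (htr : Algebra.trdeg L K = 1) (g : K)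
    (R : Finset K) : ∃ F : Finset K, ↑F ⊆ Set.range (algebraMap L K) ∧
      ∀ O : ValuationSubring K, (F : Set K) ⊆ O → IsResiduallyTranscendental L O g →
        ∀ r ∈ R, r ∈ O := by
  have hR : IsOpen ({O : ValuationSubring K | IsResiduallyTranscendental L O g}ᶜ ∪
      ⋂ r ∈ R, {O | r ∈ O}) :=
    (isClosed_setOf_isResiduallyTranscendental g).isOpen_compl.union
      (isClopen_biInter_finset fun r _ ↦ isClopen_setOf_mem r).isOpen
  obtain ⟨F, hFL, hF⟩ := exists_finset_forall_of_isOpen hR fun O hLO ↦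
    or_iff_not_imp_left.2 fun hg ↦ Set.mem_iInter₂.2 fun r _ ↦ by
      rw [(not_not.1 hg).eq_top htr (Set.range_subset_iff.1 hLO)]
      trivial
  exact ⟨F, hFL, fun O hFO hg ↦ Set.mem_iInter₂.1 ((hF O hFO).resolve_left (not_not.2 hg))⟩

end Finiteness

section ResidueField

variable {K : Type*} [Field K] {O W : ValuationSubring K}

theorem exists_le_of_not_isIntegral {R : Subring K} (hRO : R ≤ O.toSubring)
    (hR : ∀ z, O.valuation z < 1 → z ∈ R) {g : K} (hg : ¬ IsIntegral R g) :
    ∃ W ≤ O, R ≤ W.toSubring ∧ g ∉ W := by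
  by_cases hgO : g ∈ O
  swap
  · exact ⟨O, le_rfl, hRO, hgO⟩
  let T := (integralClosure R K).toSubring
  have hRT (z : K) (hz : z ∈ R) : z ∈ T := isIntegral_algebraMap (x := (⟨z, hz⟩ : R))
  have : IsIntegrallyClosedIn T K :=
    inferInstanceAs (IsIntegrallyClosedIn (integralClosure R K) K)
  obtain ⟨W, hTW, hgW⟩ := Subring.exists_le_valuationSubring_of_isIntegrallyClosedIn
    (R := T) (x := g) hg
  refine ⟨W, fun x hxW ↦ by_contra fun hxO ↦ hgW ?_, fun z hz ↦ hTW (hRT z hz), hgW⟩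
  have hx0 : x ≠ 0 := by rintro rfl; exact hxO O.zero_mem
  have hlt : O.valuation (x⁻¹ * g) < 1 := by
    rw [map_mul]
    exact mul_lt_one_of_lt_of_le (valuation_inv_lt_one_of_notMem hxO)
      ((O.valuation_le_one_iff g).2 hgO)
  simpa [hx0] using W.mul_mem _ _ hxW (hTW (hRT _ (hR _ hlt)))

theorem valuation_lt_one_of_le (hWO : W ≤ O) {z : K} (hz : O.valuation z < 1) : W.valuation z < 1 :=
  W.mem_nonunits_iff.1 (ValuationSubring.nonunits_le_nonunits.2 hWO (O.mem_nonunits_iff.2 hz))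

/- If `v_W y ≠ 1`, then the terms of `∑ cᵢ yⁱ` with `v_W cᵢ = 1` have distinct `v_W`-values, and the
largest of them dominates all other terms. -/
theorem valuation_eq_one_of_eval_eq_zero (hWO : W ≤ O) {G : K[X]} {y : K}
    (hG : ∀ i, O.valuation (G.coeff i) < 1 ∨ W.valuation (G.coeff i) = 1)
    (hG1 : ∃ i, W.valuation (G.coeff i) = 1) (hy : O.valuation y = 1) (hGy : G.eval y = 0) :
    W.valuation y = 1 := by
  classical
  by_contra hy1
  have hy0 : y ≠ 0 := by rintro rfl; simp at hy
  have hv0 : 0 < W.valuation y := (Valuation.pos_iff _).2 hy0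
  have hsupp {j : ℕ} (hj : W.valuation (G.coeff j) = 1) : j ∈ G.support :=
    mem_support_iff.2 fun h ↦ by simp [h] at hj
  obtain ⟨i, hi, hmax⟩ := (G.support.filter fun j ↦ W.valuation (G.coeff j) = 1).exists_max_image
    (fun j ↦ W.valuation y ^ j) (hG1.imp fun j hj ↦ Finset.mem_filter.2 ⟨hsupp hj, hj⟩)
  obtain ⟨hiG, hi1⟩ := Finset.mem_filter.1 hi
  have hdom (j : ℕ) (hj : j ∈ G.support \ {i}) :
      W.valuation (G.coeff j * y ^ j) < W.valuation (G.coeff i * y ^ i) := by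
    obtain ⟨hjG, hji⟩ := Finset.mem_sdiff.1 hj
    rw [map_mul _ (G.coeff i), hi1, one_mul, map_pow]
    obtain hcj | hcj := hG j
    · rw [← div_lt_one₀ (pow_pos hv0 i), ← map_pow, ← map_div₀]
      exact valuation_lt_one_of_le hWO (by simpa [hy] using hcj)
    · rw [map_mul, hcj, one_mul, map_pow]
      refine (hmax j (Finset.mem_filter.2 ⟨hjG, hcj⟩)).lt_of_ne fun h ↦ ?_
      exact Finset.notMem_singleton.1 hji (pow_right_injective₀ hv0 hy1 h)
  have hsum := W.valuation.map_sum_eq_of_lt hiG hdom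
  rw [show ∑ j ∈ G.support, G.coeff j * y ^ j = 0 from eval_eq_sum.symm.trans hGy, map_zero,
    map_mul, hi1, one_mul, map_pow] at hsum
  exact (pow_pos hv0 i).ne hsum

/-- The elements of `O` whose residue lies in the residue field of `O ∩ L`. Integrality over it
means integrality of the residue over that field. -/
def residueSubring (L : Type*) [Field L] [Algebra L K] (O : ValuationSubring K) : Subring K where
  carrier := {z | ∃ c : L, algebraMap L K c ∈ O ∧ O.valuation (z - algebraMap L K c) < 1}
  zero_mem' := ⟨0, by simp [O.zero_mem]⟩
  one_mem' := ⟨1, by simp [O.one_mem]⟩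
  add_mem' := by
    rintro y z ⟨b, hb, hyb⟩ ⟨c, hc, hzc⟩
    refine ⟨b + c, by simpa using O.add_mem _ _ hb hc, ?_⟩
    rw [map_add, add_sub_add_comm]
    exact O.valuation.map_add_lt hyb hzc
  neg_mem' := by
    rintro z ⟨c, hc, hzc⟩
    refine ⟨-c, by simpa using hc, ?_⟩
    rwa [map_neg, neg_sub_neg, Valuation.map_sub_swap]
  mul_mem' := by
    rintro y z ⟨b, hb, hyb⟩ ⟨c, hc, hzc⟩
    refine ⟨b * c, by simpa using O.mul_mem _ _ hb hc, ?_⟩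
    have hy : y ∈ O := by
      simpa using O.add_mem _ _ ((O.valuation_le_one_iff _).1 hyb.le) hb
    rw [map_mul, show y * z - algebraMap L K b * algebraMap L K c =
      (z - algebraMap L K c) * y + (y - algebraMap L K b) * algebraMap L K c by ring]
    refine O.valuation.map_add_lt ?_ ?_ <;> rw [map_mul]
    · exact mul_lt_one_of_lt_of_le hzc ((O.valuation_le_one_iff _).2 hy)
    · exact mul_lt_one_of_lt_of_le hyb ((O.valuation_le_one_iff _).2 hc)

variable {L : Type*} [Field L] [Algebra L K]

theorem residueSubring_le : residueSubring L O ≤ O.toSubring := fun _ ⟨_, hc, hzc⟩ ↦ by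
  simpa using O.add_mem _ _ ((O.valuation_le_one_iff _).1 hzc.le) hc

theorem mem_residueSubring_of_valuation_lt_one {z : K} (hz : O.valuation z < 1) :
    z ∈ residueSubring L O :=
  ⟨0, by simp [O.zero_mem], by simpa⟩

theorem algebraMap_mem_residueSubring {c : L} (hc : algebraMap L K c ∈ O) :
    algebraMap L K c ∈ residueSubring L O :=
  ⟨c, hc, by simp⟩

theorem valuation_lt_one_or_eq_one_of_mem_residueSubring (hWO : W ≤ O)
    (hLW : residueSubring L O ≤ W.toSubring) {z : K} (hz : z ∈ residueSubring L O) :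
    O.valuation z < 1 ∨ W.valuation z = 1 := by
  obtain ⟨c, hc, hzc⟩ := hz
  obtain hc1 | hc1 := ((O.valuation_le_one_iff _).2 hc).lt_or_eq
  · exact .inl (by simpa using O.valuation.map_add_lt hzc hc1)
  have hcW : W.valuation (algebraMap L K c) ≤ 1 :=
    (W.valuation_le_one_iff _).2 (hLW (algebraMap_mem_residueSubring hc))
  have hinvO : algebraMap L K c⁻¹ ∈ O := by
    rw [← O.valuation_le_one_iff, map_inv₀, map_inv₀, hc1, inv_one]
  have hinvW : W.valuation (algebraMap L K c⁻¹) ≤ 1 :=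
    (W.valuation_le_one_iff _).2 (hLW (algebraMap_mem_residueSubring hinvO))
  have hc0 : algebraMap L K c ≠ 0 := fun h ↦ by simp [h] at hc1
  rw [map_inv₀, map_inv₀, inv_le_one₀ ((Valuation.pos_iff _).2 hc0)] at hinvW
  have hcW1 := hcW.antisymm hinvW
  refine .inr ?_
  rw [← sub_add_cancel z (algebraMap L K c),
    W.valuation.map_add_eq_of_lt_right (hcW1.symm ▸ valuation_lt_one_of_le hWO hzc), hcW1]

theorem IsResiduallyTranscendental.not_isIntegral {g : K}
    (hg : IsResiduallyTranscendental L O g) : ¬ IsIntegral (residueSubring L O) g := by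
  rintro ⟨P, hP, hPg⟩
  choose c hc hPc using fun i ↦ (P.coeff i).2
  let F : L[X] := ∑ i ∈ Finset.range (P.natDegree + 1), monomial i (c i)
  have hF (i : ℕ) : F.coeff i = if i ≤ P.natDegree then c i else 0 := by
    simp [F, coeff_monomial]
  have hFO (i : ℕ) : algebraMap L K (F.coeff i) ∈ O := by
    rw [hF]
    split_ifs
    exacts [hc i, by simp [O.zero_mem]]
  have hlead : O.valuation (algebraMap L K (F.coeff P.natDegree)) = 1 := by
    have h1 : O.valuation (1 - algebraMap L K (c P.natDegree)) < 1 := by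
      simpa [hP.coeff_natDegree] using hPc P.natDegree
    rw [hF, if_pos le_rfl, ← O.valuation.map_one, ← sub_sub_cancel 1 (algebraMap L K _)]
    exact O.valuation.map_sub_eq_of_lt_left (by simpa using h1)
  have hsub : aeval g F =
      -∑ i ∈ Finset.range (P.natDegree + 1), (P.coeff i - algebraMap L K (c i)) * g ^ i := by
    have hPg' : ∑ i ∈ Finset.range (P.natDegree + 1), (P.coeff i : K) * g ^ i = 0 :=
      (eval₂_eq_sum_range ..).symm.trans hPg
    simp_rw [sub_mul, Finset.sum_sub_distrib, hPg']
    simp [F, aeval_monomial]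
  refine (hg F hFO ⟨_, hlead⟩).not_lt ?_
  rw [hsub, Valuation.map_neg]
  refine O.valuation.map_sum_lt one_ne_zero fun i _ ↦ ?_
  rw [map_mul, map_pow, hg.valuation_eq_one, one_pow, mul_one]
  exact hPc i

end ResidueField

section GaussExtension

variable {L K : Type*} [Field L] [Field K] [Algebra L K]

theorem exists_comap_eq_isResiduallyTranscendental (V : ValuationSubring L) {g : K}
    (hg : Transcendental L g) :
    ∃ O : ValuationSubring K, O.comap (algebraMap L K) = V ∧ IsResiduallyTranscendental L O g := by
  let φ : V[X] →+* K := (aeval g : L[X] →ₐ[L] K).toRingHom.comp (mapRingHom V.subtype)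
  have hφ : Function.Injective φ := (transcendental_iff_injective.1 hg).comp
    (map_injective _ V.subtype_injective)
  let := φ.toAlgebra
  let P : Ideal V[X] := (IsLocalRing.maximalIdeal V).map C
  obtain ⟨O, hO⟩ := exists_isCenteredAt (K := K) P
    (((RingHom.injective_iff_ker_eq_bot _).1 hφ).trans_le bot_le)
  have hC (c : V) : algebraMap V[X] K (C c) = algebraMap L K c := by
    simp [RingHom.algebraMap_toAlgebra, φ]
  have hVO (c : L) : algebraMap L K c ∈ O ↔ c ∈ V := by
    refine ⟨fun hcO ↦ by_contra fun hcV ↦ ?_, fun hc ↦ hC ⟨c, hc⟩ ▸ hO.algebraMap_mem _⟩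
    obtain ⟨hc, hcm⟩ := V.mem_nonunits_iff_exists_mem_maximalIdeal.1
      (V.mem_nonunits_iff.2 (valuation_inv_lt_one_of_notMem hcV))
    have hlt := (hO.valuation_lt_one_iff _).2 (Ideal.mem_map_of_mem C hcm)
    rw [hC, ← O.mem_nonunits_iff, map_inv₀] at hlt
    exact (O.inv_mem_nonunits_iff.1 hlt).elim (fun h ↦ hcV ((map_eq_zero _).1 h ▸ V.zero_mem))
      (· hcO)
  refine ⟨O, SetLike.ext hVO, fun F hF ⟨i, hi⟩ ↦ ?_⟩
  obtain ⟨F, rfl⟩ := (mem_lifts F).1 ((lifts_iff_coeff_lifts (f := V.subtype) F).2 fun n ↦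
    ⟨⟨F.coeff n, (hVO _).1 (hF n)⟩, rfl⟩)
  refine ((O.valuation_le_one_iff _).2 (hO.algebraMap_mem F)).antisymm (le_of_not_gt fun hlt ↦ ?_)
  have hFi := Ideal.mem_map_C_iff.1 ((hO.valuation_lt_one_iff F).1 hlt) i
  have hCi := (hO.valuation_lt_one_iff _).2 (Ideal.mem_map_of_mem C hFi)
  rw [hC] at hCi
  exact hCi.ne (by simpa using hi)

end GaussExtension

section Relation

variable {L K : Type*} [Field L] [Field K] [Algebra L K]

theorem exists_contentIdeal_eq_top_eval₂_eq_zero (htr : Algebra.trdeg L K = 1) {g : K}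
    (hg : Transcendental L g) (z : K) : ∃ F : L[X][X],
      F.contentIdeal = ⊤ ∧ F.eval₂ (aeval g : L[X] →ₐ[L] K).toRingHom z = 0 := by
  have hbasis := (algebraicIndependent_unique_type_iff (ι := PUnit) (x := fun _ ↦ g)
    |>.2 hg).isTranscendenceBasis_of_trdeg_le_of_finite (by simp [htr])
  have halg := hbasis.isAlgebraic
  rw [Set.range_const, Algebra.adjoin_singleton_eq_range_aeval] at halg
  let := (aeval g : L[X] →ₐ[L] K).toRingHom.toAlgebra
  have hz : IsAlgebraic L[X] z :=
    (halg.isAlgebraic z).of_ringHom_of_comp_eq (aeval g : L[X] →ₐ[L] K).rangeRestrict.toRingHom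
      (RingHom.id K) (aeval g : L[X] →ₐ[L] K).rangeRestrict_surjective Function.injective_id rfl
  obtain ⟨F, hF, hFz⟩ := hz
  let : NormalizedGCDMonoid L[X] := Classical.choice inferInstance
  have : FaithfulSMul L[X] K :=
    (faithfulSMul_iff_algebraMap_injective _ _).2 (transcendental_iff_injective.1 hg)
  refine ⟨F.primPart, ?_, aeval_primPart_eq_zero hF hFz⟩
  exact (isPrimitive_iff_contentIdeal_eq_top _).1 F.isPrimitive_primPart

end Relation

section NotIntegral

variable {L K : Type*} [Field L] [Field K] [Algebra L K]

theorem exists_valuation_aeval_coeff_eq_one {F : L[X][X]} (hF : F.contentIdeal = ⊤) {g : K}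
    {O : ValuationSubring K} (hLO : ∀ c, algebraMap L K c ∈ O) (hg : g ∈ O) :
    ∃ i, O.valuation (aeval g (F.coeff i)) = 1 := by
  have hmem (P : L[X]) : O.valuation (aeval g P) ≤ 1 := by
    rw [O.valuation_le_one_iff, aeval_eq_sum_range]
    refine O.toSubring.sum_mem fun i _ ↦ ?_
    rw [Algebra.smul_def]
    exact O.mul_mem _ _ (hLO _) (O.toSubring.pow_mem hg i)
  by_contra! hne
  have hlt (P : L[X]) (hP : P ∈ F.contentIdeal) : O.valuation (aeval g P) < 1 := by
    induction hP using Submodule.span_induction with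
    | mem P hP =>
      obtain ⟨i, -, rfl⟩ := mem_coeffs_iff.1 hP
      exact (hmem _).lt_of_ne (hne i)
    | zero => simp
    | add P Q _ _ hP hQ => exact map_add (aeval g) P Q ▸ O.valuation.map_add_lt hP hQ
    | smul Q P _ hP =>
      rw [smul_eq_mul, map_mul, map_mul, mul_comm]
      exact mul_lt_one_of_lt_of_le hP (hmem Q)
  simpa using hlt 1 (hF ▸ Submodule.mem_top)

theorem exists_finset_forall_valuation_aeval_coeff_eq_one {F : L[X][X]}
    (hF : F.contentIdeal = ⊤) (g : K) : ∃ S : Finset K, ↑S ⊆ Set.range (algebraMap L K) ∧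
      ∀ O : ValuationSubring K, (S : Set K) ⊆ O →
        (∀ i j, algebraMap L K ((F.coeff i).coeff j) ∈ O) ∧
          (g ∈ O → ∃ i, O.valuation (aeval g (F.coeff i)) = 1) := by
  have hcoeff : IsOpen
      {O : ValuationSubring K | ∀ i j, algebraMap L K ((F.coeff i).coeff j) ∈ O} :=
    isOpen_setOf_forall_coeff F (P := fun P O ↦ ∀ j, algebraMap L K (P.coeff j) ∈ O)
      (fun O ↦ by simp [O.zero_mem]) isOpen_setOf_forall_algebraMap_coeff_mem
  have hunit : IsOpen {O : ValuationSubring K |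
      g ∈ O → ∃ i, O.valuation (aeval g (F.coeff i)) = 1} := by
    simp_rw [imp_iff_not_or, Set.ofPred_or, Set.ofPred_exists]
    exact (isClopen_setOf_mem g).compl.isOpen.union
      (isOpen_iUnion fun i ↦ (isClopen_setOf_valuation_eq_one _).isOpen)
  exact exists_finset_forall_of_isOpen (hcoeff.inter hunit) fun O hLO ↦
    ⟨fun i j ↦ hLO ⟨_, rfl⟩, exists_valuation_aeval_coeff_eq_one hF (Set.range_subset_iff.1 hLO)⟩

theorem mem_of_isIntegral_residueSubring {O : ValuationSubring K} {z : K}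
    (hz : IsIntegral (residueSubring L O) z) : z ∈ O :=
  mem_of_isIntegral (fun r ↦ residueSubring_le r.2) hz

theorem isIntegral_residueSubring_aeval {O : ValuationSubring K} {g : K}
    (hg : IsIntegral (residueSubring L O) g) {P : L[X]} (hP : ∀ i, algebraMap L K (P.coeff i) ∈ O) :
    IsIntegral (residueSubring L O) (aeval g P) := by
  rw [aeval_eq_sum_range]
  refine IsIntegral.sum _ fun i _ ↦ ?_
  rw [Algebra.smul_def]
  exact .mul (isIntegral_algebraMap
    (x := (⟨_, algebraMap_mem_residueSubring (hP i)⟩ : residueSubring L O))) (hg.pow i)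

theorem valuation_eq_one_of_isIntegral_residueSubring {O W : ValuationSubring K}
    (hWO : W ≤ O) (hLW : residueSubring L O ≤ W.toSubring) {z : K}
    (hz : IsIntegral (residueSubring L O) z) (hz1 : O.valuation z = 1) : W.valuation z = 1 := by
  obtain ⟨P, hP, hPz⟩ := hz
  refine valuation_eq_one_of_eval_eq_zero hWO (G := P.map (algebraMap _ K)) (fun i ↦ ?_)
    ⟨P.natDegree, ?_⟩ hz1 ?_
  · rw [coeff_map]
    exact valuation_lt_one_or_eq_one_of_mem_residueSubring hWO hLW (P.coeff i).2
  · simp [hP.coeff_natDegree]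
  · rwa [Polynomial.eval_map]

theorem exists_finset_forall_not_isIntegral (htr : Algebra.trdeg L K = 1) {g h : K}
    (hh : Transcendental L h) : ∃ S : Finset K, ↑S ⊆ Set.range (algebraMap L K) ∧
      ∀ O : ValuationSubring K, (S : Set K) ⊆ O → IsResiduallyTranscendental L O g →
        ¬ IsIntegral (residueSubring L O) h := by
  obtain ⟨F, hF, hFg⟩ := exists_contentIdeal_eq_top_eval₂_eq_zero htr hh g
  obtain ⟨S, hSL, hS⟩ := exists_finset_forall_valuation_aeval_coeff_eq_one hF h
  refine ⟨S, hSL, fun O hSO hg hint ↦ ?_⟩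
  obtain ⟨hFO, hF1⟩ := hS O hSO
  obtain ⟨i, hi⟩ := hF1 (mem_of_isIntegral_residueSubring hint)
  obtain ⟨W, hWO, hLW, hgW⟩ := exists_le_of_not_isIntegral residueSubring_le
    (fun _ ↦ mem_residueSubring_of_valuation_lt_one) hg.not_isIntegral
  have hcoeff (i : ℕ) : IsIntegral (residueSubring L O) (aeval h (F.coeff i)) :=
    isIntegral_residueSubring_aeval hint (hFO i)
  have hle (i : ℕ) : O.valuation (aeval h (F.coeff i)) ≤ 1 :=
    (O.valuation_le_one_iff _).2 (mem_of_isIntegral_residueSubring (hcoeff i))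
  have hunit {i : ℕ} (hi : O.valuation (aeval h (F.coeff i)) = 1) :
      W.valuation (aeval h (F.coeff i)) = 1 :=
    valuation_eq_one_of_isIntegral_residueSubring hWO hLW (hcoeff i) hi
  refine hgW ((W.valuation_le_one_iff g).1 (valuation_eq_one_of_eval_eq_zero hWO
    (G := F.map (aeval h : L[X] →ₐ[L] K).toRingHom) (fun i ↦ ?_) ⟨i, ?_⟩
    hg.valuation_eq_one (by rwa [Polynomial.eval_map])).le)
  · exact (coeff_map (aeval h : L[X] →ₐ[L] K).toRingHom i) ▸ (hle i).lt_or_eq.imp_right hunit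
  · exact (coeff_map (aeval h : L[X] →ₐ[L] K).toRingHom i) ▸ hunit hi

end NotIntegral

section TwoCenters

theorem exists_valuationSubring_ne_top_of_finset (k : Type*) {L : Type*} [Field k] [Field L]
    [Algebra k L] [Algebra.Transcendental k L] (S : Finset L) :
    ∃ V : ValuationSubring L, V ≠ ⊤ ∧ (∀ c, algebraMap k L c ∈ V) ∧ (S : Set L) ⊆ V := by
  classical
  obtain ⟨t, ht⟩ := Algebra.Transcendental.transcendental (R := k) (A := L)
  let D := Algebra.adjoin k ((insert t S : Finset L) : Set L)
  have hSD {s : L} (hs : s ∈ insert t S) : s ∈ D := Algebra.subset_adjoin hs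
  have : Algebra.FiniteType k D := D.fg_iff_finiteType.1 (Subalgebra.fg_adjoin_finset _)
  obtain ⟨M, hM⟩ := Ideal.exists_maximal D
  have hker : RingHom.ker (algebraMap D L) = ⊥ :=
    (RingHom.injective_iff_ker_eq_bot _).1 (FaithfulSMul.algebraMap_injective D L)
  obtain ⟨V, hV⟩ := exists_isCenteredAt (K := L) M (hker.trans_le bot_le)
  refine ⟨V, hV.ne_top (lt_of_le_not_ge (hker.trans_le bot_le) fun hle ↦ ht ?_),
    fun c ↦ hV.algebraMap_mem (algebraMap k D c),
    fun s hs ↦ hV.algebraMap_mem ⟨s, hSD (Finset.mem_insert_of_mem hs)⟩⟩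
  exact isAlgebraic_algebraMap_of_isMaximal_of_le_ker k hle ⟨t, hSD (Finset.mem_insert_self t S)⟩

theorem transcendental_of_trdeg_lt (k L K : Type*) [Field k] [Field L] [Field K] [Algebra k L]
    [Algebra k K] [Algebra L K] [IsScalarTower k L K]
    (h : Algebra.trdeg L K < Algebra.trdeg k K) : Algebra.Transcendental k L := by
  refine trdeg_ne_zero_iff.1 fun h0 ↦ h.ne ?_
  simpa [h0] using lift_trdeg_add_eq k L K

theorem exists_le_notMem_of_not_isIntegral_residueSubring {L K : Type*} [Field L] [Field K]
    [Algebra L K] {O : ValuationSubring K} {g : K} (hg : ¬ IsIntegral (residueSubring L O) g) :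
    ∃ W ≤ O, (∀ c, algebraMap L K c ∈ O → algebraMap L K c ∈ W) ∧ g ∉ W := by
  obtain ⟨W, hWO, hLW, hgW⟩ := exists_le_of_not_isIntegral residueSubring_le
    (fun _ ↦ mem_residueSubring_of_valuation_lt_one) hg
  exact ⟨W, hWO, fun c hc ↦ hLW (algebraMap_mem_residueSubring hc), hgW⟩

variable {k K : Type*} [Field k] [Field K] [Algebra k K]

theorem exists_valuationSubring_ne_top_of_trdeg_eq_one (L : IntermediateField k K)
    [Algebra.Transcendental k L] (htr : Algebra.trdeg L K = 1) {g h : K}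
    (hg : Transcendental L g) (hh : Transcendental L h) {S : Finset K}
    (hS : ↑S ⊆ Set.range (algebraMap L K)) (R : Finset K) :
    ∃ O : ValuationSubring K, O ≠ ⊤ ∧ (∀ c, algebraMap k K c ∈ O) ∧ ↑S ⊆ (O : Set K) ∧
      ↑R ⊆ (O : Set K) ∧
      (∃ W ≤ O, (∀ c, algebraMap L K c ∈ O → algebraMap L K c ∈ W) ∧ g ∉ W) ∧
      ∃ W ≤ O, (∀ c, algebraMap L K c ∈ O → algebraMap L K c ∈ W) ∧ h ∉ W := by
  classical
  obtain ⟨T, hTL, hT⟩ := exists_finset_forall_not_isIntegral htr (g := g) hh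
  obtain ⟨U, hUL, hU⟩ := exists_finset_forall_mem_of_isResiduallyTranscendental htr g R
  obtain ⟨V, hV, hkV, hFV⟩ := exists_valuationSubring_ne_top_of_finset k
    ((S ∪ T ∪ U).preimage (algebraMap L K) (algebraMap L K).injective.injOn)
  obtain ⟨O, rfl, hgO⟩ := exists_comap_eq_isResiduallyTranscendental V hg
  have hFO {z : K} (hz : z ∈ S ∪ T ∪ U) (hzL : z ∈ Set.range (algebraMap L K)) : z ∈ O := by
    obtain ⟨c, rfl⟩ := hzL
    exact hFV (Finset.mem_preimage.2 hz)
  have hTO : (T : Set K) ⊆ O := fun z hz ↦ hFO (by simp_all) (hTL hz)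
  have hUO : (U : Set K) ⊆ O := fun z hz ↦ hFO (by simp_all) (hUL hz)
  exact ⟨O, fun hO ↦ hV (by rw [hO]; rfl), hkV, fun z hz ↦ hFO (by simp_all) (hS hz), hU O hUO hgO,
    exists_le_notMem_of_not_isIntegral_residueSubring hgO.not_isIntegral,
    exists_le_notMem_of_not_isIntegral_residueSubring (hT O hTO hgO)⟩

variable {A B C : Type*} [CommRing A] [Algebra k A] [Algebra A K] [IsScalarTower k A K]

theorem exists_transcendental_finset_forall_isCenteredAt [Algebra.FiniteType k A]
    {L : IntermediateField k K}
    (hKA : ∀ z : K, ∃ a b : A, z = algebraMap A K a / algebraMap A K b)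
    (htr : Algebra.trdeg L K = 1) {p : Ideal A} [p.IsMaximal] {V : ValuationSubring K}
    (hV : IsCenteredAt V p) (hLV : ∀ c, algebraMap L K c ∈ V) :
    ∃ (g : K) (S : Finset K), Transcendental L g ∧ ↑S ⊆ Set.range (algebraMap L K) ∧
      ∀ O : ValuationSubring K, (∀ c, algebraMap k K c ∈ O) → (S : Set K) ⊆ O → g ∉ O →
        IsCenteredAt O p := by
  obtain ⟨g, hg, hgp⟩ := exists_transcendental_forall_isCenteredAt (k := k) hKA htr hV hLV
  obtain ⟨S, hSL, hS⟩ := exists_finset_forall_isCenteredAt (k := k) (p := p)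
    (S := Set.range (algebraMap L K)) (g := g) fun O hO ↦ hgp O fun c ↦ hO ⟨c, rfl⟩
  exact ⟨g, S, hg, hSL, hS⟩

variable [CommRing B] [Algebra k B] [Algebra B K] [IsScalarTower k B K]
  [CommRing C] [Algebra k C] [Algebra C K] [IsScalarTower k C K]

theorem exists_valuationSubring_ne_top_of_two_le_trdeg [Algebra.FiniteType k A]
    [Algebra.FiniteType k B] [Algebra.FiniteType k C] (htr : 2 ≤ Algebra.trdeg k K)
    (hKA : ∀ z : K, ∃ a b : A, z = algebraMap A K a / algebraMap A K b)
    (hKB : ∀ z : K, ∃ a b : B, z = algebraMap B K a / algebraMap B K b)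
    {p : Ideal A} [p.IsMaximal] (hp : RingHom.ker (algebraMap A K) ≤ p)
    {q : Ideal B} [q.IsMaximal] (hq : RingHom.ker (algebraMap B K) ≤ q) :
    ∃ O : ValuationSubring K, O ≠ ⊤ ∧ (∀ c, algebraMap C K c ∈ O) ∧
      (∀ a, O.valuation (algebraMap A K a) < 1 → a ∈ p) ∧
      ∀ b, O.valuation (algebraMap B K b) < 1 → b ∈ q := by
  classical
  have : Algebra.Transcendental k K := trdeg_ne_zero_iff.1 (two_pos.trans_le htr).ne'
  obtain ⟨L, hL, ⟨V, hVp, hLV⟩, V', hVq, hLV'⟩ :=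
    exists_intermediateField_trdeg_eq_one (k := k) hKA hKB hp hq
  have : Algebra.Transcendental k L :=
    transcendental_of_trdeg_lt k L K (hL.trans_lt (Cardinal.one_lt_two.trans_le htr))
  obtain ⟨g, S, hg, hSL, hS⟩ := exists_transcendental_finset_forall_isCenteredAt hKA hL hVp hLV
  obtain ⟨h, T, hh, hTL, hT⟩ := exists_transcendental_finset_forall_isCenteredAt hKB hL hVq hLV'
  obtain ⟨G, hG⟩ := ‹Algebra.FiniteType k C›.out
  obtain ⟨O, hO, hkO, hSTO, hGO, ⟨W, hWO, hLW, hgW⟩, W', hWO', hLW', hhW'⟩ :=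
    exists_valuationSubring_ne_top_of_trdeg_eq_one L hL hg hh (S := S ∪ T)
      (by simpa using ⟨hSL, hTL⟩) (G.image (algebraMap C K))
  rw [Finset.coe_union, Set.union_subset_iff] at hSTO
  have hWp : IsCenteredAt W p := hS W (fun c ↦ hLW (algebraMap k L c) (hkO c))
    (fun z hz ↦ by obtain ⟨c, rfl⟩ := hSL hz; exact hLW c (hSTO.1 hz)) hgW
  have hWq : IsCenteredAt W' q := hT W' (fun c ↦ hLW' (algebraMap k L c) (hkO c))
    (fun z hz ↦ by obtain ⟨c, rfl⟩ := hTL hz; exact hLW' c (hSTO.2 hz)) hhW'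
  exact ⟨O, hO,
    algebraMap_mem_of_adjoin_eq_top hkO hG fun c hc ↦ hGO (by simpa using ⟨c, hc, rfl⟩),
    fun a ha ↦ (hWp.valuation_lt_one_iff a).1 (valuation_lt_one_of_le hWO ha),
    fun b hb ↦ (hWq.valuation_lt_one_iff b).1 (valuation_lt_one_of_le hWO' hb)⟩

end TwoCenters

section Topology

variable {X : Type*} [TopologicalSpace X]

theorem topologicalKrullDim_closure_singleton_le_one [QuasiSober X] {z : X}
    (hz : ∀ a b, z ⤳ a → a ⤳ b → a ⤳ z ∨ b ⤳ a) :
    topologicalKrullDim (closure {z} : Set X) ≤ 1 := by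
  have : QuasiSober (closure {z} : Set X) :=
    isClosed_closure.isClosedEmbedding_subtypeVal.quasiSober
  refine Order.krullDim_le_one_iff.2 fun S ↦ ?_
  obtain ⟨a, ha⟩ := QuasiSober.sober S.isIrreducible S.isClosed
  have hS {b : (closure {z} : Set X)} : b ∈ S ↔ (a : X) ⤳ b :=
    ha.specializes_iff_mem.symm.trans Topology.IsInducing.subtypeVal.specializes_iff.symm
  by_cases haz : (a : X) ⤳ z
  · exact .inr fun T _ b _ ↦ hS.2 (haz.trans (specializes_iff_mem_closure.2 b.2))
  · refine .inl fun T hTS b hb ↦ ?_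
    obtain ⟨c, hc⟩ := T.isIrreducible.nonempty
    have hca : (c : X) ⤳ a :=
      (hz a c (specializes_iff_mem_closure.2 a.2) (hS.1 (hTS hc))).resolve_left haz
    exact (Topology.IsInducing.subtypeVal.specializes_iff.1 (hca.trans (hS.1 hb))).mem_closed
      T.isClosed hc

theorem one_le_topologicalKrullDim_closure_singleton {z x : X} (hzx : z ⤳ x) (hxz : ¬ x ⤳ z) :
    1 ≤ topologicalKrullDim (closure {z} : Set X) := by
  have : IrreducibleSpace (closure {z} : Set X) :=
    Subtype.irreducibleSpace isIrreducible_singleton.closure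
  let x' : (closure {z} : Set X) := ⟨x, hzx.mem_closure⟩
  let z' : (closure {z} : Set X) := ⟨z, subset_closure rfl⟩
  refine Order.one_le_krullDim_iff.2 ⟨⟨closure {x'}, isIrreducible_singleton.closure,
    isClosed_closure⟩, ⟨Set.univ, IrreducibleSpace.isIrreducible_univ _, isClosed_univ⟩,
    lt_of_le_not_ge (fun _ _ ↦ Set.mem_univ _) fun hle ↦ hxz ?_⟩
  have hx'z' : x' ⤳ z' := specializes_iff_mem_closure.2 (hle (Set.mem_univ z'))
  exact Topology.IsInducing.subtypeVal.specializes_iff.2 hx'z'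

theorem exists_isClosed_singleton_ne [JacobsonSpace X] (hX : 1 ≤ topologicalKrullDim X) (x : X) :
    ∃ y : X, IsClosed {y} ∧ x ≠ y := by
  by_contra! h
  have : DiscreteTopology X :=
    JacobsonSpace.discreteTopology ((Set.finite_singleton x).subset fun y hy ↦ (h y hy).symm)
  exact absurd (hX.trans (topologicalKrullDim_zero_of_discreteTopology X)) (by simp)

end Topology

section Chain

variable {k K A : Type*} [Field k] [Field K] [Algebra k K] [CommRing A] [Algebra k A]
  [Algebra.FiniteType k A] [Algebra A K] [IsScalarTower k A K]

theorem two_le_trdeg_of_ker_le_of_lt_of_lt {p₀ p₁ p₂ : PrimeSpectrum A}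
    (h₀ : RingHom.ker (algebraMap A K) ≤ p₀.asIdeal) (h₁ : p₀ < p₁) (h₂ : p₁ < p₂) :
    2 ≤ Algebra.trdeg k K := by
  let f := IsScalarTower.toAlgHom k A K
  have : (RingHom.ker f).IsPrime := RingHom.ker_isPrime f
  have hdim : ¬ ringKrullDim (A ⧸ RingHom.ker f) ≤ 1 := by
    rw [ringKrullDim_quotient, Order.krullDim_le_one_iff]
    intro h
    rcases h ⟨p₁, h₀.trans h₁.le⟩ with hmin | hmax
    · exact h₁.not_ge (hmin (b := ⟨p₀, h₀⟩) h₁.le)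
    · exact h₂.not_ge (hmax (b := ⟨p₂, h₀.trans (h₁.trans h₂).le⟩) h₂.le)
  have htr : 1 < Algebra.trdeg k (A ⧸ RingHom.ker f) := by
    refine not_le.1 fun h ↦ hdim ((ringKrullDim_le_trdeg k _).trans ?_)
    simpa using Cardinal.toENat.monotone' h
  rw [Cardinal.two_le_iff_one_lt, ← Cardinal.one_lt_lift_iff]
  exact (Cardinal.one_lt_lift_iff.2 htr).trans_le
    (lift_trdeg_le_of_injective (Ideal.kerLiftAlg f) (Ideal.kerLiftAlg_injective f))

end Chain

section AffineOpen

variable {X : Scheme.{u}} {U V : X.Opens}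

theorem primeIdealOf_le_primeIdealOf_iff (hU : IsAffineOpen U) {x y : U} :
    hU.primeIdealOf x ≤ hU.primeIdealOf y ↔ (x : X) ⤳ y := by
  have hU' : Topology.IsInducing hU.primeIdealOf := hU.isoSpec.hom.homeomorph.isInducing
  exact (PrimeSpectrum.le_iff_specializes _ _).trans
    (hU'.specializes_iff.trans Topology.IsInducing.subtypeVal.specializes_iff.symm)

theorem surjective_primeIdealOf (hU : IsAffineOpen U) : Function.Surjective hU.primeIdealOf :=
  hU.isoSpec.hom.homeomorph.surjective

theorem comap_primeIdealOf_map (hU : IsAffineOpen U) (hV : IsAffineOpen V) (i : U ⟶ V) (x : U) :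
    (hU.primeIdealOf x).comap (X.presheaf.map i.op).hom = hV.primeIdealOf ⟨x, i.le x.2⟩ := by
  have h := IsAffineOpen.comap_primeIdealOf_appLE (f := 𝟙 X) V hV U hU i.le x.2
  have hi : (𝟙 X : X ⟶ X).appLE V U i.le = X.presheaf.map i.op := Category.id_comp _
  rwa [hi] at h

theorem ker_evaluation (hU : IsAffineOpen U) (z : U) :
    RingHom.ker (X.evaluation U z z.2).hom = (hU.primeIdealOf z).asIdeal := by
  ext f
  rw [RingHom.mem_ker, hU.primeIdealOf_eq_map_closedPoint]
  exact IsLocalRing.residue_eq_zero_iff _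

theorem exists_eq_evaluation_div_evaluation (hU : IsAffineOpen U) (z : U) (t : X.residueField z) :
    ∃ a b : Γ(X, U), t = X.evaluation U z z.2 a / X.evaluation U z z.2 b := by
  obtain ⟨s, rfl⟩ := X.residue_surjective z t
  have := hU.isLocalization_stalk z
  obtain ⟨⟨a, b⟩, hab⟩ := IsLocalization.surj (hU.primeIdealOf z).asIdeal.primeCompl s
  have hb : X.evaluation U z z.2 b ≠ 0 := fun h ↦ b.2 ((ker_evaluation hU z).le h)
  refine ⟨a, b, (eq_div_iff hb).2 ?_⟩
  exact (map_mul (X.residue z).hom _ _).symm.trans (congrArg (X.residue z).hom hab)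

theorem exists_minimal_specializes [IsLocallyNoetherian X] {x : X} {s : Set X}
    (hs : ∃ z ∈ s, z ⤳ x) : ∃ z ∈ s, z ⤳ x ∧ ∀ w ∈ s, z ⤳ w → w ⤳ x → w ⤳ z := by
  obtain ⟨U, hU, hxU, -⟩ := exists_isAffineOpen_mem_and_subset (X := X) (x := x) (U := ⊤) trivial
  have := IsLocallyNoetherian.component_noetherian ⟨U, hU⟩
  have hgt := InvImage.wf (fun z : U ↦ (hU.primeIdealOf z).asIdeal) wellFounded_gt
  obtain ⟨z₀, hz₀s, hz₀x⟩ := hs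
  obtain ⟨z, ⟨hzs, hzx⟩, hmax⟩ := hgt.has_min {z : U | (z : X) ∈ s ∧ (z : X) ⤳ x}
    ⟨⟨z₀, hz₀x.mem_open U.2 hxU⟩, hz₀s, hz₀x⟩
  refine ⟨z, hzs, hzx, fun w hws hzw hwx ↦ by_contra fun hwz ↦ ?_⟩
  refine hmax ⟨w, hwx.mem_open U.2 hxU⟩ ⟨hws, hwx⟩ (lt_of_le_not_ge ?_ ?_)
  · exact (primeIdealOf_le_primeIdealOf_iff hU).2 hzw
  · exact fun hle ↦ hwz ((primeIdealOf_le_primeIdealOf_iff hU).1 hle)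

end AffineOpen

noncomputable section ResidueFieldAlgebra

variable {R : Type u} [CommRing R] {X : Scheme.{u}} [X.Over (Spec (.of R))] (U : X.Opens) (z : X)

/-- Sections as an algebra over `R`, through the structure morphism to `Spec R`. -/
local instance sectionsAlgebra : Algebra R Γ(X, U) :=
  (((X ↘ Spec (.of R)).appLE ⊤ U le_top).hom.comp (Scheme.ΓSpecIso (.of R)).inv.hom).toAlgebra

/-- Evaluation at `z`; membership in `U` is a `Fact` so that this can be an instance. -/
local instance residueFieldAlgebraSections [hz : Fact (z ∈ U)] :
    Algebra Γ(X, U) (X.residueField z) :=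
  (X.evaluation U z hz.out).hom.toAlgebra

/-- The residue field as an algebra over `R`, by evaluating global constants at `z`. -/
local instance residueFieldAlgebra : Algebra R (X.residueField z) :=
  ((X.evaluation ⊤ z trivial).hom.comp (algebraMap R Γ(X, ⊤))).toAlgebra

theorem map_evaluation {U V : X.Opens} (i : U ⟶ V) (hz : z ∈ U) :
    X.presheaf.map i.op ≫ X.evaluation U z hz = X.evaluation V z (i.le hz) := by
  simp [Scheme.evaluation]

theorem map_algebraMap {U V : X.Opens} (i : U ⟶ V) (r : R) :
    X.presheaf.map i.op (algebraMap R Γ(X, V) r) = algebraMap R Γ(X, U) r :=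
  ConcreteCategory.congr_hom ((X ↘ Spec (.of R)).appLE_map (U := ⊤) (V := V) le_top i.op)
    ((Scheme.ΓSpecIso (.of R)).inv r)

local instance isScalarTower_residueField [hz : Fact (z ∈ U)] :
    IsScalarTower R Γ(X, U) (X.residueField z) :=
  .of_algebraMap_eq fun r ↦ by
    change X.evaluation ⊤ z trivial _ = X.evaluation U z hz.out _
    rw [← map_evaluation z (homOfLE le_top) hz.out, ← map_algebraMap (homOfLE (le_top : U ≤ ⊤)) r]
    rfl

theorem finiteType_sections {U : X.Opens} (hU : IsAffineOpen U)
    [LocallyOfFiniteType (X ↘ Spec (.of R))] : Algebra.FiniteType R Γ(X, U) :=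
  ((X ↘ Spec (.of R)).finiteType_appLE (isAffineOpen_top _) hU le_top).comp
    (.of_surjective _ (ConcreteCategory.bijective_of_isIso (Scheme.ΓSpecIso (.of R)).inv).2)

variable {z}

theorem IsCenteredAt.specializes {U W : X.Opens} [Fact (z ∈ U)] [Fact (z ∈ W)] (hU : IsAffineOpen U)
    (hW : IsAffineOpen W) (hWU : W ≤ U) {O : ValuationSubring (X.residueField z)} {w : W}
    (hO : IsCenteredAt O (hW.primeIdealOf w).asIdeal) {x : U}
    (hx : ∀ a : Γ(X, U), O.valuation (algebraMap _ _ a) < 1 → a ∈ (hU.primeIdealOf x).asIdeal) :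
    (w : X) ⤳ x := by
  rw [← primeIdealOf_le_primeIdealOf_iff hU (x := ⟨w, hWU w.2⟩),
    ← comap_primeIdealOf_map hW hU (homOfLE hWU) w]
  refine fun a ha ↦ hx a ?_
  have hlt := (hO.valuation_lt_one_iff _).2 ha
  rwa [show algebraMap Γ(X, U) (X.residueField z) a = _ from
    (ConcreteCategory.congr_hom (map_evaluation z (homOfLE hWU) Fact.out) a).symm]

variable {k : Type u} [Field k] {X : Scheme.{u}} [X.Over (Spec (.of k))]
    [LocallyOfFiniteType (X ↘ Spec (.of k))]

theorem exists_specializes_not_specializes {x y z : X} (hzx : z ⤳ x) (hzy : z ⤳ y)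
    (hx : IsClosed ({x} : Set X)) (hy : IsClosed ({y} : Set X))
    (htr : 2 ≤ Algebra.trdeg k (X.residueField z)) :
    ∃ w, z ⤳ w ∧ ¬ w ⤳ z ∧ w ⤳ x ∧ w ⤳ y := by
  obtain ⟨U, hU, hxU, -⟩ := exists_isAffineOpen_mem_and_subset (X := X) (x := x) (U := ⊤) trivial
  obtain ⟨V, hV, hyV, -⟩ := exists_isAffineOpen_mem_and_subset (X := X) (x := y) (U := ⊤) trivial
  have hzU : Fact (z ∈ U) := ⟨hzx.mem_open U.2 hxU⟩
  have hzV : Fact (z ∈ V) := ⟨hzy.mem_open V.2 hyV⟩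
  obtain ⟨W, hW, hzW, hWUV⟩ :=
    exists_isAffineOpen_mem_and_subset (x := z) (U := U ⊓ V) ⟨hzU.out, hzV.out⟩
  have : Fact (z ∈ W) := ⟨hzW⟩
  have := finiteType_sections (R := k) hU
  have := finiteType_sections (R := k) hV
  have := finiteType_sections (R := k) hW
  have := hU.primeIdealOf_isMaximal_of_isClosed ⟨x, hxU⟩ hx
  have := hV.primeIdealOf_isMaximal_of_isClosed ⟨y, hyV⟩ hy
  obtain ⟨O, hO, hWO, hUO, hVO⟩ := exists_valuationSubring_ne_top_of_two_le_trdeg (C := Γ(X, W)) htr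
    (exists_eq_evaluation_div_evaluation hU ⟨z, hzU.out⟩)
    (exists_eq_evaluation_div_evaluation hV ⟨z, hzV.out⟩)
    (p := (hU.primeIdealOf ⟨x, hxU⟩).asIdeal)
    ((ker_evaluation hU ⟨z, hzU.out⟩).le.trans ((primeIdealOf_le_primeIdealOf_iff hU).2 hzx))
    (q := (hV.primeIdealOf ⟨y, hyV⟩).asIdeal)
    ((ker_evaluation hV ⟨z, hzV.out⟩).le.trans ((primeIdealOf_le_primeIdealOf_iff hV).2 hzy))
  obtain ⟨r, hr⟩ := exists_isCenteredAt_of_forall_mem hWO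
  obtain ⟨w, hw⟩ := surjective_primeIdealOf hW ⟨r, hr.isPrime⟩
  obtain rfl : (hW.primeIdealOf w).asIdeal = r := congrArg PrimeSpectrum.asIdeal hw
  have hker := ker_evaluation hW ⟨z, hzW⟩
  refine ⟨w, ?_, fun hwz ↦ hO ?_, hr.specializes hU hW (hWUV.trans inf_le_left) hUO,
    hr.specializes hV hW (hWUV.trans inf_le_right) hVO⟩
  · exact (primeIdealOf_le_primeIdealOf_iff hW (x := ⟨z, hzW⟩)).1 (hker.ge.trans hr.ker_le)
  · refine hr.eq_top_of_le_ker (exists_eq_evaluation_div_evaluation hW ⟨z, hzW⟩) ?_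
    exact hker.ge.trans' ((primeIdealOf_le_primeIdealOf_iff hW (y := ⟨z, hzW⟩)).2 hwz)

theorem two_le_trdeg_residueField {z a b : X} (hza : z ⤳ a) (haz : ¬ a ⤳ z) (hab : a ⤳ b)
    (hba : ¬ b ⤳ a) : 2 ≤ Algebra.trdeg k (X.residueField z) := by
  obtain ⟨U, hU, hbU, -⟩ := exists_isAffineOpen_mem_and_subset (X := X) (x := b) (U := ⊤) trivial
  have haU := hab.mem_open U.2 hbU
  have hzU : Fact (z ∈ U) := ⟨hza.mem_open U.2 haU⟩
  have := finiteType_sections (R := k) hU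
  have hlt {x y : U} (hxy : (x : X) ⤳ y) (hyx : ¬ (y : X) ⤳ x) :
      hU.primeIdealOf x < hU.primeIdealOf y := by
    simp only [lt_iff_le_not_ge, primeIdealOf_le_primeIdealOf_iff hU]
    exact ⟨hxy, hyx⟩
  exact two_le_trdeg_of_ker_le_of_lt_of_lt (ker_evaluation hU ⟨z, hzU.out⟩).le
    (hlt (y := ⟨a, haU⟩) hza haz) (hlt (y := ⟨b, hbU⟩) hab hba)

end ResidueFieldAlgebra

theorem exists_topologicalKrullDim_closure_singleton_eq_one {k : Type u} [Field k] {X : Scheme.{u}}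
    (sX : X ⟶ Spec (.of k)) [LocallyOfFiniteType sX] {x y z : X} (hzx : z ⤳ x) (hzy : z ⤳ y)
    (hx : IsClosed ({x} : Set X)) (hy : IsClosed ({y} : Set X)) (hxy : x ≠ y) :
    ∃ w, w ⤳ x ∧ w ⤳ y ∧ topologicalKrullDim (closure {w} : Set X) = 1 := by
  let : X.Over (Spec (.of k)) := ⟨sX⟩
  have : LocallyOfFiniteType (X ↘ Spec (.of k)) := ‹_›
  have := LocallyOfFiniteType.isLocallyNoetherian sX
  obtain ⟨w, hwy, hwx, hmin⟩ := exists_minimal_specializes (s := {w | w ⤳ y}) ⟨z, hzy, hzx⟩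
  refine ⟨w, hwx, hwy, le_antisymm (topologicalKrullDim_closure_singleton_le_one ?_)
    (one_le_topologicalKrullDim_closure_singleton hwx fun hxw ↦ ?_)⟩
  · by_contra! ⟨a, b, hwa, hab, haw, hba⟩
    obtain ⟨v, hwv, hvw, hvx, hvy⟩ := exists_specializes_not_specializes hwx hwy hx hy
      (two_le_trdeg_residueField (k := k) hwa haw hab hba)
    exact hvw (hmin v hvy hwv hvx)
  · exact hxy ((hxw.trans hwy).mem_closed hx rfl).symm

theorem exists_irreducible_curve_through_two_closed_points_general {k : Type u} [Field k]
    {X : Scheme.{u}} [IrreducibleSpace X] (sX : X ⟶ Spec (.of k)) [LocallyOfFiniteType sX]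
    (hdim : 1 ≤ topologicalKrullDim X) {x y : X} (hx : IsClosed ({x} : Set X))
    (hy : IsClosed ({y} : Set X)) :
    ∃ Z : Set X, IsClosed Z ∧ IsIrreducible Z ∧ topologicalKrullDim Z = 1 ∧ x ∈ Z ∧ y ∈ Z := by
  wlog hxy : x ≠ y generalizing y
  · obtain rfl := not_not.1 hxy
    have hX := LocallyOfFiniteType.jacobsonSpace sX
    obtain ⟨y, hy, hxy⟩ := exists_isClosed_singleton_ne hdim x
    obtain ⟨Z, hZ, hZirr, hZdim, hxZ, -⟩ := this hy hxy
    exact ⟨Z, hZ, hZirr, hZdim, hxZ, hxZ⟩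
  obtain ⟨w, hwx, hwy, hdim⟩ := exists_topologicalKrullDim_closure_singleton_eq_one sX
    (genericPoint_specializes x) (genericPoint_specializes y) hx hy hxy
  exact ⟨closure {w}, isClosed_closure, isIrreducible_singleton.closure, hdim, hwx.mem_closure,
    hwy.mem_closure⟩

/-- Let `X` be an irreducible scheme of finite type over a field `k` whose
underlying topological space has Krull dimension at least `1`. Then any two closed points of
`X` lie on a closed irreducible subset of topological Krull dimension `1` (an irreducible
curve on `X`). -/
theorem exists_irreducible_curve_through_two_closed_points
    (k : Type) [Field k]
    (X : Scheme) [IrreducibleSpace X]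
    (sX : X ⟶ Spec (CommRingCat.of k)) [LocallyOfFiniteType sX] [QuasiCompact sX]
    (hdim : 1 ≤ topologicalKrullDim X)
    (x y : X) (hx : IsClosed ({x} : Set X)) (hy : IsClosed ({y} : Set X)) :
    ∃ Z : Set X, IsClosed Z ∧ IsIrreducible Z ∧ topologicalKrullDim Z = 1 ∧
      x ∈ Z ∧ y ∈ Z :=
  exists_irreducible_curve_through_two_closed_points_general sX hdim hx hy
end
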